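/- There exists a universal constant c₁ > 0 such that the following holds. Let n ∈ ℕ, let 0 < p ≤ 1/2 with pn ∈ ℤ, let k ∈ ℕ, and let h : S(n,p) → ℤ satisfy ‖h^{>k}‖₂² ≤ ε ≤ p^{c₁ k}. Suppose there is some l ≤ k such that ‖D_Q h‖₂² ≤ 2ε for every (l+1)-tuple Q. Then there exists a function g : S(n,p) → ℤ of degree ≤ l such that ‖D_P(h − g)‖₂² ≤ 2ε for every l-tuple P. -/

import Mathlib

open Finset
open scoped Classical

/-- A point of the slice `S(n,p)`: a Boolean vector whose number of ones equals `p * n`. -/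
abbrev SlicePoint (n : ℕ) (p : ℝ) : Type :=
  {x : Fin n → Bool // ((Finset.univ.filter (fun i => x i = true)).card : ℝ) = p * n}

variable {n : ℕ} {p : ℝ}

/-- Expectation with respect to the uniform measure on the slice. -/
noncomputable def sExp (f : SlicePoint n p → ℝ) : ℝ :=
  (∑ x : SlicePoint n p, f x) / (Fintype.card (SlicePoint n p) : ℝ)

/-- The inner product `⟨f,g⟩ = E_x [f x * g x]` on functions on the slice. -/
noncomputable def sInner (f g : SlicePoint n p → ℝ) : ℝ :=
  sExp (fun x => f x * g x)

/-- `‖f‖₂² = E_x [f x ^ 2]`. -/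
noncomputable def sNormSq (f : SlicePoint n p → ℝ) : ℝ := sInner f f

/-- `‖f‖₂`. -/
noncomputable def sNorm (f : SlicePoint n p → ℝ) : ℝ := Real.sqrt (sNormSq f)

/-- The `i`-th coordinate of a slice point, viewed as a real number in `{0,1}`. -/
def coordR (x : SlicePoint n p) (i : Fin n) : ℝ := if x.1 i then 1 else 0

/-- `AND_T (x) = ∏_{i ∈ T} x_i`. -/
def andT (T : Finset (Fin n)) : SlicePoint n p → ℝ := fun x => ∏ i ∈ T, coordR x i

/-- The space `L_k` of functions of degree at most `k` on the slice. -/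
def degLE (n : ℕ) (p : ℝ) (k : ℕ) : Submodule ℝ (SlicePoint n p → ℝ) :=
  Submodule.span ℝ {g | ∃ T : Finset (Fin n), T.card ≤ k ∧ g = andT T}

/-- The space `L_{k-1}` (i.e. spanned by `AND_T` with `|T| < k`). -/
def degLT (n : ℕ) (p : ℝ) (k : ℕ) : Submodule ℝ (SlicePoint n p → ℝ) :=
  Submodule.span ℝ {g | ∃ T : Finset (Fin n), T.card < k ∧ g = andT T}

/-- `fk` is the orthogonal projection `f^{≤ k}` of `f` onto `L_k`. -/
def IsLowProj (n : ℕ) (p : ℝ) (k : ℕ) (f fk : SlicePoint n p → ℝ) : Prop :=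
  fk ∈ degLE n p k ∧ ∀ g ∈ degLE n p k, sInner (f - fk) g = 0

/-- `fk` is the orthogonal projection of `f` onto the span of `AND_T`, `|T| < k`. -/
def IsLowProjLT (n : ℕ) (p : ℝ) (k : ℕ) (f fk : SlicePoint n p → ℝ) : Prop :=
  fk ∈ degLT n p k ∧ ∀ g ∈ degLT n p k, sInner (f - fk) g = 0

/-- `Pr_x [f x ≠ g x]` under the uniform measure on the slice. -/
noncomputable def probNe (f g : SlicePoint n p → ℝ) : ℝ :=
  sExp (fun x => if f x = g x then 0 else 1)

/-- The action of a permutation on a slice point: `(x^π)_{π i} = x_i`. -/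
def permPt (π : Equiv.Perm (Fin n)) (x : SlicePoint n p) : SlicePoint n p :=
  ⟨fun i => x.1 (π.symm i), by
    have h : (Finset.univ.filter (fun i => x.1 (π.symm i) = true)) =
        (Finset.univ.filter (fun i => x.1 i = true)).map π.toEmbedding := by
      ext i
      simp [Finset.mem_map_equiv]
    rw [h, Finset.card_map]
    exact x.2⟩

/-- The derivative operator `D_{ij} f = (f - f^{(ij)})/2`. -/
noncomputable def Dij (i j : Fin n) (f : SlicePoint n p → ℝ) : SlicePoint n p → ℝ :=
  fun x => (f x - f (permPt (Equiv.swap i j) x)) / 2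

/-- The derivative operator `D_P` associated with a set `P` of pairs,
obtained by composing the `D_{ab}` for `(a,b) ∈ P` (these commute for tuples). -/
noncomputable def DP (P : Finset (Fin n × Fin n)) (f : SlicePoint n p → ℝ) :
    SlicePoint n p → ℝ :=
  P.toList.foldr (fun q g => Dij q.1 q.2 g) f

/-- `P` is a `k`-tuple: `k` pairs `(a,b)` with `a < b`, all `2k` entries distinct. -/
def IsTuple {n : ℕ} (k : ℕ) (P : Finset (Fin n × Fin n)) : Prop :=
  P.card = k ∧ (∀ q ∈ P, q.1 < q.2) ∧
    ∀ q ∈ P, ∀ r ∈ P, q ≠ r →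
      q.1 ≠ r.1 ∧ q.1 ≠ r.2 ∧ q.2 ≠ r.1 ∧ q.2 ≠ r.2

/-- `P` is shifted: for every pair `(a,b) ∈ P`, every `a' ≤ a` occurs as an entry of `P`. -/
def IsShifted {n : ℕ} (P : Finset (Fin n × Fin n)) : Prop :=
  ∀ q ∈ P, ∀ a : Fin n, a ≤ q.1 → ∃ r ∈ P, r.1 = a ∨ r.2 = a

/-- `P` is sorted: `a_i < a_j ↔ b_i < b_j`. -/
def IsSorted {n : ℕ} (P : Finset (Fin n × Fin n)) : Prop :=
  ∀ q ∈ P, ∀ r ∈ P, (q.1 < r.1 ↔ q.2 < r.2)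

/-- `Ψ_P (x) = ∏_{(a,b) ∈ P} (x_b - x_a)`. -/
def PsiP (P : Finset (Fin n × Fin n)) : SlicePoint n p → ℝ :=
  fun x => ∏ q ∈ P, (coordR x q.2 - coordR x q.1)

/-- The slice Laplacian `L f = f - (1 / C(n,2)) ∑_{i<j} f^{(ij)}`. -/
noncomputable def sliceLap (f : SlicePoint n p → ℝ) : SlicePoint n p → ℝ :=
  fun x => f x -
    (∑ q ∈ Finset.univ.filter (fun q : Fin n × Fin n => q.1 < q.2),
      f (permPt (Equiv.swap q.1 q.2) x)) / (n.choose 2 : ℝ)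

/-- The noise operator `H_t = exp (-t L) = ∑_l (-t)^l L^l / l!`. -/
noncomputable def Ht (t : ℝ) (f : SlicePoint n p → ℝ) : SlicePoint n p → ℝ :=
  fun x => ∑' l : ℕ, ((-t) ^ l / (l.factorial : ℝ)) * (sliceLap^[l] f) x

/-- The averaging operator `E_I f (x) = E_{Q ∼ S_I} [f (x^Q)]`, averaging over a uniformly
random permutation of the coordinates in `I` (fixing the coordinates outside `I`). -/
noncomputable def avgI (I : Finset (Fin n)) (f : SlicePoint n p → ℝ) : SlicePoint n p → ℝ :=
  fun x => (∑ σ : {σ : Equiv.Perm (Fin n) // ∀ i ∉ I, σ i = i}, f (permPt σ.1 x)) /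
    (Fintype.card {σ : Equiv.Perm (Fin n) // ∀ i ∉ I, σ i = i} : ℝ)

/-- The conditional variance `V_I (f) = ‖f - E_I f‖₂²`. -/
noncomputable def condVar (I : Finset (Fin n)) (f : SlicePoint n p → ℝ) : ℝ :=
  sNormSq (f - avgI I f)

/-- Expectation with respect to the uniform measure on the discrete cube. -/
noncomputable def cExp {n : ℕ} (f : (Fin n → Bool) → ℝ) : ℝ :=
  (∑ x : Fin n → Bool, f x) / (2 ^ n : ℝ)

/-- The Fourier–Walsh coefficient `f̂ (S) = E_x [f x * χ_S x]`. -/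
noncomputable def walshCoeff {n : ℕ} (f : (Fin n → Bool) → ℝ) (S : Finset (Fin n)) : ℝ :=
  cExp (fun x => f x * ∏ i ∈ S, (if x i then (-1 : ℝ) else 1))

/-- The Fourier weight of `f` beyond degree `k`: `W^{>k} (f) = ∑_{|S| > k} f̂(S)²`. -/
noncomputable def WAbove {n : ℕ} (k : ℕ) (f : (Fin n → Bool) → ℝ) : ℝ :=
  ∑ S ∈ Finset.univ.filter (fun S : Finset (Fin n) => k < S.card), walshCoeff f S ^ 2

/-- `Pr_x [f x ≠ g x]` under the uniform measure on the cube. -/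
noncomputable def cProbNe {n : ℕ} (f g : (Fin n → Bool) → ℝ) : ℝ :=
  cExp (fun x => if f x = g x then 0 else 1)

/-- The action of a permutation on a point of the cube: `(x^π)_{π i} = x_i`. -/
def cPerm {n : ℕ} (π : Equiv.Perm (Fin n)) (x : Fin n → Bool) : Fin n → Bool :=
  fun i => x (π.symm i)

/-- The derivative operator on the cube. -/
noncomputable def cDij {n : ℕ} (i j : Fin n) (f : (Fin n → Bool) → ℝ) :
    (Fin n → Bool) → ℝ :=
  fun x => (f x - f (cPerm (Equiv.swap i j) x)) / 2

section Comb
variable {ι : Type*}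

/-- The entries of a list of pairs. -/
def ent (L : List (ι × ι)) : List ι := L.flatMap fun q => [q.1, q.2]

@[simp] lemma ent_nil : ent ([] : List (ι × ι)) = [] := rfl
@[simp] lemma ent_cons (q : ι × ι) (L : List (ι × ι)) : ent (q :: L) = q.1 :: q.2 :: ent L := by
  simp [ent]

lemma ent_perm {L L' : List (ι × ι)} (h : L.Perm L') : (ent L).Perm (ent L') :=
  List.Perm.flatMap_right _ h

lemma length_ent (L : List (ι × ι)) : (ent L).length = 2 * L.length := by
  induction L with
  | nil => rfl
  | cons q L ih => simp [ih]; ring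

/-- Iterated signed shift of a function on sets. -/
noncomputable def sh (u : Finset ι → ℤ) : List (ι × ι) → Finset ι → ℤ
  | [] => u
  | q :: L => fun T => sh u L (insert q.1 T) - sh u L (insert q.2 T)

lemma sh_perm (u : Finset ι → ℤ) {L L' : List (ι × ι)} (h : L.Perm L') : sh u L = sh u L' := by
  induction h with
  | nil => rfl
  | cons q _ ih => simp [sh, ih]
  | swap q r L =>
    funext T
    simp only [sh]
    rw [Finset.insert_comm r.1 q.1, Finset.insert_comm r.2 q.1, Finset.insert_comm r.1 q.2,
      Finset.insert_comm r.2 q.2]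
    ring
  | trans _ _ ih1 ih2 => rw [ih1, ih2]

lemma sh_add (u v : Finset ι → ℤ) (L : List (ι × ι)) (T : Finset ι) :
    sh (fun S => u S + v S) L T = sh u L T + sh v L T := by
  induction L generalizing T with
  | nil => rfl
  | cons q L ih => simp only [sh, ih]; ring

/-- A valid list of pairs of length `l` with entries in `A`. -/
def OKl (A : Finset ι) (l : ℕ) (L : List (ι × ι)) : Prop :=
  (ent L).Nodup ∧ (∀ i ∈ ent L, i ∈ A) ∧ L.length = l

structure CRel (A : Finset ι) (l : ℕ) (c : List (ι × ι) → ℤ) : Prop where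
  perm : ∀ L L', L.Perm L' → OKl A l L → c L = c L'
  anti : ∀ a b L, OKl A l ((a, b) :: L) → c ((b, a) :: L) = - c ((a, b) :: L)
  three : ∀ a b e L, (a :: b :: e :: ent L).Nodup → (∀ i ∈ a :: b :: e :: ent L, i ∈ A) →
    L.length + 1 = l → c ((a, e) :: L) = c ((a, b) :: L) + c ((b, e) :: L)
  pl : ∀ a b e f L, (a :: b :: e :: f :: ent L).Nodup →
    (∀ i ∈ a :: b :: e :: f :: ent L, i ∈ A) → L.length + 2 = l →
    c ((a, b) :: (e, f) :: L) + c ((b, e) :: (a, f) :: L) + c ((e, a) :: (b, f) :: L) = 0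

lemma OKl.perm {A : Finset ι} {l : ℕ} {L L' : List (ι × ι)} (h : OKl A l L) (hp : L.Perm L') :
    OKl A l L' :=
  ⟨(ent_perm hp).nodup_iff.1 h.1, fun i hi => h.2.1 i ((ent_perm hp).mem_iff.2 hi),
    hp.length_eq ▸ h.2.2⟩

lemma OKl.mono {A B : Finset ι} {l : ℕ} {L : List (ι × ι)} (hAB : A ⊆ B) (h : OKl A l L) :
    OKl B l L := ⟨h.1, fun i hi => hAB (h.2.1 i hi), h.2.2⟩

lemma CRel.mono {A B : Finset ι} {l : ℕ} {c : List (ι × ι) → ℤ} (hAB : A ⊆ B) (h : CRel B l c) :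
    CRel A l c where
  perm L L' hp ho := h.perm L L' hp (ho.mono hAB)
  anti a b L ho := h.anti a b L (ho.mono hAB)
  three a b e L hn hA := h.three a b e L hn (fun i hi => hAB (hA i hi))
  pl a b e f L hn hA := h.pl a b e f L hn (fun i hi => hAB (hA i hi))

lemma CRel.sub_sh {A : Finset ι} {l : ℕ} {c : List (ι × ι) → ℤ} (h : CRel A l c)
    (u : Finset ι → ℤ) : CRel A l (fun L => c L - sh u L ∅) where
  perm L L' hp ho := by simp only [h.perm L L' hp ho, sh_perm u hp]
  anti a b L ho := by simp only [h.anti a b L ho, sh]; ring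
  three a b e L hn hA hl := by simp only [h.three a b e L hn hA hl, sh]; ring
  pl a b e f L hn hA hl := by
    have := h.pl a b e f L hn hA hl
    simp only [sh]
    rw [Finset.insert_comm e a, Finset.insert_comm f a, Finset.insert_comm e b,
      Finset.insert_comm f b, Finset.insert_comm a b, Finset.insert_comm f e]
    linarith

lemma sh_zero_of_mem (z : ι) (v : Finset ι → ℤ) (hv : ∀ T, z ∈ T → v T = 0)
    (L : List (ι × ι)) (T : Finset ι) (hz : z ∈ T) : sh v L T = 0 := by
  induction L generalizing T with
  | nil => exact hv T hz
  | cons q L ih => simp only [sh]; rw [ih _ (by simp [hz]), ih _ (by simp [hz])]; rfl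

lemma sh_congr_notMem (z : ι) (v w : Finset ι → ℤ) (hv : ∀ T, z ∉ T → v T = w T)
    (L : List (ι × ι)) (hL : z ∉ ent L) (T : Finset ι) (hz : z ∉ T) : sh v L T = sh w L T := by
  induction L generalizing T with
  | nil => exact hv T hz
  | cons q L ih =>
    simp only [ent_cons, List.mem_cons, not_or] at hL
    simp only [sh]
    rw [ih hL.2.2 _ (by simp [hz, hL.1]), ih hL.2.2 _ (by simp [hz, hL.2.1])]

lemma sh_erase (z : ι) (v w : Finset ι → ℤ) (hv : ∀ T, z ∈ T → v T = - w (T.erase z))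
    (L : List (ι × ι)) (hL : z ∉ ent L) (T : Finset ι) (hz : z ∈ T) :
    sh v L T = - sh w L (T.erase z) := by
  induction L generalizing T with
  | nil => exact hv T hz
  | cons q L ih =>
    simp only [ent_cons, List.mem_cons, not_or] at hL
    simp only [sh]
    rw [ih hL.2.2 _ (by simp [hz]), ih hL.2.2 _ (by simp [hz]),
      Finset.erase_insert_of_ne (Ne.symm hL.1), Finset.erase_insert_of_ne (Ne.symm hL.2.1)]
    ring

theorem exists_u (A : Finset ι) : ∀ (l : ℕ) (c : List (ι × ι) → ℤ), CRel A l c →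
    ∃ u : Finset ι → ℤ, ∀ L, OKl A l L → c L = sh u L ∅ := by
  induction A using Finset.induction_on with
  | empty =>
    intro l c _
    refine ⟨fun _ => c [], fun L hL => ?_⟩
    cases L with
    | nil => rfl
    | cons q L => exact absurd (hL.2.1 q.1 (by simp)) (by simp)
  | insert z A hz IH =>
    intro l c hc
    cases l with
    | zero =>
      refine ⟨fun _ => c [], fun L hL => ?_⟩
      rw [List.length_eq_zero_iff.1 hL.2.2]; rfl
    | succ l =>
      obtain ⟨u0, hu0⟩ := IH (l + 1) c (hc.mono (Finset.subset_insert _ _))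
      set v0 : Finset ι → ℤ := fun T => if z ∈ T then 0 else u0 T with hv0
      set c1 : List (ι × ι) → ℤ := fun L => c L - sh v0 L ∅ with hc1
      have R1 : CRel (insert z A) (l + 1) c1 := hc.sub_sh v0
      have hzA : ∀ {L : List (ι × ι)}, (∀ i ∈ ent L, i ∈ A) → z ∉ ent L :=
        fun h hm => hz (h z hm)
      have c10 : ∀ L, OKl A (l + 1) L → c1 L = 0 := by
        intro L hL
        simp only [hc1]
        rw [hu0 L hL, sh_congr_notMem z v0 u0 (by intro T hT; simp [hv0, hT]) L (hzA hL.2.1) ∅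
          (by simp)]
        ring
      have key : ∀ a b L, a ∈ A → b ∈ A → OKl A l L → a ∉ ent L → b ∉ ent L →
          c1 ((a, z) :: L) = c1 ((b, z) :: L) := by
        intro a b L ha hb hL haL hbL
        by_cases hab : a = b
        · rw [hab]
        have hazn : a ≠ z := fun h => hz (h ▸ ha)
        have hbzn : b ≠ z := fun h => hz (h ▸ hb)
        have := R1.three a b z L (by simp [hab, hazn, hbzn, haL, hbL, hzA hL.2.1, hL.1])
          (by
            intro i hi
            simp only [List.mem_cons] at hi
            rcases hi with rfl | rfl | rfl | hi
            · simp [ha]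
            · simp [hb]
            · simp
            · simp [hL.2.1 i hi]) (by rw [hL.2.2])
        rw [this, c10 ((a, b) :: L) ⟨by simp [hab, haL, hbL, hL.1], by
            intro i hi
            simp only [ent_cons, List.mem_cons] at hi
            rcases hi with rfl | rfl | hi
            · exact ha
            · exact hb
            · exact hL.2.1 i hi, by simp [hL.2.2]⟩, zero_add]
      set c' : List (ι × ι) → ℤ := fun L =>
        if h : ∃ a ∈ A, a ∉ ent L then c1 ((h.choose, z) :: L) else 0 with hc'
      have c'1 : ∀ a L, a ∈ A → a ∉ ent L → OKl A l L → c' L = c1 ((a, z) :: L) := by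
        intro a L ha haL hL
        have h : ∃ a ∈ A, a ∉ ent L := ⟨a, ha, haL⟩
        simp only [hc']
        rw [dif_pos h]
        exact key _ _ _ h.choose_spec.1 ha hL h.choose_spec.2 haL
      have c'0 : ∀ L, (¬ ∃ a ∈ A, a ∉ ent L) → c' L = 0 := by
        intro L hL
        simp only [hc']
        rw [dif_neg hL]
      have okx : ∀ a L, a ∈ A → a ∉ ent L → OKl A l L → OKl (insert z A) (l + 1) ((a, z) :: L) := by
        intro a L ha haL hL
        have hazn : a ≠ z := fun h => hz (h ▸ ha)
        refine ⟨by simp [hazn, haL, hzA hL.2.1, hL.1], ?_, by simp [hL.2.2]⟩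
        intro i hi
        simp only [ent_cons, List.mem_cons] at hi
        rcases hi with rfl | rfl | hi
        · simp [ha]
        · simp
        · simp [hL.2.1 i hi]
      have R' : CRel A l c' := by
        refine ⟨?_, ?_, ?_, ?_⟩
        · intro L L' hp hL
          by_cases h : ∃ a ∈ A, a ∉ ent L
          · obtain ⟨a, ha, haL⟩ := h
            have haL' : a ∉ ent L' := fun hm => haL ((ent_perm hp).mem_iff.2 hm)
            rw [c'1 a L ha haL hL, c'1 a L' ha haL' (hL.perm hp)]
            exact R1.perm _ _ (hp.cons _) (okx a L ha haL hL)
          · rw [c'0 L h, c'0 L' (by simpa only [(ent_perm hp).mem_iff] using h)]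
        · intro a b L hL
          have hL' : OKl A l ((b, a) :: L) := by
            refine ⟨?_, ?_, by simpa using hL.2.2⟩
            · have := hL.1
              simp only [ent_cons, List.nodup_cons, List.mem_cons] at this ⊢
              tauto
            · intro i hi
              apply hL.2.1 i
              simp only [ent_cons, List.mem_cons] at hi ⊢
              tauto
          by_cases h : ∃ x ∈ A, x ∉ ent ((a, b) :: L)
          · obtain ⟨x, hx, hxL⟩ := h
            have hxL' : x ∉ ent ((b, a) :: L) := by
              simp only [ent_cons, List.mem_cons] at hxL ⊢
              tauto
            rw [c'1 x _ hx hxL hL, c'1 x _ hx hxL' hL',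
              R1.perm _ _ (List.Perm.swap _ _ _) (okx x _ hx hxL hL),
              R1.perm _ _ (List.Perm.swap _ _ _) (okx x _ hx hxL' hL')]
            exact R1.anti _ _ _ ((okx x _ hx hxL hL).perm (List.Perm.swap _ _ _))
          · rw [c'0 _ h, c'0]
            · rfl
            · intro ⟨x, hx, hxL⟩
              apply h
              refine ⟨x, hx, ?_⟩
              simp only [ent_cons, List.mem_cons] at hxL ⊢
              tauto
        · intro a b e L hn hA hl
          have hzn : z ∉ a :: b :: e :: ent L := fun h => hz (hA z h)
          have hs : ∀ i ∈ ent L, i ∈ A := fun i hi => hA i (by simp [hi])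
          have ha := hA a (by simp)
          have hb := hA b (by simp)
          have he := hA e (by simp)
          have P := R1.pl a b e z L (by
              simp only [List.nodup_cons, List.mem_cons] at hn hzn ⊢
              grind) (by
              intro i hi
              simp only [List.mem_cons] at hi hA
              simp only [Finset.mem_insert]
              grind) (by omega)
          simp only [List.nodup_cons, List.mem_cons, not_or] at hn
          obtain ⟨⟨h1, h2, h3⟩, ⟨h4, h5⟩, h6, h7⟩ := hn
          have ok1 : ∀ x y : ι, x ∈ A → y ∈ A → x ≠ y → x ∉ ent L → y ∉ ent L →
              OKl A l ((x, y) :: L) := by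
            intro x y hx hy hxy hxL hyL
            refine ⟨by simp [hxy, hxL, hyL, h7], ?_, by simp [← hl]⟩
            intro i hi
            simp only [ent_cons, List.mem_cons] at hi
            rcases hi with rfl | rfl | hi
            · exact hx
            · exact hy
            · exact hs i hi
          have full : ∀ x y w : ι, x ∈ A → y ∈ A → w ∈ A → x ≠ y → w ≠ x → w ≠ y → x ∉ ent L →
              y ∉ ent L → w ∉ ent L → c' ((x, y) :: L) = c1 ((x, y) :: (w, z) :: L) := by
            intro x y w hx hy hw hxy hwx hwy hxL hyL hwL
            have o := ok1 x y hx hy hxy hxL hyL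
            have wn : w ∉ ent ((x, y) :: L) := by simp [hwx, hwy, hwL]
            rw [c'1 w _ hw wn o, R1.perm _ _ (List.Perm.swap _ _ _) (okx w _ hw wn o)]
          have aa : c1 ((e, a) :: (b, z) :: L) = - c1 ((a, e) :: (b, z) :: L) := by
            apply R1.anti
            have o := ok1 a e ha he h2 h3 h6
            have wn : b ∉ ent ((a, e) :: L) := by simp [Ne.symm h1, h4, h5]
            exact (okx b _ hb wn o).perm (List.Perm.swap _ _ _)
          rw [full a e b ha he hb h2 (Ne.symm h1) h4 h3 h6 h5,
            full a b e ha hb he h1 (Ne.symm h2) (Ne.symm h4) h3 h5 h6,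
            full b e a hb he ha h4 h1 h2 h5 h6 h3]
          linarith
        · intro a b e f L hn hA hl
          have ok2 : ∀ x y w v : ι, (x :: y :: w :: v :: ent L).Perm (a :: b :: e :: f :: ent L) →
              OKl A l ((x, y) :: (w, v) :: L) := by
            intro x y w v hp
            exact ⟨by simpa only [ent_cons] using hp.nodup_iff.2 hn,
              fun i hi => hA i (hp.mem_iff.1 (by simpa only [ent_cons] using hi)), by simp [← hl]⟩
          have p2 : (b :: e :: a :: f :: ent L).Perm (a :: b :: e :: f :: ent L) := by
            rw [List.perm_iff_count]; intro x; simp only [List.count_cons]; omega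
          have p3 : (e :: a :: b :: f :: ent L).Perm (a :: b :: e :: f :: ent L) := by
            rw [List.perm_iff_count]; intro x; simp only [List.count_cons]; omega
          have o1 := ok2 a b e f (List.Perm.refl _)
          have o2 := ok2 b e a f p2
          have o3 := ok2 e a b f p3
          by_cases h : ∃ x ∈ A, x ∉ a :: b :: e :: f :: ent L
          · obtain ⟨x, hx, hxL⟩ := h
            have full : ∀ x1 y w v : ι,
                (x1 :: y :: w :: v :: ent L).Perm (a :: b :: e :: f :: ent L) →
                c' ((x1, y) :: (w, v) :: L) = c1 ((x1, y) :: (w, v) :: (x, z) :: L) := by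
              intro x1 y w v hp
              have o := ok2 x1 y w v hp
              have wn : x ∉ ent ((x1, y) :: (w, v) :: L) := by
                simp only [ent_cons]
                exact fun h => hxL (hp.mem_iff.1 h)
              rw [c'1 x _ hx wn o]
              exact R1.perm _ _ ((List.Perm.swap _ _ _).trans
                (List.Perm.cons _ (List.Perm.swap _ _ _))) (okx x _ hx wn o)
            rw [full a b e f (List.Perm.refl _), full b e a f p2, full e a b f p3]
            have hzn : z ∉ a :: b :: e :: f :: ent L := fun h => hz (hA z h)
            have hxz : x ≠ z := fun h => hz (h ▸ hx)
            apply R1.pl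
            · simp only [List.nodup_cons, List.mem_cons, ent_cons] at hn hzn hxL ⊢
              grind
            · intro i hi
              simp only [List.mem_cons, ent_cons] at hi hA
              simp only [Finset.mem_insert]
              grind
            · simp; omega
          · rw [c'0, c'0, c'0]
            · rfl
            · simp only [ent_cons, p3.mem_iff]; exact h
            · simp only [ent_cons, p2.mem_iff]; exact h
            · simpa only [ent_cons] using h
      obtain ⟨u', hu'⟩ := IH l c' R'
      set v1 : Finset ι → ℤ := fun T => if z ∈ T then - u' (T.erase z) else 0 with hv1
      have hcsum : ∀ L, c L = c1 L + sh v0 L ∅ := fun L => by simp [hc1]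
      have main : ∀ a L, OKl (insert z A) (l + 1) ((a, z) :: L) →
          c1 ((a, z) :: L) = sh v1 ((a, z) :: L) ∅ := by
        intro a L hL
        have hn := hL.1
        simp only [ent_cons, List.nodup_cons, List.mem_cons, not_or] at hn
        obtain ⟨⟨h1, h2⟩, h3, h4⟩ := hn
        have haA : a ∈ A := by
          have := hL.2.1 a (by simp)
          simpa [h1] using this
        have hOK : OKl A l L := by
          refine ⟨h4, ?_, by simpa using hL.2.2⟩
          intro i hi
          have h5 := hL.2.1 i (by simp [hi])
          have h6 : i ≠ z := fun h => h3 (h ▸ hi)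
          simpa [h6] using h5
        rw [← c'1 a L haA h2 hOK, hu' L hOK]
        simp only [sh]
        rw [sh_congr_notMem z v1 (fun _ => 0) (by intro T hT; simp [hv1, hT]) L h3 _
            (by simpa using Ne.symm h1),
          sh_erase z v1 u' (by intro T hT; simp [hv1, hT]) L h3 _ (by simp)]
        have h0 : ∀ T, sh (fun _ => (0 : ℤ)) L T = 0 := by
          clear * -
          intro T
          induction L generalizing T with
          | nil => rfl
          | cons q L ih => simp [sh, ih]
        rw [h0]
        simp [Finset.erase_insert]
      refine ⟨fun T => v0 T + v1 T, fun L hL => ?_⟩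
      rw [sh_add, hcsum, add_comm]
      congr 1
      by_cases hzL : z ∈ ent L
      · obtain ⟨q, hq, hzq⟩ := List.mem_flatMap.1 hzL
        have hp := List.perm_cons_erase hq
        have hL' := hL.perm hp
        rw [R1.perm _ _ hp hL, sh_perm v1 hp]
        obtain ⟨a, b⟩ := q
        simp only [List.mem_cons, List.not_mem_nil, or_false] at hzq
        rcases hzq with rfl | rfl
        · have hL'' : OKl (insert z A) (l + 1) ((b, z) :: L.erase (z, b)) := by
            refine ⟨?_, ?_, by simpa using hL'.2.2⟩
            · have := hL'.1
              simp only [ent_cons, List.nodup_cons, List.mem_cons] at this ⊢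
              tauto
            · intro i hi
              apply hL'.2.1 i
              simp only [ent_cons, List.mem_cons] at hi ⊢
              tauto
          rw [R1.anti _ _ _ hL'', main _ _ hL'']
          simp only [sh]; ring
        · exact main _ _ hL'
      · have hOK : OKl A (l + 1) L := by
          refine ⟨hL.1, fun i hi => ?_, hL.2.2⟩
          have h5 := hL.2.1 i hi
          have h6 : i ≠ z := fun h => hzL (h ▸ hi)
          simpa [h6] using h5
        rw [c10 L hOK, sh_congr_notMem z v1 (fun _ => 0) (by intro T hT; simp [hv1, hT]) L hzL _
          (by simp)]
        have h0 : ∀ T, sh (fun _ => (0 : ℤ)) L T = 0 := by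
          clear * -
          intro T
          induction L generalizing T with
          | nil => rfl
          | cons q L ih => simp [sh, ih]
        rw [h0]

end Comb

section Cube

noncomputable def bw (q : ℝ) (b : Bool) : ℝ := if b then q else 1 - q
noncomputable def cw {n : ℕ} (q : ℝ) (y : Fin n → Bool) : ℝ := ∏ i, bw q (y i)
noncomputable def cubeE {n : ℕ} (q : ℝ) (g : (Fin n → Bool) → ℝ) : ℝ := ∑ y, cw q y * g y
noncomputable def kap (q r : ℝ) (b b' : Bool) : ℝ := r * (if b = b' then 1 else 0) + (1 - r) * bw q b'
noncomputable def kapv {n : ℕ} (q r : ℝ) (y y' : Fin n → Bool) : ℝ := ∏ i, kap q r (y i) (y' i)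
noncomputable def nz {n : ℕ} (q r : ℝ) (g : (Fin n → Bool) → ℝ) (y : Fin n → Bool) : ℝ :=
  ∑ y', kapv q r y y' * g y'
def cv {n : ℕ} (y : Fin n → Bool) (i : Fin n) : ℝ := if y i then 1 else 0
def cPsi {n : ℕ} (L : List (Fin n × Fin n)) (y : Fin n → Bool) : ℝ :=
  (L.map fun q => cv y q.1 - cv y q.2).prod

lemma sum_cube_succ {n : ℕ} (F : (Fin (n + 1) → Bool) → ℝ) :
    ∑ y, F y = ∑ y : Fin n → Bool, F (Fin.cons true y) + ∑ y : Fin n → Bool, F (Fin.cons false y) := by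
  rw [← (Fin.consEquiv (fun _ : Fin (n + 1) => Bool)).sum_comp, Fintype.sum_prod_type]
  simp [Fin.consEquiv]

lemma cw_cons {n : ℕ} (q : ℝ) (b : Bool) (y : Fin n → Bool) :
    cw q (Fin.cons b y : Fin (n + 1) → Bool) = bw q b * cw q y := by
  simp [cw, Fin.prod_univ_succ]

lemma cubeE_succ {n : ℕ} (q : ℝ) (g : (Fin (n + 1) → Bool) → ℝ) :
    cubeE q g = q * cubeE q (fun y => g (Fin.cons true y)) +
      (1 - q) * cubeE q (fun y => g (Fin.cons false y)) := by
  unfold cubeE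
  rw [sum_cube_succ, Finset.mul_sum, Finset.mul_sum]
  simp [cw_cons, bw, mul_assoc]

lemma kapv_cons {n : ℕ} (q r : ℝ) (b b' : Bool) (y y' : Fin n → Bool) :
    kapv q r (Fin.cons b y : Fin (n + 1) → Bool) (Fin.cons b' y') = kap q r b b' * kapv q r y y' := by
  simp [kapv, Fin.prod_univ_succ]

lemma nz_add {n : ℕ} (q r s t : ℝ) (f g : (Fin n → Bool) → ℝ) (y : Fin n → Bool) :
    nz q r (fun y => s * f y + t * g y) y = s * nz q r f y + t * nz q r g y := by
  simp only [nz, Finset.mul_sum, ← Finset.sum_add_distrib]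
  exact Finset.sum_congr rfl fun _ _ => by ring

lemma nz_cons {n : ℕ} (q r : ℝ) (g : (Fin (n + 1) → Bool) → ℝ) (b : Bool) (y : Fin n → Bool) :
    nz q r g (Fin.cons b y) = kap q r b true * nz q r (fun y => g (Fin.cons true y)) y +
      kap q r b false * nz q r (fun y => g (Fin.cons false y)) y := by
  simp only [nz]
  rw [sum_cube_succ, Finset.mul_sum, Finset.mul_sum]
  simp only [kapv_cons, mul_assoc]

lemma bw_nonneg {q : ℝ} (h0 : 0 ≤ q) (h1 : q ≤ 1) (b : Bool) : 0 ≤ bw q b := by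
  unfold bw; split_ifs <;> linarith

lemma cw_nonneg {n : ℕ} {q : ℝ} (h0 : 0 ≤ q) (h1 : q ≤ 1) (y : Fin n → Bool) : 0 ≤ cw q y :=
  Finset.prod_nonneg fun _ _ => bw_nonneg h0 h1 _

lemma cubeE_mono {n : ℕ} {q : ℝ} (h0 : 0 ≤ q) (h1 : q ≤ 1) {f g : (Fin n → Bool) → ℝ}
    (h : ∀ y, f y ≤ g y) : cubeE q f ≤ cubeE q g :=
  Finset.sum_le_sum fun y _ => mul_le_mul_of_nonneg_left (h y) (cw_nonneg h0 h1 y)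

lemma cubeE_nonneg {n : ℕ} {q : ℝ} (h0 : 0 ≤ q) (h1 : q ≤ 1) {f : (Fin n → Bool) → ℝ}
    (h : ∀ y, 0 ≤ f y) : 0 ≤ cubeE q f :=
  Finset.sum_nonneg fun y _ => mul_nonneg (cw_nonneg h0 h1 y) (h y)

lemma cubeE_lin {n : ℕ} (q s t : ℝ) (f g : (Fin n → Bool) → ℝ) :
    cubeE q (fun y => s * f y + t * g y) = s * cubeE q f + t * cubeE q g := by
  simp only [cubeE, Finset.mul_sum, ← Finset.sum_add_distrib]
  exact Finset.sum_congr rfl fun _ _ => by ring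

lemma cubeE_cs {n : ℕ} {q : ℝ} (h0 : 0 ≤ q) (h1 : q ≤ 1) (f g : (Fin n → Bool) → ℝ) :
    (cubeE q (fun y => f y * g y)) ^ 2 ≤ cubeE q (fun y => f y ^ 2) * cubeE q (fun y => g y ^ 2) := by
  unfold cubeE
  have := Finset.sum_mul_sq_le_sq_mul_sq Finset.univ (fun y => √(cw q y) * f y)
    (fun y => √(cw q y) * g y)
  have e : ∀ y : Fin n → Bool, √(cw q y) * √(cw q y) = cw q y :=
    fun y => Real.mul_self_sqrt (cw_nonneg h0 h1 y)
  have e1 : ∀ y, √(cw q y) * f y * (√(cw q y) * g y) = cw q y * (f y * g y) := fun y => by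
    rw [← e y]; ring_nf; rw [Real.sqrt_sq (Real.sqrt_nonneg _)]
  have e2 : ∀ (f : (Fin n → Bool) → ℝ) y, (√(cw q y) * f y) ^ 2 = cw q y * f y ^ 2 := fun f y => by
    rw [mul_pow, sq, e y]
  simpa only [e1, e2] using this

theorem hyper {q : ℝ} (h0 : 0 ≤ q) (h1 : q ≤ 1 / 2) : ∀ {n : ℕ} (g : (Fin n → Bool) → ℝ),
    cubeE q (fun y => nz q q g y ^ 4) ≤ (cubeE q (fun y => g y ^ 2)) ^ 2 := by
  have h1' : q ≤ 1 := by linarith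
  intro n
  induction n with
  | zero =>
    intro g
    simp [cubeE, nz, cw, kapv]
    apply le_of_eq; ring
  | succ n ih =>
    intro g
    set g1 : (Fin n → Bool) → ℝ := fun y => g (Fin.cons true y) with hg1
    set g0 : (Fin n → Bool) → ℝ := fun y => g (Fin.cons false y) with hg0
    set a : (Fin n → Bool) → ℝ := fun y => q * g1 y + (1 - q) * g0 y with ha
    set e : (Fin n → Bool) → ℝ := fun y => 1 * g1 y + (-1) * g0 y with he
    set A := nz q q a with hA
    set B := nz q q e with hB
    have hA' : ∀ y, A y = q * nz q q g1 y + (1 - q) * nz q q g0 y := fun y => nz_add _ _ _ _ _ _ _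
    have hB' : ∀ y, B y = 1 * nz q q g1 y + (-1) * nz q q g0 y := fun y => nz_add _ _ _ _ _ _ _
    have E1 : ∀ y, nz q q g (Fin.cons true y) = A y + q * (1 - q) * B y := by
      intro y
      rw [nz_cons, hA', hB']
      simp [kap, bw]; ring
    have E0 : ∀ y, nz q q g (Fin.cons false y) = A y - q * q * B y := by
      intro y
      rw [nz_cons, hA', hB']
      simp [kap, bw]; ring
    rw [cubeE_succ, cubeE_succ]
    simp only [E1, E0]
    set v := q * (1 - q) with hv
    have hv0 : 0 ≤ v := mul_nonneg h0 (by linarith)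
    have hA4 := ih a
    have hB4 := ih e
    set α := cubeE q (fun y => a y ^ 2) with hα
    set β := cubeE q (fun y => e y ^ 2) with hβ
    have hα0 : 0 ≤ α := cubeE_nonneg h0 h1' fun y => sq_nonneg _
    have hβ0 : 0 ≤ β := cubeE_nonneg h0 h1' fun y => sq_nonneg _
    have hAB : cubeE q (fun y => A y ^ 2 * B y ^ 2) ≤ α * β := by
      have := cubeE_cs h0 h1' (fun y => A y ^ 2) (fun y => B y ^ 2)
      apply le_of_sq_le_sq _ (mul_nonneg hα0 hβ0)
      refine this.trans ?_
      rw [mul_pow]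
      simp only [← pow_mul]
      exact mul_le_mul hA4 hB4 (cubeE_nonneg h0 h1' fun y => Even.pow_nonneg (by decide) _) (by positivity)
    have sq_eq : q * cubeE q (fun y => g1 y ^ 2) + (1 - q) * cubeE q (fun y => g0 y ^ 2)
        = α + v * β := by
      rw [← cubeE_lin]
      rw [hα, hβ]
      have := cubeE_lin q 1 v (fun y => a y ^ 2) (fun y => e y ^ 2)
      rw [one_mul] at this
      rw [← this]
      congr 1
      funext y
      simp only [ha, he, hv]; ring
    change _ ≤ (q * cubeE q (fun y => g1 y ^ 2) + (1 - q) * cubeE q (fun y => g0 y ^ 2)) ^ 2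
    rw [sq_eq, ← cubeE_lin]
    have step : cubeE q (fun y => q * (A y + q * (1 - q) * B y) ^ 4 + (1 - q) * (A y - q * q * B y) ^ 4)
        ≤ cubeE q (fun y => 1 * (A y ^ 4) + 1 * (8 * q ^ 2 * v * (A y ^ 2 * B y ^ 2)
          + 3 * q ^ 4 * v * B y ^ 4)) := by
      apply cubeE_mono h0 h1'
      intro y
      generalize A y = s
      generalize B y = t
      have expand : q * (s + q * (1 - q) * t) ^ 4 + (1 - q) * (s - q * q * t) ^ 4
          = s ^ 4 + 6 * q ^ 2 * v * s ^ 2 * t ^ 2 + 4 * q ^ 3 * v * (1 - 2 * q) * s * t ^ 3 +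
            q ^ 4 * v * ((1 - q) ^ 3 + q ^ 3) * t ^ 4 := by
        simp only [hv]; ring
      rw [expand]
      have i1 : 4 * q ^ 3 * v * (1 - 2 * q) * s * t ^ 3 ≤
          2 * q ^ 2 * v * s ^ 2 * t ^ 2 + 2 * q ^ 4 * v * t ^ 4 := by
        have : 0 ≤ 2 * q ^ 2 * v * t ^ 2 * ((s - (1 - 2 * q) * q * t) ^ 2 +
            (1 - (1 - 2 * q) ^ 2) * (q * t) ^ 2) := by
          have : 0 ≤ 1 - (1 - 2 * q) ^ 2 := by nlinarith
          positivity
        nlinarith [this]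
      have i2 : q ^ 4 * v * ((1 - q) ^ 3 + q ^ 3) * t ^ 4 ≤ q ^ 4 * v * 1 * t ^ 4 := by
        have : (1 - q) ^ 3 + q ^ 3 ≤ 1 := by nlinarith
        gcongr
      nlinarith [i1, i2]
    refine step.trans ?_
    rw [cubeE_lin, cubeE_lin]
    have c1 : 8 * q ^ 2 * v * cubeE q (fun y => A y ^ 2 * B y ^ 2) ≤ 2 * v * (α * β) := by
      have : 8 * q ^ 2 * v ≤ 2 * v := by
        have : 8 * q ^ 2 ≤ 2 := by nlinarith
        exact mul_le_mul_of_nonneg_right this hv0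
      exact mul_le_mul this hAB (cubeE_nonneg h0 h1' fun y => by positivity) (by positivity)
    have c2 : 3 * q ^ 4 * v * cubeE q (fun y => B y ^ 4) ≤ v ^ 2 * β ^ 2 := by
      have : 3 * q ^ 4 * v ≤ v ^ 2 := by
        have : 3 * q ^ 4 ≤ v := by
          simp only [hv]
          have h3 : q ^ 3 ≤ 1 / 8 := by
            calc q ^ 3 ≤ (1 / 2) ^ 3 := by gcongr
              _ = 1 / 8 := by norm_num
          nlinarith
        nlinarith
      exact mul_le_mul this hB4 (cubeE_nonneg h0 h1' fun y => by positivity) (by positivity)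
    nlinarith [c1, c2, hA4]

lemma kap_symm (q r : ℝ) (b b' : Bool) : bw q b * kap q r b b' = bw q b' * kap q r b' b := by
  cases b <;> cases b' <;> simp [bw, kap] <;> ring

lemma nz_selfadj {n : ℕ} (q r : ℝ) (f g : (Fin n → Bool) → ℝ) :
    cubeE q (fun y => f y * nz q r g y) = cubeE q (fun y => nz q r f y * g y) := by
  simp only [cubeE, nz, Finset.mul_sum, Finset.sum_mul]
  rw [Finset.sum_comm]
  refine Finset.sum_congr rfl fun y _ => Finset.sum_congr rfl fun y' _ => ?_
  have : cw q y' * kapv q r y' y = cw q y * kapv q r y y' := by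
    simp only [cw, kapv, ← Finset.prod_mul_distrib]
    exact Finset.prod_congr rfl fun i _ => kap_symm q r _ _
  linear_combination f y' * g y * this

lemma sum_prod_bool {n : ℕ} (φ : Fin n → Bool → ℝ) :
    ∑ y : Fin n → Bool, ∏ i, φ i (y i) = ∏ i, (φ i true + φ i false) := by
  rw [← Fintype.prod_sum]
  simp

lemma sum_prod_cPsi {n : ℕ} (L : List (Fin n × Fin n)) (hL : (ent L).Nodup) :
    ∀ (φ : Fin n → Bool → ℝ), (∀ i ∈ ent L, φ i true + φ i false = 1) →
    ∑ y : Fin n → Bool, (∏ i, φ i (y i)) * cPsi L y =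
      (∏ i, (φ i true + φ i false)) * (L.map fun q => φ q.1 true - φ q.2 true).prod := by
  induction L with
  | nil => intro φ _; simp [cPsi, sum_prod_bool]
  | cons q L ih =>
    intro φ hφ
    simp only [ent_cons, List.nodup_cons, List.mem_cons, not_or] at hL
    obtain ⟨⟨h1, h2⟩, h3, h4⟩ := hL
    have upd : ∀ a, a ∉ ent L → φ a true + φ a false = 1 →
        ∑ y : Fin n → Bool, (∏ i, φ i (y i)) * (cv y a * cPsi L y) =
        (∏ i, (φ i true + φ i false)) * φ a true * (L.map fun q => φ q.1 true - φ q.2 true).prod := by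
      intro a ha hs
      set ψ : Fin n → Bool → ℝ := Function.update φ a (fun b => if b then φ a true else 0) with hψ
      have hne : ∀ i, i ≠ a → ψ i = φ i := fun i hi => Function.update_of_ne hi _ _
      have hself : ψ a = fun b => if b then φ a true else 0 := Function.update_self _ _ _
      have hψs : ∀ i ∈ ent L, ψ i true + ψ i false = 1 := by
        intro i hi
        rw [hne i (fun h => ha (h ▸ hi))]
        exact hφ i (by simp [hi])
      have := ih h4 ψ hψs
      have e1 : ∀ y : Fin n → Bool, (∏ i, φ i (y i)) * (cv y a * cPsi L y) =
          (∏ i, ψ i (y i)) * cPsi L y := by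
        intro y
        rw [← mul_assoc]
        congr 1
        rw [← Finset.mul_prod_erase _ _ (Finset.mem_univ a),
          ← Finset.mul_prod_erase _ (fun i => ψ i (y i)) (Finset.mem_univ a), hself]
        rw [Finset.prod_congr rfl (fun i hi => by rw [← hne i (Finset.ne_of_mem_erase hi)] :
          ∀ i ∈ Finset.univ.erase a, φ i (y i) = ψ i (y i))]
        unfold cv
        cases hy : y a <;> simp
      rw [Finset.sum_congr rfl fun y _ => e1 y, this]
      congr 1
      · rw [← Finset.mul_prod_erase _ _ (Finset.mem_univ a),
          ← Finset.mul_prod_erase _ (fun i => φ i true + φ i false) (Finset.mem_univ a), hself, hs]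
        rw [Finset.prod_congr rfl (fun i hi => by rw [hne i (Finset.ne_of_mem_erase hi)])]
        simp [mul_comm]
      · congr 1
        apply List.map_congr_left
        intro r hr
        have m1 : r.1 ∈ ent L := List.mem_flatMap.2 ⟨r, hr, by simp⟩
        have m2 : r.2 ∈ ent L := List.mem_flatMap.2 ⟨r, hr, by simp⟩
        rw [hne _ (fun h => ha (h ▸ m1)), hne _ (fun h => ha (h ▸ m2))]
    have u1 := upd q.1 h2 (hφ q.1 (by simp))
    have u2 := upd q.2 h3 (hφ q.2 (by simp))
    have : ∀ y : Fin n → Bool, (∏ i, φ i (y i)) * cPsi (q :: L) y =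
        (∏ i, φ i (y i)) * (cv y q.1 * cPsi L y) - (∏ i, φ i (y i)) * (cv y q.2 * cPsi L y) := by
      intro y
      simp only [cPsi, List.map_cons, List.prod_cons]; ring
    rw [Finset.sum_congr rfl fun y _ => this y, Finset.sum_sub_distrib, u1, u2]
    simp only [List.map_cons, List.prod_cons]
    ring

lemma nz_cPsi {n : ℕ} (q r : ℝ) (L : List (Fin n × Fin n)) (hL : (ent L).Nodup) (y : Fin n → Bool) :
    nz q r (cPsi L) y = r ^ L.length * cPsi L y := by
  have hs : ∀ i, kap q r (y i) true + kap q r (y i) false = 1 := by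
    intro i
    cases y i <;> simp [kap, bw] <;> ring
  have := sum_prod_cPsi L hL (fun i => kap q r (y i)) (fun i _ => hs i)
  unfold nz kapv
  rw [this]
  simp only [hs, Finset.prod_const_one, one_mul, cPsi]
  have h2 : ∀ i, kap q r (y i) true = r * cv y i + (1 - r) * q := by
    intro i
    cases h : y i <;> simp [kap, bw, cv, h]
  simp only [h2]
  clear hs h2 this hL
  induction L with
  | nil => simp
  | cons q L ih => simp only [List.map_cons, List.prod_cons, List.length_cons, pow_succ, ih]; ring

lemma cw_sum {n : ℕ} (q : ℝ) : ∑ y : Fin n → Bool, cw q y = 1 := by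
  unfold cw
  rw [sum_prod_bool (fun _ => bw q)]
  simp [bw]

lemma cPsi_sq_le {n : ℕ} (L : List (Fin n × Fin n)) (y : Fin n → Bool) : cPsi L y ^ 2 ≤ 1 := by
  induction L with
  | nil => simp [cPsi]
  | cons q L ih =>
    have : cPsi (q :: L) y = (cv y q.1 - cv y q.2) * cPsi L y := by simp [cPsi]
    rw [this, mul_pow]
    have h2 : (cv y q.1 - cv y q.2) ^ 2 ≤ 1 := by
      unfold cv; split_ifs <;> norm_num
    exact mul_le_one₀ h2 (sq_nonneg _) ih

end Cube

section SliceBasics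
variable {n : ℕ} {p : ℝ}

lemma slice_ext {x y : SlicePoint n p} (h : ∀ i, x.1 i = y.1 i) : x = y :=
  Subtype.ext (funext h)

@[simp] lemma permPt_val (π : Equiv.Perm (Fin n)) (x : SlicePoint n p) (i : Fin n) :
    (permPt π x).1 i = x.1 (π.symm i) := rfl

lemma permPt_permPt (π σ : Equiv.Perm (Fin n)) (x : SlicePoint n p) :
    permPt π (permPt σ x) = permPt (π * σ) x := by
  apply slice_ext; intro i; rfl

@[simp] lemma permPt_one (x : SlicePoint n p) : permPt 1 x = x := by
  apply slice_ext; intro i; rfl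

def permE (π : Equiv.Perm (Fin n)) : SlicePoint n p ≃ SlicePoint n p where
  toFun := permPt π
  invFun := permPt π⁻¹
  left_inv x := by rw [permPt_permPt]; simp
  right_inv x := by rw [permPt_permPt]; simp

/-- the action on functions -/
def Up (π : Equiv.Perm (Fin n)) (f : SlicePoint n p → ℝ) : SlicePoint n p → ℝ :=
  fun x => f (permPt π x)

lemma Up_Up (π σ : Equiv.Perm (Fin n)) (f : SlicePoint n p → ℝ) : Up π (Up σ f) = Up (σ * π) f := by
  funext x; simp [Up, permPt_permPt]

@[simp] lemma Up_one (f : SlicePoint n p → ℝ) : Up 1 f = f := by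
  funext x; simp [Up]

lemma sExp_Up (π : Equiv.Perm (Fin n)) (f : SlicePoint n p → ℝ) : sExp (Up π f) = sExp f := by
  unfold sExp Up
  congr 1
  exact (permE π).sum_comp f

lemma sExp_add (f g : SlicePoint n p → ℝ) : sExp (fun x => f x + g x) = sExp f + sExp g := by
  simp [sExp, Finset.sum_add_distrib, add_div]

lemma sExp_smul (c : ℝ) (f : SlicePoint n p → ℝ) : sExp (fun x => c * f x) = c * sExp f := by
  simp [sExp, ← Finset.mul_sum, mul_div_assoc]

lemma sExp_nonneg {f : SlicePoint n p → ℝ} (h : ∀ x, 0 ≤ f x) : 0 ≤ sExp f :=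
  div_nonneg (Finset.sum_nonneg fun x _ => h x) (Nat.cast_nonneg _)

lemma sExp_mono {f g : SlicePoint n p → ℝ} (h : ∀ x, f x ≤ g x) : sExp f ≤ sExp g :=
  div_le_div_of_nonneg_right (Finset.sum_le_sum fun x _ => h x) (Nat.cast_nonneg _)

lemma sInner_comm (f g : SlicePoint n p → ℝ) : sInner f g = sInner g f := by
  simp [sInner, mul_comm]

lemma sInner_add_left (f g h : SlicePoint n p → ℝ) :
    sInner (f + g) h = sInner f h + sInner g h := by
  simp [sInner, ← sExp_add, add_mul]

lemma sInner_smul_left (c : ℝ) (f h : SlicePoint n p → ℝ) :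
    sInner (c • f) h = c * sInner f h := by
  simp [sInner, ← sExp_smul, mul_assoc]

lemma sInner_neg_left (f h : SlicePoint n p → ℝ) : sInner (-f) h = - sInner f h := by
  have := sInner_smul_left (-1) f h
  simpa using this

lemma sInner_sub_left (f g h : SlicePoint n p → ℝ) :
    sInner (f - g) h = sInner f h - sInner g h := by
  rw [sub_eq_add_neg, sInner_add_left, sInner_neg_left]; ring

lemma sInner_add_right (f g h : SlicePoint n p → ℝ) :
    sInner h (f + g) = sInner h f + sInner h g := by
  rw [sInner_comm, sInner_add_left, sInner_comm f, sInner_comm g]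

lemma sInner_smul_right (c : ℝ) (f h : SlicePoint n p → ℝ) :
    sInner h (c • f) = c * sInner h f := by
  rw [sInner_comm, sInner_smul_left, sInner_comm f]

lemma sInner_sub_right (f g h : SlicePoint n p → ℝ) :
    sInner h (f - g) = sInner h f - sInner h g := by
  rw [sInner_comm, sInner_sub_left, sInner_comm f, sInner_comm g]

lemma sInner_neg_right (f h : SlicePoint n p → ℝ) : sInner h (-f) = - sInner h f := by
  rw [sInner_comm, sInner_neg_left, sInner_comm]

@[simp] lemma sInner_zero_left (h : SlicePoint n p → ℝ) : sInner 0 h = 0 := by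
  have := sInner_smul_left 0 0 h
  simpa using this

lemma sNormSq_nonneg (f : SlicePoint n p → ℝ) : 0 ≤ sNormSq f :=
  sExp_nonneg fun x => mul_self_nonneg _

lemma sNormSq_zero : sNormSq (0 : SlicePoint n p → ℝ) = 0 := sInner_zero_left _

lemma sNormSq_smul (c : ℝ) (f : SlicePoint n p → ℝ) : sNormSq (c • f) = c ^ 2 * sNormSq f := by
  rw [sNormSq, sInner_smul_left, sInner_smul_right, sNormSq]; ring

lemma sNormSq_neg (f : SlicePoint n p → ℝ) : sNormSq (-f) = sNormSq f := by
  have := sNormSq_smul (-1) f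
  simpa using this

lemma sNormSq_add (f g : SlicePoint n p → ℝ) :
    sNormSq (f + g) = sNormSq f + 2 * sInner f g + sNormSq g := by
  simp only [sNormSq, sInner_add_left, sInner_add_right, sInner_comm g f]; ring

lemma sNormSq_sub (f g : SlicePoint n p → ℝ) :
    sNormSq (f - g) = sNormSq f - 2 * sInner f g + sNormSq g := by
  simp only [sNormSq, sInner_sub_left, sInner_sub_right, sInner_comm g f]; ring

lemma sNormSq_add_le (f g : SlicePoint n p → ℝ) :
    sNormSq (f + g) ≤ 2 * sNormSq f + 2 * sNormSq g := by
  have h1 := sNormSq_nonneg (f - g)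
  rw [sNormSq_sub] at h1
  rw [sNormSq_add]; linarith

lemma sNormSq_sub_le (f g : SlicePoint n p → ℝ) :
    sNormSq (f - g) ≤ 2 * sNormSq f + 2 * sNormSq g := by
  have h1 := sNormSq_nonneg (f + g)
  rw [sNormSq_add] at h1
  rw [sNormSq_sub]; linarith

lemma sNormSq_Up (π : Equiv.Perm (Fin n)) (f : SlicePoint n p → ℝ) : sNormSq (Up π f) = sNormSq f :=
  sExp_Up π (fun x => f x * f x)

lemma sInner_Up (π : Equiv.Perm (Fin n)) (f g : SlicePoint n p → ℝ) :
    sInner (Up π f) (Up π g) = sInner f g := sExp_Up π (fun x => f x * g x)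

lemma sInner_Up_left (π : Equiv.Perm (Fin n)) (f g : SlicePoint n p → ℝ) :
    sInner (Up π f) g = sInner f (Up π⁻¹ g) := by
  rw [← sInner_Up π f, Up_Up]; simp

lemma sInner_cs (f g : SlicePoint n p → ℝ) : sInner f g ^ 2 ≤ sNormSq f * sNormSq g := by
  simp only [sNormSq, sInner, sExp]
  rw [div_pow, div_mul_div_comm, ← sq ((Fintype.card _ : ℝ))]
  apply div_le_div_of_nonneg_right _ (by positivity)
  have := Finset.sum_mul_sq_le_sq_mul_sq Finset.univ f g
  simpa [sq] using this

lemma Up_add (π : Equiv.Perm (Fin n)) (f g : SlicePoint n p → ℝ) : Up π (f + g) = Up π f + Up π g := rfl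
lemma Up_sub (π : Equiv.Perm (Fin n)) (f g : SlicePoint n p → ℝ) : Up π (f - g) = Up π f - Up π g := rfl
lemma Up_smul (π : Equiv.Perm (Fin n)) (c : ℝ) (f : SlicePoint n p → ℝ) : Up π (c • f) = c • Up π f := rfl

def UpL (π : Equiv.Perm (Fin n)) : (SlicePoint n p → ℝ) →ₗ[ℝ] (SlicePoint n p → ℝ) where
  toFun := Up π
  map_add' _ _ := rfl
  map_smul' _ _ := rfl

lemma coordR_perm (π : Equiv.Perm (Fin n)) (x : SlicePoint n p) (i : Fin n) :
    coordR (permPt π x) i = coordR x (π.symm i) := rfl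

lemma andT_perm (π : Equiv.Perm (Fin n)) (T : Finset (Fin n)) :
    Up π (andT T : SlicePoint n p → ℝ) = andT (T.map π.symm.toEmbedding) := by
  funext x
  simp [Up, andT, coordR_perm]

lemma degLE_Up {k : ℕ} (π : Equiv.Perm (Fin n)) {f : SlicePoint n p → ℝ} (hf : f ∈ degLE n p k) :
    Up π f ∈ degLE n p k := by
  have : degLE n p k ≤ (degLE n p k).comap (UpL π) := by
    apply Submodule.span_le.2
    rintro g ⟨T, hT, rfl⟩
    refine Submodule.subset_span ⟨T.map π.symm.toEmbedding, by simpa using hT, andT_perm π T⟩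
  exact this hf

lemma degLT_Up {k : ℕ} (π : Equiv.Perm (Fin n)) {f : SlicePoint n p → ℝ} (hf : f ∈ degLT n p k) :
    Up π f ∈ degLT n p k := by
  have : degLT n p k ≤ (degLT n p k).comap (UpL π) := by
    apply Submodule.span_le.2
    rintro g ⟨T, hT, rfl⟩
    refine Submodule.subset_span ⟨T.map π.symm.toEmbedding, by simpa using hT, andT_perm π T⟩
  exact this hf

lemma degLT_succ (k : ℕ) : degLT n p (k + 1) = degLE n p k := by
  simp [degLT, degLE, Nat.lt_succ_iff]

lemma degLT_zero : degLT n p 0 = ⊥ := by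
  simp [degLT]

lemma degLE_mono {k l : ℕ} (h : k ≤ l) : degLE n p k ≤ degLE n p l := by
  apply Submodule.span_mono
  rintro g ⟨T, hT, rfl⟩
  exact ⟨T, hT.trans h, rfl⟩

lemma degLT_le (k : ℕ) : degLT n p k ≤ degLE n p k := by
  apply Submodule.span_mono
  rintro g ⟨T, hT, rfl⟩
  exact ⟨T, hT.le, rfl⟩

lemma exists_proj (W : Submodule ℝ (SlicePoint n p → ℝ)) (f : SlicePoint n p → ℝ) :
    ∃ w ∈ W, ∀ g ∈ W, sInner (f - w) g = 0 := by
  let e := (WithLp.linearEquiv 2 ℝ (SlicePoint n p → ℝ))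
  let W' : Submodule ℝ (EuclideanSpace ℝ (SlicePoint n p)) := W.comap e.toLinearMap
  let w := W'.starProjection (e.symm f)
  have hw : w ∈ W' := by exact Submodule.starProjection_apply_mem _ _
  refine ⟨e w, hw, fun g hg => ?_⟩
  have h2 := W'.starProjection_inner_eq_zero (e.symm f) (e.symm g) (by simpa [W'] using hg)
  simp only [sInner, sExp]
  rw [div_eq_zero_iff]; left
  rw [PiLp.inner_apply] at h2
  rw [← h2]
  refine Finset.sum_congr rfl fun x _ => ?_
  simp [e, w]
  ring

/-- The colour lemma. -/
lemma color {C : Type*} (κ : Fin n → C) (F : SlicePoint n p → ℝ)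
    (hF : ∀ i j, κ i = κ j → ∀ x, F (permPt (Equiv.swap i j) x) = F x) :
    ∀ (d : ℕ) (x x' : SlicePoint n p), (univ.filter fun i => x.1 i ≠ x'.1 i).card ≤ d →
      (∀ c, (univ.filter fun i => κ i = c ∧ x.1 i = true).card =
        (univ.filter fun i => κ i = c ∧ x'.1 i = true).card) → F x = F x' := by
  intro d
  induction d with
  | zero =>
    intro x x' h _
    have : x = x' := by
      apply slice_ext
      intro i
      by_contra hne
      have hm : i ∈ univ.filter fun i => x.1 i ≠ x'.1 i := by simp [hne]
      rw [Finset.card_eq_zero.1 (Nat.le_zero.1 h)] at hm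
      simp at hm
    rw [this]
  | succ d ih =>
    intro x x' h hc
    by_cases hx : x = x'
    · rw [hx]
    have hex : ∃ i j, κ i = κ j ∧ x.1 i = true ∧ x'.1 i = false ∧ x.1 j = false ∧ x'.1 j = true := by
      obtain ⟨i, hi⟩ : ∃ i, x.1 i ≠ x'.1 i := by
        by_contra hh
        push Not at hh
        exact hx (slice_ext hh)
      have key : ∀ (y y' : SlicePoint n p), (∀ c, (univ.filter fun i => κ i = c ∧ y.1 i = true).card =
        (univ.filter fun i => κ i = c ∧ y'.1 i = true).card) → ∀ i, y.1 i = true → y'.1 i = false →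
          ∃ j, κ i = κ j ∧ y.1 j = false ∧ y'.1 j = true := by
        intro y y' hc i h1 h2
        by_contra hno
        push Not at hno
        have hss : (univ.filter fun j => κ j = κ i ∧ y'.1 j = true) ⊆
            (univ.filter fun j => κ j = κ i ∧ y.1 j = true) := by
          intro j hj
          simp only [mem_filter, mem_univ, true_and] at hj ⊢
          refine ⟨hj.1, ?_⟩
          by_contra hf
          exact hno j hj.1.symm (by simpa using hf) hj.2
        have := Finset.eq_of_subset_of_card_le hss (hc (κ i)).le
        have hi : i ∈ (univ.filter fun j => κ j = κ i ∧ y.1 j = true) := by simp [h1]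
        rw [← this] at hi
        simp [h2] at hi
      cases h1 : x.1 i with
      | true =>
        have h2 : x'.1 i = false := by
          rw [h1] at hi; simpa using hi.symm
        obtain ⟨j, hj⟩ := key x x' hc i h1 h2
        exact ⟨i, j, hj.1, h1, h2, hj.2⟩
      | false =>
        have h2 : x'.1 i = true := by
          rw [h1] at hi; simpa using hi.symm
        obtain ⟨j, hj⟩ := key x' x (fun c => (hc c).symm) i h2 h1
        exact ⟨j, i, hj.1.symm, hj.2.2, hj.2.1, h1, h2⟩
    obtain ⟨i, j, hκ, hxi, hx'i, hxj, hx'j⟩ := hex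
    rw [← hF i j hκ x]
    have hij : i ≠ j := by rintro rfl; simp [hxi] at hxj
    apply ih
    · have hss : (univ.filter fun a => (permPt (Equiv.swap i j) x).1 a ≠ x'.1 a) ⊆
        (univ.filter fun a => x.1 a ≠ x'.1 a).erase i := by
        intro a ha
        simp only [mem_filter, mem_univ, true_and, mem_erase] at ha ⊢
        simp only [permPt_val, Equiv.symm_swap] at ha
        by_cases hai : a = i
        · subst hai; simp [hxj, hx'i] at ha
        by_cases haj : a = j
        · subst haj; simp [hxi, hx'j] at ha
        rw [Equiv.swap_apply_of_ne_of_ne hai haj] at ha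
        exact ⟨hai, ha⟩
      have := Finset.card_le_card hss
      rw [Finset.card_erase_of_mem (by simp [hxi, hx'i])] at this
      omega
    · intro c
      rw [← hc c]
      apply Finset.card_bij (fun a _ => Equiv.swap i j a)
      · intro a ha
        simp only [mem_filter, mem_univ, true_and] at ha ⊢
        simp only [permPt_val, Equiv.symm_swap] at ha
        refine ⟨?_, ha.2⟩
        rw [← ha.1]
        rcases eq_or_ne a i with rfl | h1
        · simp [hκ]
        rcases eq_or_ne a j with rfl | h2
        · simp [hκ]
        rw [Equiv.swap_apply_of_ne_of_ne h1 h2]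
      · intro a _ b _ hab
        exact (Equiv.swap i j).injective hab
      · intro b hb
        refine ⟨Equiv.swap i j b, ?_, by simp⟩
        simp only [mem_filter, mem_univ, true_and] at hb ⊢
        simp only [permPt_val, Equiv.symm_swap, Equiv.swap_apply_self]
        refine ⟨?_, hb.2⟩
        rw [← hb.1]
        rcases eq_or_ne b i with rfl | h1
        · simp [hκ]
        rcases eq_or_ne b j with rfl | h2
        · simp [hκ]
        rw [Equiv.swap_apply_of_ne_of_ne h1 h2]

lemma color' {C : Type*} (κ : Fin n → C) (F : SlicePoint n p → ℝ)
    (hF : ∀ i j, κ i = κ j → ∀ x, F (permPt (Equiv.swap i j) x) = F x) (x x' : SlicePoint n p)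
    (h : ∀ c, (univ.filter fun i => κ i = c ∧ x.1 i = true).card =
        (univ.filter fun i => κ i = c ∧ x'.1 i = true).card) : F x = F x' :=
  color κ F hF _ x x' le_rfl h

end SliceBasics

section Ops
variable {n : ℕ} {p : ℝ}

noncomputable def ind (y : Fin n → Bool) (x : SlicePoint n p) : ℝ :=
  if ∀ i, y i = true → x.1 i = true then 1 else 0

noncomputable def cnt (n : ℕ) (p : ℝ) (y : Fin n → Bool) : ℝ := ∑ x : SlicePoint n p, ind y x

noncomputable def Jk (q : ℝ) (x : SlicePoint n p) (y : Fin n → Bool) : ℝ :=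
  cw q y * ind y x / cnt n p y

noncomputable def opT (f : SlicePoint n p → ℝ) (y : Fin n → Bool) : ℝ :=
  ∑ x, ind y x * f x / cnt n p y

noncomputable def opTs (q : ℝ) (g : (Fin n → Bool) → ℝ) (x : SlicePoint n p) : ℝ :=
  (Fintype.card (SlicePoint n p) : ℝ) * ∑ y, Jk q x y * g y

noncomputable def opS (q : ℝ) (f : SlicePoint n p → ℝ) : (Fin n → Bool) → ℝ := nz q q (opT f)

noncomputable def opR (q : ℝ) (f : SlicePoint n p → ℝ) : SlicePoint n p → ℝ :=
  opTs q (nz q q (opS q f))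

lemma ind_nonneg (y : Fin n → Bool) (x : SlicePoint n p) : 0 ≤ ind y x := by
  unfold ind; split_ifs <;> norm_num

lemma cnt_nonneg (y : Fin n → Bool) : 0 ≤ cnt n p y := Finset.sum_nonneg fun x _ => ind_nonneg y x

lemma Jk_nonneg {q : ℝ} (h0 : 0 ≤ q) (h1 : q ≤ 1) (x : SlicePoint n p) (y : Fin n → Bool) :
    0 ≤ Jk q x y :=
  div_nonneg (mul_nonneg (cw_nonneg h0 h1 y) (ind_nonneg y x)) (cnt_nonneg y)

lemma sum_Jk_le {q : ℝ} (h0 : 0 ≤ q) (h1 : q ≤ 1) (y : Fin n → Bool) :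
    ∑ x : SlicePoint n p, Jk q x y ≤ cw q y := by
  simp only [Jk]
  rw [← Finset.sum_div, ← Finset.mul_sum]
  change cw q y * cnt n p y / cnt n p y ≤ cw q y
  rcases eq_or_ne (cnt n p y) 0 with h | h
  · simp [h, cw_nonneg h0 h1 y]
  · rw [mul_div_assoc, div_self h, mul_one]

def cPermE (π : Equiv.Perm (Fin n)) : (Fin n → Bool) ≃ (Fin n → Bool) where
  toFun := cPerm π
  invFun := cPerm π⁻¹
  left_inv x := by funext i; exact congrArg x (π.symm_apply_apply i)
  right_inv x := by funext i; exact congrArg x (π.apply_symm_apply i)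

lemma cw_perm (q : ℝ) (π : Equiv.Perm (Fin n)) (y : Fin n → Bool) : cw q (cPerm π y) = cw q y := by
  unfold cw cPerm
  exact Equiv.prod_comp π.symm (fun i => bw q (y i))

lemma kapv_perm (q r : ℝ) (π : Equiv.Perm (Fin n)) (y y' : Fin n → Bool) :
    kapv q r (cPerm π y) (cPerm π y') = kapv q r y y' := by
  unfold kapv cPerm
  exact Equiv.prod_comp π.symm (fun i => kap q r (y i) (y' i))

lemma ind_perm (π : Equiv.Perm (Fin n)) (y : Fin n → Bool) (x : SlicePoint n p) :
    ind (cPerm π y) (permPt π x) = ind y x := by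
  unfold ind cPerm
  have : (∀ i, y (π.symm i) = true → (permPt π x).1 i = true) ↔ ∀ i, y i = true → x.1 i = true := by
    constructor
    · intro h i hi
      have := h (π i) (by simpa using hi)
      simpa using this
    · intro h i hi
      exact h _ hi
  simp only [this]

lemma cnt_perm (π : Equiv.Perm (Fin n)) (y : Fin n → Bool) : cnt n p (cPerm π y) = cnt n p y := by
  unfold cnt
  rw [← (permE π).sum_comp]
  exact Finset.sum_congr rfl fun x _ => ind_perm π y x

lemma Jk_perm (q : ℝ) (π : Equiv.Perm (Fin n)) (y : Fin n → Bool) (x : SlicePoint n p) :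
    Jk q (permPt π x) (cPerm π y) = Jk q x y := by
  simp [Jk, cw_perm, cnt_perm, ind_perm]

lemma card_ones (x x' : SlicePoint n p) :
    (univ.filter (fun i => x.1 i = true)).card = (univ.filter (fun i => x'.1 i = true)).card := by
  have := x.2.trans x'.2.symm
  exact_mod_cast this

lemma sum_Jk_y {q : ℝ} (h0 : 0 ≤ q) (h1 : q ≤ 1) (x : SlicePoint n p) :
    (Fintype.card (SlicePoint n p) : ℝ) * ∑ y, Jk q x y ≤ 1 := by
  have hconst : ∀ x' : SlicePoint n p, ∑ y, Jk q x' y = ∑ y, Jk q x y := by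
    intro x'
    refine color' (fun _ => ()) (fun x => ∑ y, Jk q x y) ?_ x' x ?_
    · intro i j _ x
      rw [← (cPermE (Equiv.swap i j)).sum_comp]
      exact Finset.sum_congr rfl fun y _ => Jk_perm q _ y x
    · intro c
      simpa using card_ones x' x
  have h : ∑ x' : SlicePoint n p, ∑ y, Jk q x' y ≤ 1 := by
    rw [Finset.sum_comm, ← cw_sum q (n := n)]
    exact Finset.sum_le_sum fun y _ => sum_Jk_le h0 h1 y
  simpa [hconst] using h

lemma sInner_opTs (q : ℝ) (f : SlicePoint n p → ℝ) (g : (Fin n → Bool) → ℝ) :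
    sInner f (opTs q g) = cubeE q (fun y => opT f y * g y) := by
  rcases isEmpty_or_nonempty (SlicePoint n p) with hE | hE
  · simp [sInner, sExp, cubeE, opT]
  have hN : (Fintype.card (SlicePoint n p) : ℝ) ≠ 0 := by
    have := Fintype.card_pos (α := SlicePoint n p)
    positivity
  simp only [sInner, sExp, opTs, cubeE, opT]
  rw [div_eq_iff hN]
  simp only [Finset.sum_mul, Finset.mul_sum]
  rw [Finset.sum_comm]
  refine Finset.sum_congr rfl fun y _ => Finset.sum_congr rfl fun x _ => ?_
  simp only [Jk]; ring

lemma sInner_opR (q : ℝ) (f g : SlicePoint n p → ℝ) :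
    sInner f (opR q g) = cubeE q (fun y => opS q f y * opS q g y) := by
  rw [opR, sInner_opTs, nz_selfadj]; rfl

lemma opR_selfadj (q : ℝ) (f g : SlicePoint n p → ℝ) :
    sInner f (opR q g) = sInner (opR q f) g := by
  rw [sInner_opR, sInner_comm (opR q f), sInner_opR]; simp [mul_comm]

lemma opR_nonneg {q : ℝ} (h0 : 0 ≤ q) (h1 : q ≤ 1) (f : SlicePoint n p → ℝ) :
    0 ≤ sInner f (opR q f) := by
  rw [sInner_opR]
  exact cubeE_nonneg h0 h1 fun y => mul_self_nonneg _

lemma opTs_sq {q : ℝ} (h0 : 0 ≤ q) (h1 : q ≤ 1) (g : (Fin n → Bool) → ℝ) (x : SlicePoint n p) :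
    (opTs q g x) ^ 2 ≤ opTs q (fun y => g y ^ 2) x := by
  set N := (Fintype.card (SlicePoint n p) : ℝ) with hN
  have hN0 : 0 ≤ N := Nat.cast_nonneg _
  have hw : ∀ y, 0 ≤ N * Jk q x y := fun y => mul_nonneg hN0 (Jk_nonneg h0 h1 x y)
  have cs := Finset.sum_mul_sq_le_sq_mul_sq Finset.univ (fun y => √(N * Jk q x y))
    (fun y => √(N * Jk q x y) * g y)
  have e1 : ∑ y, √(N * Jk q x y) * (√(N * Jk q x y) * g y) = opTs q g x := by
    simp only [opTs, Finset.mul_sum]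
    refine Finset.sum_congr rfl fun y _ => ?_
    rw [← mul_assoc, Real.mul_self_sqrt (hw y), mul_assoc]
  have e2 : ∑ y, (√(N * Jk q x y)) ^ 2 = N * ∑ y, Jk q x y := by
    rw [Finset.mul_sum]
    exact Finset.sum_congr rfl fun y _ => Real.sq_sqrt (hw y)
  have e3 : ∑ y, (√(N * Jk q x y) * g y) ^ 2 = opTs q (fun y => g y ^ 2) x := by
    simp only [opTs, Finset.mul_sum]
    refine Finset.sum_congr rfl fun y _ => ?_
    rw [mul_pow, Real.sq_sqrt (hw y), mul_assoc]
  rw [e1, e2, e3] at cs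
  have h3 : 0 ≤ opTs q (fun y => g y ^ 2) x := by rw [← e3]; positivity
  exact cs.trans (mul_le_of_le_one_left h3 (sum_Jk_y h0 h1 x))

lemma sExp_opTs_le {q : ℝ} (h0 : 0 ≤ q) (h1 : q ≤ 1) (g : (Fin n → Bool) → ℝ) (hg : ∀ y, 0 ≤ g y) :
    sExp (opTs q g : SlicePoint n p → ℝ) ≤ cubeE q g := by
  rcases isEmpty_or_nonempty (SlicePoint n p) with hE | hE
  · simp [sExp]
    exact cubeE_nonneg h0 h1 hg
  have hN : (Fintype.card (SlicePoint n p) : ℝ) ≠ 0 := by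
    have := Fintype.card_pos (α := SlicePoint n p)
    positivity
  simp only [sExp, opTs]
  rw [← Finset.mul_sum, mul_div_cancel_left₀ _ hN, Finset.sum_comm]
  unfold cubeE
  refine Finset.sum_le_sum fun y _ => ?_
  rw [← Finset.sum_mul]
  exact mul_le_mul_of_nonneg_right (sum_Jk_le h0 h1 y) (hg y)

lemma opTs_mono {q : ℝ} (h0 : 0 ≤ q) (h1 : q ≤ 1) {g : (Fin n → Bool) → ℝ} (hg : ∀ y, 0 ≤ g y)
    (x : SlicePoint n p) : 0 ≤ opTs q g x :=
  mul_nonneg (Nat.cast_nonneg _) (Finset.sum_nonneg fun y _ => mul_nonneg (Jk_nonneg h0 h1 x y) (hg y))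

lemma opR_four {q : ℝ} (h0 : 0 ≤ q) (h1 : q ≤ 1 / 2) (f : SlicePoint n p → ℝ) :
    sExp (fun x => opR q f x ^ 4) ≤ (sInner f (opR q f)) ^ 2 := by
  have h1' : q ≤ 1 := by linarith
  rw [sInner_opR]
  have := hyper h0 h1 (opS q f)
  simp only [← sq]
  refine le_trans ?_ this
  refine le_trans ?_ (sExp_opTs_le (p := p) h0 h1' (fun y => nz q q (opS q f) y ^ 4)
    (fun y => Even.pow_nonneg (by decide) _))
  refine sExp_mono fun x => ?_
  set g := nz q q (opS q f)
  have a1 := opTs_sq h0 h1' g x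
  have a2 := opTs_sq h0 h1' (fun y => g y ^ 2) x
  have a0 := sq_nonneg (opTs q g x)
  have e : (fun y => (g y ^ 2) ^ 2) = fun y => g y ^ 4 := by funext y; ring
  rw [e] at a2
  refine le_trans ?_ a2
  calc opR q f x ^ 4 = ((opTs q g x) ^ 2) ^ 2 := by unfold opR; ring
    _ ≤ _ := pow_le_pow_left₀ a0 a1 2

lemma opT_lin (s t : ℝ) (f g : SlicePoint n p → ℝ) :
    opT (s • f + t • g) = fun y => s * opT f y + t * opT g y := by
  funext y
  simp only [opT, Finset.mul_sum, ← Finset.sum_add_distrib]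
  refine Finset.sum_congr rfl fun x _ => ?_
  simp only [Pi.add_apply, Pi.smul_apply, smul_eq_mul]; ring

lemma opR_lin (q s t : ℝ) (f g : SlicePoint n p → ℝ) :
    opR q (s • f + t • g) = s • opR q f + t • opR q g := by
  have h1 : opS q (s • f + t • g) = fun y => s * opS q f y + t * opS q g y := by
    funext y
    simp only [opS, opT_lin, nz_add]
  have h2 : nz q q (opS q (s • f + t • g)) = fun y => s * nz q q (opS q f) y + t * nz q q (opS q g) y := by
    funext y
    simp only [h1, nz_add]
  funext x
  simp only [opR, h2, opTs, Pi.add_apply, Pi.smul_apply, smul_eq_mul, Finset.mul_sum, ← Finset.sum_add_distrib]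
  refine Finset.sum_congr rfl fun y _ => ?_
  ring

noncomputable def RL (q : ℝ) : (SlicePoint n p → ℝ) →ₗ[ℝ] (SlicePoint n p → ℝ) where
  toFun := opR q
  map_add' f g := by simpa using opR_lin q 1 1 f g
  map_smul' c f := by simpa using opR_lin q c 0 f 0

lemma opR_Up (q : ℝ) (π : Equiv.Perm (Fin n)) (f : SlicePoint n p → ℝ) :
    opR q (Up π f) = Up π (opR q f) := by
  have hT : ∀ y, opT (Up π f) y = opT f (cPerm π y) := by
    intro y
    simp only [opT]
    rw [← (permE π).sum_comp (fun x => ind (cPerm π y) x * f x / cnt n p (cPerm π y))]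
    refine Finset.sum_congr rfl fun x _ => ?_
    change _ = ind (cPerm π y) (permPt π x) * f (permPt π x) / cnt n p (cPerm π y)
    rw [ind_perm, cnt_perm]; rfl
  have hnz : ∀ (g g' : (Fin n → Bool) → ℝ), (∀ y, g y = g' (cPerm π y)) →
      ∀ y, nz q q g y = nz q q g' (cPerm π y) := by
    intro g g' h y
    simp only [nz]
    rw [← (cPermE π).sum_comp (fun y' => kapv q q (cPerm π y) y' * g' y')]
    refine Finset.sum_congr rfl fun y' _ => ?_
    change _ = kapv q q (cPerm π y) (cPerm π y') * g' (cPerm π y')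
    rw [kapv_perm, h]
  have h2 := hnz _ _ (hnz _ _ hT)
  funext x
  simp only [opR, Up, opTs]
  congr 1
  rw [← (cPermE π).sum_comp (fun y => Jk q (permPt π x) y * nz q q (opS q f) y)]
  refine Finset.sum_congr rfl fun y' _ => ?_
  change _ = Jk q (permPt π x) (cPerm π y') * nz q q (opS q f) (cPerm π y')
  rw [Jk_perm]
  congr 1
  exact h2 y'

lemma exists_binom (d : ℕ) (φ : ℕ → ℝ) :
    ∃ β : ℕ → ℝ, ∀ j ≤ d, φ j = ∑ i ∈ range (d + 1), β i * (j.choose i : ℝ) := by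
  induction d with
  | zero => exact ⟨fun _ => φ 0, by intro j hj; obtain rfl : j = 0 := by omega
                                    simp⟩
  | succ d ih =>
    obtain ⟨β, hβ⟩ := ih
    set s := ∑ i ∈ range (d + 1), β i * ((d + 1).choose i : ℝ)
    refine ⟨fun i => if i = d + 1 then φ (d + 1) - s else β i, ?_⟩
    intro j hj
    rw [Finset.sum_range_succ]
    have : ∑ i ∈ range (d + 1), (if i = d + 1 then φ (d + 1) - s else β i) * (j.choose i : ℝ)
        = ∑ i ∈ range (d + 1), β i * (j.choose i : ℝ) := by
      refine Finset.sum_congr rfl fun i hi => ?_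
      rw [if_neg]
      have := Finset.mem_range.1 hi
      omega
    rw [this]
    rcases Nat.lt_or_ge j (d + 1) with h | h
    · rw [Nat.choose_eq_zero_of_lt h]
      rw [hβ j (by omega)]; simp
    · obtain rfl : j = d + 1 := by omega
      simp [s]

lemma andT_eq (T : Finset (Fin n)) (x : SlicePoint n p) :
    andT T x = if ∀ i ∈ T, x.1 i = true then 1 else 0 := by
  unfold andT coordR
  split_ifs with h
  · exact Finset.prod_eq_one fun i hi => by simp [h i hi]
  · push Not at h
    obtain ⟨i, hi, h⟩ := h
    exact Finset.prod_eq_zero hi (by simp [h])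

lemma sum_andT (T : Finset (Fin n)) (i : ℕ) (x : SlicePoint n p) :
    ∑ T' ∈ T.powersetCard i, andT T' x = ((T.filter fun a => x.1 a = true).card.choose i : ℝ) := by
  simp only [andT_eq]
  rw [Finset.sum_boole, ← Finset.card_powersetCard]
  congr 2
  ext T'
  simp only [mem_filter, mem_powersetCard, Finset.subset_iff]
  constructor
  · rintro ⟨⟨h1, h2⟩, h3⟩
    exact ⟨fun a ha => ⟨h1 ha, h3 a ha⟩, h2⟩
  · rintro ⟨h1, h2⟩
    exact ⟨⟨fun a ha => (h1 ha).1, h2⟩, fun a ha => (h1 ha).2⟩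

lemma opR_andT (q : ℝ) (T : Finset (Fin n)) :
    ∃ lam : ℝ, opR q (andT T : SlicePoint n p → ℝ) - lam • andT T ∈ degLT n p T.card := by
  have hinv : ∀ x x' : SlicePoint n p, (T.filter fun a => x.1 a = true).card =
      (T.filter fun a => x'.1 a = true).card → opR q (andT T) x = opR q (andT T) x' := by
    intro x x' h
    refine color' (fun i => (i ∈ T)) _ ?_ x x' ?_
    · intro i j hij x
      change Up (Equiv.swap i j) (opR q (andT T)) x = _
      rw [← opR_Up, andT_perm]
      congr 3
      ext a
      simp only [mem_map_equiv, Equiv.symm_swap]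
      rcases eq_or_ne a i with rfl | h1
      · simpa using hij.symm
      rcases eq_or_ne a j with rfl | h2
      · simpa using hij
      simp [Equiv.swap_apply_of_ne_of_ne h1 h2]
    · intro c
      have hx : ∀ y : SlicePoint n p, (univ.filter fun i => i ∈ T ∧ y.1 i = true) = T.filter fun a => y.1 a = true := by
        intro y; ext; simp
      by_cases hc : c
      · have e : ∀ i, ((i ∈ T) = c) = (i ∈ T) := by intro i; simp [hc]
        simp only [e, hx, h]
      · have e : ∀ i, ((i ∈ T) = c) = (i ∉ T) := by intro i; simp [hc]
        simp only [e]
        have hs : ∀ y : SlicePoint n p, (univ.filter fun i => i ∉ T ∧ y.1 i = true).card +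
            (T.filter fun a => y.1 a = true).card = (univ.filter fun i => y.1 i = true).card := by
          intro y
          rw [← Finset.card_union_of_disjoint]
          · congr 1; ext i; simp; tauto
          · rw [Finset.disjoint_left]; intro i; simp; tauto
        have h1 := hs x
        have h2 := hs x'
        have := card_ones x x'
        omega
  obtain ⟨φ, hφ⟩ : ∃ φ : ℕ → ℝ, ∀ x : SlicePoint n p, opR q (andT T) x =
      φ (T.filter fun a => x.1 a = true).card := by
    refine ⟨fun j => if h : ∃ x : SlicePoint n p, (T.filter fun a => x.1 a = true).card = j then
      opR q (andT T) h.choose else 0, fun x => ?_⟩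
    have h : ∃ x' : SlicePoint n p, (T.filter fun a => x'.1 a = true).card =
      (T.filter fun a => x.1 a = true).card := ⟨x, rfl⟩
    simp only
    rw [dif_pos h]
    exact hinv _ _ h.choose_spec.symm
  obtain ⟨β, hβ⟩ := exists_binom T.card φ
  refine ⟨β T.card, ?_⟩
  have : opR q (andT T : SlicePoint n p → ℝ) - β T.card • andT T =
      ∑ i ∈ range T.card, β i • ∑ T' ∈ T.powersetCard i, andT T' := by
    funext x
    simp only [Pi.sub_apply, Pi.smul_apply, Finset.sum_apply, smul_eq_mul, sum_andT]
    rw [hφ, hβ _ (Finset.card_filter_le _ _), Finset.sum_range_succ]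
    have := sum_andT T T.card x
    rw [Finset.powersetCard_self, Finset.sum_singleton] at this
    rw [this]; ring
  rw [this]
  refine Submodule.sum_mem _ fun i hi => Submodule.smul_mem _ _ (Submodule.sum_mem _ fun T' hT' => ?_)
  refine Submodule.subset_span ⟨T', ?_, rfl⟩
  rw [(Finset.mem_powersetCard.1 hT').2]
  exact Finset.mem_range.1 hi

lemma andT_mem_degLE {T : Finset (Fin n)} {k : ℕ} (h : T.card ≤ k) :
    (andT T : SlicePoint n p → ℝ) ∈ degLE n p k := Submodule.subset_span ⟨T, h, rfl⟩

lemma andT_mem_degLT {T : Finset (Fin n)} {k : ℕ} (h : T.card < k) :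
    (andT T : SlicePoint n p → ℝ) ∈ degLT n p k := Submodule.subset_span ⟨T, h, rfl⟩

lemma degLT_mono {k l : ℕ} (h : k ≤ l) : degLT n p k ≤ degLT n p l := by
  apply Submodule.span_mono
  rintro g ⟨T, hT, rfl⟩
  exact ⟨T, hT.trans_le h, rfl⟩

lemma opR_degLT (q : ℝ) {d : ℕ} {f : SlicePoint n p → ℝ} (hf : f ∈ degLT n p d) :
    opR q f ∈ degLT n p d := by
  have : degLT n p d ≤ (degLT n p d).comap (RL q) := by
    apply Submodule.span_le.2
    rintro g ⟨T, hT, rfl⟩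
    obtain ⟨lam, h⟩ := opR_andT (p := p) q T
    have h2 := Submodule.add_mem _ (degLT_mono hT.le h)
      (Submodule.smul_mem _ lam (andT_mem_degLT hT : (andT T : SlicePoint n p → ℝ) ∈ degLT n p d))
    rw [sub_add_cancel] at h2
    exact h2
  exact this hf

lemma opR_degLE (q : ℝ) {d : ℕ} {f : SlicePoint n p → ℝ} (hf : f ∈ degLE n p d) :
    opR q f ∈ degLE n p d := by
  rw [← degLT_succ] at hf ⊢
  exact opR_degLT q hf

lemma opR_eigen (n : ℕ) (p q : ℝ) (d : ℕ) : ∃ lam : ℝ, ∀ f ∈ degLE n p d,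
    opR q f - lam • f ∈ degLT n p d := by
  obtain ⟨lam, hlam⟩ : ∃ lam : ℝ, ∀ T : Finset (Fin n), T.card = d →
      opR q (andT T : SlicePoint n p → ℝ) - lam • andT T ∈ degLT n p d := by
    by_cases h : ∃ T0 : Finset (Fin n), T0.card = d
    · obtain ⟨T0, hT0⟩ := h
      obtain ⟨lam, hl⟩ := opR_andT (p := p) q T0
      refine ⟨lam, fun T hT => ?_⟩
      obtain ⟨π, hπ⟩ : ∃ π : Equiv.Perm (Fin n), T0.map π.toEmbedding = T := by
        have e : {i // i ∈ T0} ≃ {i // i ∈ T} := Finset.equivOfCardEq (hT0.trans hT.symm)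
        refine ⟨e.extendSubtype, Finset.eq_of_subset_of_card_le ?_ (by simp [hT, hT0])⟩
        intro i hi
        rw [Finset.mem_map] at hi
        obtain ⟨j, hj, rfl⟩ := hi
        exact e.extendSubtype_mem j hj
      have h2 := degLT_Up π⁻¹ hl
      rw [Up_sub, Up_smul, ← opR_Up, andT_perm] at h2
      rw [hT0] at h2
      have e : T0.map (Equiv.symm π⁻¹).toEmbedding = T := hπ
      rwa [e] at h2
    · exact ⟨0, fun T hT => absurd ⟨T, hT⟩ h⟩
  refine ⟨lam, fun f hf => ?_⟩
  have : degLE n p d ≤ (degLT n p d).comap (RL q - lam • LinearMap.id) := by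
    apply Submodule.span_le.2
    rintro g ⟨T, hT, rfl⟩
    rcases hT.eq_or_lt with h | h
    · exact hlam T h
    · have hm : (andT T : SlicePoint n p → ℝ) ∈ degLT n p d := andT_mem_degLT h
      exact Submodule.sub_mem _ (opR_degLT q hm) (Submodule.smul_mem _ lam hm)
  exact this hf

end Ops

section Psi
variable {n : ℕ} {p : ℝ}

def sPsi (L : List (Fin n × Fin n)) : SlicePoint n p → ℝ := fun x => cPsi L x.1

@[simp] lemma sPsi_nil : (sPsi [] : SlicePoint n p → ℝ) = 1 := by funext x; simp [sPsi, cPsi]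

lemma sPsi_cons (q : Fin n × Fin n) (L : List (Fin n × Fin n)) (x : SlicePoint n p) :
    sPsi (q :: L) x = (coordR x q.1 - coordR x q.2) * sPsi L x := by
  simp [sPsi, cPsi, cv, coordR]

lemma sPsi_perm {L L' : List (Fin n × Fin n)} (h : L.Perm L') :
    (sPsi L : SlicePoint n p → ℝ) = sPsi L' := by
  funext x
  exact (h.map _).prod_eq

lemma sPsi_Up (π : Equiv.Perm (Fin n)) (L : List (Fin n × Fin n)) :
    Up π (sPsi L : SlicePoint n p → ℝ) = sPsi (L.map fun q => (π.symm q.1, π.symm q.2)) := by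
  induction L with
  | nil => simp; rfl
  | cons q L ih =>
    funext x
    have := congrFun ih x
    simp only [Up] at this ⊢
    rw [sPsi_cons, List.map_cons, sPsi_cons, this]
    rfl

lemma coord_mul_mem {d : ℕ} (i : Fin n) {f : SlicePoint n p → ℝ} (hf : f ∈ degLE n p d) :
    (fun x => coordR x i * f x) ∈ degLE n p (d + 1) := by
  let M : (SlicePoint n p → ℝ) →ₗ[ℝ] (SlicePoint n p → ℝ) :=
    { toFun := fun f x => coordR x i * f x
      map_add' := fun f g => by funext x; simp [mul_add]
      map_smul' := fun c f => by funext x; simp; ring }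
  have : degLE n p d ≤ (degLE n p (d + 1)).comap M := by
    apply Submodule.span_le.2
    rintro g ⟨T, hT, rfl⟩
    have e : M (andT T) = andT (insert i T) := by
      funext x
      change coordR x i * andT T x = _
      by_cases hi : i ∈ T
      · rw [Finset.insert_eq_of_mem hi, andT_eq]
        split_ifs with h
        · simp [coordR, h i hi]
        · simp
      · simp [andT, Finset.prod_insert hi]
    change M (andT T) ∈ degLE n p (d + 1)
    rw [e]
    exact andT_mem_degLE ((Finset.card_insert_le _ _).trans (by omega))
  exact this hf

lemma sPsi_mem (L : List (Fin n × Fin n)) : (sPsi L : SlicePoint n p → ℝ) ∈ degLE n p L.length := by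
  induction L with
  | nil =>
    have : (sPsi [] : SlicePoint n p → ℝ) = andT ∅ := by funext x; simp [andT]
    rw [this]; exact andT_mem_degLE (by simp)
  | cons q L ih =>
    have : (sPsi (q :: L) : SlicePoint n p → ℝ) =
      (fun x => coordR x q.1 * sPsi L x) - (fun x => coordR x q.2 * sPsi L x) := by
      funext x; rw [sPsi_cons]; simp; ring
    rw [this]
    exact Submodule.sub_mem _ (coord_mul_mem _ ih) (coord_mul_mem _ ih)

lemma mem_ent {ι : Type*} {L : List (ι × ι)} {q : ι × ι} (h : q ∈ L) : q.1 ∈ ent L ∧ q.2 ∈ ent L := by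
  simp only [ent, List.mem_flatMap]
  exact ⟨⟨q, h, by simp⟩, ⟨q, h, by simp⟩⟩

lemma map_fix {π : Equiv.Perm (Fin n)} {L : List (Fin n × Fin n)} (h : ∀ i ∈ ent L, π i = i) :
    L.map (fun q => (π q.1, π q.2)) = L := by
  conv_rhs => rw [← List.map_id L]
  apply List.map_congr_left
  intro q hq
  have := mem_ent hq
  simp [h _ this.1, h _ this.2]

lemma sPsi_swap {L : List (Fin n × Fin n)} (hL : (ent L).Nodup) {q : Fin n × Fin n} (hq : q ∈ L) :
    Up (Equiv.swap q.1 q.2) (sPsi L : SlicePoint n p → ℝ) = - sPsi L := by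
  have hp := List.perm_cons_erase hq
  have hn := (ent_perm hp).nodup_iff.1 hL
  rw [sPsi_perm hp, sPsi_Up, List.map_cons, Equiv.symm_swap, map_fix]
  · funext x
    simp [sPsi_cons]; ring
  · intro i hi
    simp at hn
    apply Equiv.swap_apply_of_ne_of_ne
    · rintro rfl; exact hn.1.2 hi
    · rintro rfl; exact hn.2.1 hi

lemma exists_free {T : Finset (Fin n)} {L : List (Fin n × Fin n)} (hL : (ent L).Nodup)
    (h : T.card < L.length) : ∃ q ∈ L, q.1 ∉ T ∧ q.2 ∉ T := by
  induction L generalizing T with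
  | nil => simp at h
  | cons q L ih =>
    by_cases hq : q.1 ∉ T ∧ q.2 ∉ T
    · exact ⟨q, by simp, hq⟩
    simp only [ent_cons, List.nodup_cons, List.mem_cons, not_or] at hL
    have hc : ((T.erase q.1).erase q.2).card < L.length := by
      simp only [List.length_cons] at h
      by_cases h1 : q.1 ∈ T
      · have := Finset.card_erase_lt_of_mem h1
        have := Finset.card_erase_le (s := T.erase q.1) (a := q.2)
        omega
      · have h2 : q.2 ∈ T := by tauto
        have := Finset.card_erase_lt_of_mem h2
        rw [Finset.erase_right_comm]
        have := Finset.card_erase_le (s := T.erase q.2) (a := q.1)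
        omega
    obtain ⟨r, hr, h1, h2⟩ := ih hL.2.2 hc
    have hm := mem_ent hr
    refine ⟨r, by simp [hr], fun h => h1 ?_, fun h => h2 ?_⟩
    · refine mem_erase.2 ⟨?_, mem_erase.2 ⟨?_, h⟩⟩
      · intro e; exact hL.2.1 (e ▸ hm.1)
      · intro e; exact hL.1.2 (e ▸ hm.1)
    · refine mem_erase.2 ⟨?_, mem_erase.2 ⟨?_, h⟩⟩
      · intro e; exact hL.2.1 (e ▸ hm.2)
      · intro e; exact hL.1.2 (e ▸ hm.2)

lemma sPsi_orth {L : List (Fin n × Fin n)} (hL : (ent L).Nodup) {g : SlicePoint n p → ℝ}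
    (hg : g ∈ degLT n p L.length) : sInner (sPsi L) g = 0 := by
  induction hg using Submodule.span_induction with
  | mem g hg =>
    obtain ⟨T, hT, rfl⟩ := hg
    obtain ⟨q, hq, h1, h2⟩ := exists_free hL hT
    have h3 : Up (Equiv.swap q.1 q.2) (andT T : SlicePoint n p → ℝ) = andT T := by
      rw [andT_perm]
      congr 1
      ext a
      simp only [mem_map_equiv, Equiv.symm_swap]
      rcases eq_or_ne a q.1 with rfl | h3
      · simp [h1, h2]
      rcases eq_or_ne a q.2 with rfl | h4
      · simp [h1, h2]
      simp [Equiv.swap_apply_of_ne_of_ne h3 h4]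
    have := sInner_Up (Equiv.swap q.1 q.2) (sPsi L : SlicePoint n p → ℝ) (andT T)
    rw [sPsi_swap hL hq, h3, sInner_neg_left] at this
    linarith
  | zero => rw [sInner_comm]; simp
  | add f g _ _ h1 h2 => rw [sInner_add_right, h1, h2]; simp
  | smul c f _ h => rw [sInner_smul_right, h]; simp

lemma sExp_one_le : sExp (fun _ : SlicePoint n p => (1 : ℝ)) ≤ 1 := by
  simp only [sExp]; simp
  exact div_self_le_one _

lemma sPsi_norm_le (L : List (Fin n × Fin n)) : sNormSq (sPsi L : SlicePoint n p → ℝ) ≤ 1 := by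
  refine le_trans (sExp_mono fun x => ?_) sExp_one_le
  have := cPsi_sq_le L x.1
  simp only [sPsi]
  nlinarith

lemma ind_psi_nonneg {y : Fin n → Bool} {x : SlicePoint n p} (h : ∀ i, y i = true → x.1 i = true)
    (L : List (Fin n × Fin n)) : 0 ≤ sPsi L x * cPsi L y := by
  induction L with
  | nil => simp [cPsi]
  | cons q L ih =>
    rw [sPsi_cons]
    have e : cPsi (q :: L) y = (cv y q.1 - cv y q.2) * cPsi L y := by simp [cPsi]
    rw [e]
    have : 0 ≤ (coordR x q.1 - coordR x q.2) * (cv y q.1 - cv y q.2) := by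
      unfold coordR cv
      have h1 := h q.1
      have h2 := h q.2
      cases hy : y q.1 <;> cases hy' : y q.2 <;> cases hx : x.1 q.1 <;> cases hx' : x.1 q.2 <;> simp_all
    calc (0:ℝ) ≤ ((coordR x q.1 - coordR x q.2) * (cv y q.1 - cv y q.2)) * (sPsi L x * cPsi L y) :=
          mul_nonneg this ih
      _ = _ := by ring

lemma cPsi_one {y : Fin n → Bool} {L : List (Fin n × Fin n)}
    (h : ∀ q ∈ L, y q.1 = true ∧ y q.2 = false) : cPsi L y = 1 := by
  induction L with
  | nil => simp [cPsi]
  | cons q L ih =>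
    have e : cPsi (q :: L) y = (cv y q.1 - cv y q.2) * cPsi L y := by simp [cPsi]
    rw [e, ih fun r hr => h r (by simp [hr])]
    have := h q (by simp)
    simp [cv, this]

lemma card_slice_ones {m : ℕ} (hm : (m : ℝ) = p * n) (x : SlicePoint n p) :
    (univ.filter (fun i => x.1 i = true)).card = m := by
  have := x.2.trans hm.symm
  exact_mod_cast this

lemma slice_count {m : ℕ} (hm : (m : ℝ) = p * n) (Y B : Finset (Fin n)) (hd : Disjoint Y B)
    (hY : Y.card ≤ m) :
    (univ.filter fun x : SlicePoint n p => (∀ i ∈ Y, x.1 i = true) ∧ ∀ i ∈ B, x.1 i = false).card =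
      (n - Y.card - B.card).choose (m - Y.card) := by
  have hc : (univ \ (Y ∪ B)).card = n - Y.card - B.card := by
    rw [Finset.card_sdiff_of_subset (subset_univ _), Finset.card_union_of_disjoint hd]
    simp; omega
  rw [← hc, ← Finset.card_powersetCard]
  refine Finset.card_bij (fun x _ => (univ.filter fun i => x.1 i = true) \ Y) ?_ ?_ ?_
  · intro x hx
    simp only [mem_filter, mem_univ, true_and] at hx
    rw [mem_powersetCard]
    constructor
    · intro i hi
      simp only [mem_sdiff, mem_filter, mem_univ, true_and, mem_union, not_or] at hi ⊢
      refine ⟨hi.2, fun h => ?_⟩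
      have := hx.2 i h
      simp [hi.1] at this
    · rw [Finset.card_sdiff_of_subset, card_slice_ones hm x]
      intro i hi
      simp [hx.1 i hi]
  · intro x hx x' hx' h
    simp only [mem_filter, mem_univ, true_and] at hx hx'
    apply slice_ext
    intro i
    by_cases hi : i ∈ Y
    · rw [hx.1 i hi, hx'.1 i hi]
    · have := congrArg (fun S => i ∈ S) h
      simp [hi] at this
      cases h1 : x.1 i <;> cases h2 : x'.1 i <;> simp_all
  · intro S hS
    rw [mem_powersetCard] at hS
    have hdis : Disjoint Y S := by
      rw [Finset.disjoint_left]
      intro i hi hi'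
      have := hS.1 hi'
      simp [hi] at this
    have hcard : (univ.filter fun i => decide (i ∈ Y ∪ S) = true).card = m := by
      have : (univ.filter fun i => decide (i ∈ Y ∪ S) = true) = Y ∪ S := by ext; simp
      rw [this, Finset.card_union_of_disjoint hdis, hS.2]; omega
    refine ⟨⟨fun i => decide (i ∈ Y ∪ S), ?_⟩, ?_, ?_⟩
    · rw [← hm]
      exact_mod_cast hcard
    · simp only [mem_filter, mem_univ, true_and]
      refine ⟨fun i hi => by simp [hi], fun i hi => ?_⟩
      simp only [decide_eq_false_iff_not, mem_union, not_or]
      refine ⟨fun h => Finset.disjoint_left.1 hd h hi, fun h => ?_⟩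
      have := hS.1 h
      simp [hi] at this
    · ext i
      simp only [mem_sdiff, mem_filter, mem_univ, true_and, decide_eq_true_eq, mem_union]
      constructor
      · rintro ⟨h | h, h2⟩
        · exact absurd h h2
        · exact h
      · intro h
        exact ⟨Or.inr h, fun h2 => Finset.disjoint_left.1 hdis h2 h⟩

lemma choose_ratio (d N K : ℕ) (h : N ≤ 4 * (N - K - d)) (hd : d ≤ N) :
    N.choose K ≤ 4 ^ d * (N - d).choose K := by
  induction d with
  | zero => simp
  | succ d ih =>
    have h1 := ih (by omega) (by omega)
    refine h1.trans ?_
    rw [pow_succ, mul_assoc]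
    refine Nat.mul_le_mul_left _ ?_
    obtain ⟨M, hM⟩ : ∃ M, N - d = M + 1 := ⟨N - d - 1, by omega⟩
    have e : N - (d + 1) = M := by omega
    rw [hM, e]
    have hh := Nat.choose_mul_succ_eq M K
    have h4 : M + 1 ≤ 4 * (M + 1 - K) := by omega
    have hpos : 0 < M + 1 - K := by omega
    have : (M + 1).choose K * (M + 1 - K) ≤ (4 * M.choose K) * (M + 1 - K) := by
      rw [← hh]
      calc M.choose K * (M + 1) ≤ M.choose K * (4 * (M + 1 - K)) := Nat.mul_le_mul_left _ h4
        _ = _ := by ring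
    exact Nat.le_of_mul_le_mul_right this hpos

end Psi

section Low
variable {n : ℕ} {p : ℝ}

lemma ent_perm_append {ι : Type*} (L : List (ι × ι)) :
    (ent L).Perm (L.map Prod.fst ++ L.map Prod.snd) := by
  induction L with
  | nil => simp
  | cons q L ih =>
    simp only [ent_cons, List.map_cons, List.cons_append]
    refine List.Perm.cons _ ?_
    exact (ih.cons _).trans List.perm_middle.symm

noncomputable def Gi (A B : Finset (Fin n)) (y : Fin n → Bool) : ℝ :=
  if (∀ i ∈ A, y i = true) ∧ ∀ i ∈ B, y i = false then 1 else 0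

lemma mass (q : ℝ) (A B : Finset (Fin n)) (h : Disjoint A B) :
    ∑ y, cw q y * Gi A B y = q ^ A.card * (1 - q) ^ B.card := by
  let φ : Fin n → Bool → ℝ := fun i b => bw q b * (if (i ∈ A → b = true) ∧ (i ∈ B → b = false) then 1 else 0)
  have h1 : ∀ y, cw q y * Gi A B y = ∏ i, φ i (y i) := by
    intro y
    simp only [φ, Finset.prod_mul_distrib]
    congr 1
    unfold Gi
    rw [Finset.prod_boole]
    congr 1
    simp [forall_and]
  simp only [h1]
  rw [sum_prod_bool]
  have h2 : ∀ i, φ i true + φ i false = (if i ∈ A then q else 1) * (if i ∈ B then (1 - q) else 1) := by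
    intro i
    simp only [φ, bw]
    by_cases hA : i ∈ A
    · have hB := Finset.disjoint_left.1 h hA
      simp [hA, hB]
    · by_cases hB : i ∈ B <;> simp [hA, hB]
  simp only [h2, Finset.prod_mul_distrib]
  simp [Finset.prod_ite_mem]

lemma Pi_lower {m : ℕ} (hm : (m : ℝ) = p * n) (hp0 : 0 < p) (hp : p ≤ 1 / 2)
    (L : List (Fin n × Fin n)) (hL : (ent L).Nodup) (hm2 : 2 ≤ m) (hd : 2 * L.length ≤ m) :
    (p / 32) ^ L.length / 2 ≤ cubeE (p / 4) (fun y => opT (sPsi L : SlicePoint n p → ℝ) y * cPsi L y) := by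
  set d := L.length with hdd
  set A := (L.map Prod.fst).toFinset with hA
  set B := (L.map Prod.snd).toFinset with hB
  have hnd := (ent_perm_append L).nodup_iff.1 hL
  rw [List.nodup_append] at hnd
  have hAc : A.card = d := by rw [hA, List.toFinset_card_of_nodup hnd.1]; simp [hdd]
  have hBc : B.card = d := by rw [hB, List.toFinset_card_of_nodup hnd.2.1]; simp [hdd]
  have hAB : Disjoint A B := by
    rw [Finset.disjoint_left]
    intro i hi hi'
    exact hnd.2.2 i (by simpa [hA] using hi) i (by simpa [hB] using hi') rfl
  have hmn : 2 * m ≤ n := by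
    have : (2 * m : ℝ) ≤ n := by
      rw [hm]
      have : (0 : ℝ) ≤ n := Nat.cast_nonneg _
      nlinarith
    exact_mod_cast this
  set q := p / 4 with hq
  have q0 : 0 ≤ q := by positivity
  have q1 : q ≤ 1 := by rw [hq]; linarith
  have hmpos : (0 : ℝ) < m := by exact_mod_cast (by omega : 0 < m)
  set C : Finset (Fin n) := univ \ (A ∪ B) with hC
  let w : (Fin n → Bool) → ℝ := fun y => Gi A B y * (1 - (2 / m) * ∑ j ∈ C, cv y j)
  have pw : ∀ y, (1 / 4 : ℝ) ^ d * w y ≤ opT (sPsi L : SlicePoint n p → ℝ) y * cPsi L y := by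
    intro y
    have hnn : 0 ≤ opT (sPsi L : SlicePoint n p → ℝ) y * cPsi L y := by
      simp only [opT, Finset.sum_mul]
      refine Finset.sum_nonneg fun x _ => ?_
      rw [div_mul_eq_mul_div]
      refine div_nonneg ?_ (cnt_nonneg y)
      unfold ind
      split_ifs with h
      · rw [one_mul]; exact ind_psi_nonneg h L
      · simp
    by_cases hG : (∀ i ∈ A, y i = true) ∧ ∀ i ∈ B, y i = false
    swap
    · have : w y = 0 := by simp [w, Gi, hG]
      rw [this, mul_zero]; exact hnn
    set Y := univ.filter fun i => y i = true with hY
    have hyL : ∀ q ∈ L, y q.1 = true ∧ y q.2 = false := by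
      intro r hr
      exact ⟨hG.1 _ (by simp only [hA, List.mem_toFinset, List.mem_map]; exact ⟨r, hr, rfl⟩),
        hG.2 _ (by simp only [hB, List.mem_toFinset, List.mem_map]; exact ⟨r, hr, rfl⟩)⟩
    have hsumC : ∑ j ∈ C, cv y j = (Y.card : ℝ) - d := by
      have e1 : ∑ j ∈ C, cv y j = ((Y \ A).card : ℝ) := by
        simp only [cv]
        rw [Finset.sum_boole]
        congr 2
        ext i
        simp only [hC, hY, mem_filter, mem_sdiff, mem_univ, true_and, mem_union, not_or]
        constructor
        · rintro ⟨⟨h1, h2⟩, h3⟩; exact ⟨h3, h1⟩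
        · rintro ⟨h1, h2⟩
          refine ⟨⟨h2, fun h => ?_⟩, h1⟩
          have := hG.2 i h
          simp [h1] at this
      have hAY : A ⊆ Y := fun i hi => by simp [hY, hG.1 i hi]
      rw [e1, Finset.card_sdiff_of_subset hAY, Nat.cast_sub (Finset.card_le_card hAY), hAc]
    have hwy : w y = 1 - (2 / m) * ((Y.card : ℝ) - d) := by
      simp only [w, hsumC, Gi]
      rw [if_pos hG, one_mul]
    have hYd : d ≤ Y.card := by
      rw [← hAc]; exact Finset.card_le_card fun i hi => by simp [hY, hG.1 i hi]
    rcases Nat.lt_or_ge m Y.card with hYm | hYm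
    · refine le_trans ?_ hnn
      refine mul_nonpos_of_nonneg_of_nonpos (by positivity) ?_
      rw [hwy, sub_nonpos, div_mul_eq_mul_div, one_le_div hmpos]
      have h1 : (m : ℝ) + 1 ≤ Y.card := by exact_mod_cast hYm
      have h2 : (2 * d : ℝ) ≤ m := by exact_mod_cast hd
      linarith
    · have hw1 : w y ≤ 1 := by
        rw [hwy]
        have : (d : ℝ) ≤ Y.card := by exact_mod_cast hYd
        have : 0 ≤ (2 / (m : ℝ)) * ((Y.card : ℝ) - d) := mul_nonneg (by positivity) (by linarith)
        linarith
      refine (mul_le_mul_of_nonneg_left hw1 (by positivity)).trans ?_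
      rw [cPsi_one hyL, mul_one, mul_one]
      have hcnt : cnt n p y = ((n - Y.card).choose (m - Y.card) : ℝ) := by
        have := slice_count hm Y ∅ (by simp) hYm
        simp at this
        unfold cnt ind
        rw [Finset.sum_boole, ← this]
        congr 3
        ext x
        simp [hY]
      have hnum : ((n - Y.card - d).choose (m - Y.card) : ℝ) ≤ ∑ x : SlicePoint n p, ind y x * sPsi L x := by
        have := slice_count hm Y B (by
          rw [Finset.disjoint_left]; intro i hi hi'
          have h1 := hG.2 i hi'
          simp [hY, h1] at hi) hYm
        rw [hBc] at this
        rw [← this, ← Finset.sum_boole]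
        refine Finset.sum_le_sum fun x _ => ?_
        split_ifs with h
        · have hi : ind y x = 1 := by
            unfold ind
            rw [if_pos]
            intro i hi
            exact h.1 i (by simp [hY, hi])
          have hx : sPsi L x = 1 := by
            apply cPsi_one
            intro r hr
            exact ⟨h.1 _ (by simp [hY, (hyL r hr).1]),
              h.2 _ (by simp only [hB, List.mem_toFinset, List.mem_map]; exact ⟨r, hr, rfl⟩)⟩
          rw [hi, hx]; norm_num
        · have hh : 0 ≤ ind y x * (sPsi L x * cPsi L y) := by
            unfold ind
            split_ifs with h
            · rw [one_mul]; exact ind_psi_nonneg h L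
            · simp
          rw [cPsi_one hyL, mul_one] at hh
          exact hh
      have hr := choose_ratio d (n - Y.card) (m - Y.card) (by omega) (by omega)
      have hr' : ((n - Y.card).choose (m - Y.card) : ℝ) ≤ 4 ^ d * ((n - Y.card - d).choose (m - Y.card) : ℝ) := by
        exact_mod_cast hr
      have hcpos : 0 < cnt n p y := by
        rw [hcnt]
        exact_mod_cast Nat.choose_pos (by omega)
      simp only [opT]
      rw [← Finset.sum_div, le_div_iff₀ hcpos]
      refine le_trans ?_ hnum
      rw [hcnt, one_div, inv_pow]
      rw [inv_mul_le_iff₀ (by positivity)]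
      exact hr'
  have hsum : ∑ y, cw q y * w y = q ^ d * (1 - q) ^ d * (1 - (2 / m) * (C.card * q)) := by
    have e : ∀ y, cw q y * w y = cw q y * Gi A B y - (2 / m) * ∑ j ∈ C, cw q y * Gi (insert j A) B y := by
      intro y
      have : ∀ j, Gi (insert j A) B y = Gi A B y * cv y j := by
        intro j
        unfold Gi cv
        by_cases h1 : y j = true <;> simp [h1]
      simp only [w, this, ← mul_assoc, ← Finset.mul_sum]
      ring
    rw [Finset.sum_congr rfl fun y _ => e y, Finset.sum_sub_distrib, ← Finset.mul_sum]
    rw [Finset.sum_comm, mass q A B hAB, hAc, hBc]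
    have : ∀ j ∈ C, ∑ y, cw q y * Gi (insert j A) B y = q ^ (d + 1) * (1 - q) ^ d := by
      intro j hj
      simp only [hC, mem_sdiff, mem_univ, true_and, mem_union, not_or] at hj
      rw [mass q _ _ (by rw [Finset.disjoint_insert_left]; exact ⟨hj.2, hAB⟩),
        Finset.card_insert_of_notMem hj.1, hAc, hBc]
    rw [Finset.sum_congr rfl this]
    simp; ring
  have hfin : cubeE q (fun y => (1 / 4 : ℝ) ^ d * w y) = (1 / 4 : ℝ) ^ d * ∑ y, cw q y * w y := by
    unfold cubeE
    rw [Finset.mul_sum]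
    exact Finset.sum_congr rfl fun y _ => by ring
  refine le_trans ?_ (cubeE_mono q0 q1 pw)
  rw [hfin, hsum]
  have hCn : (C.card : ℝ) ≤ n := by
    have := Finset.card_le_univ C
    simp at this
    exact_mod_cast this
  have h12 : 1 / 2 ≤ 1 - (2 / (m : ℝ)) * (C.card * q) := by
    have : (2 / (m : ℝ)) * (C.card * q) ≤ (2 / (m : ℝ)) * (m / 4) := by
      refine mul_le_mul_of_nonneg_left ?_ (by positivity)
      rw [hm, hq]
      nlinarith
    have e : (2 / (m : ℝ)) * (m / 4) = 1 / 2 := by field_simp; norm_num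
    linarith
  have hq8 : (p / 32) ^ d ≤ (1 / 4 : ℝ) ^ d * (q ^ d * (1 - q) ^ d) := by
    rw [← mul_pow, ← mul_pow]
    refine pow_le_pow_left₀ (by positivity) ?_ d
    rw [hq]; nlinarith
  have h0 : 0 ≤ (p / 32) ^ d := by positivity
  calc (p / 32) ^ d / 2 = (p / 32) ^ d * (1 / 2) := by ring
    _ ≤ ((1 / 4 : ℝ) ^ d * (q ^ d * (1 - q) ^ d)) * (1 - (2 / (m : ℝ)) * (C.card * q)) :=
      mul_le_mul hq8 h12 (by norm_num) (h0.trans hq8)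
    _ = _ := by ring

/-- numeric weakening -/
lemma Pi_num (hp0 : 0 < p) (hp : p ≤ 1 / 2) (d : ℕ) : p ^ (6 * d + 1) ≤ (p / 32) ^ d / 2 := by
  rw [pow_succ, pow_mul]
  have : (p ^ 6) ^ d ≤ (p / 32) ^ d := by
    refine pow_le_pow_left₀ (by positivity) ?_ d
    have : p ^ 5 ≤ (1 / 2) ^ 5 := pow_le_pow_left₀ hp0.le hp 5
    nlinarith
  have h0 : 0 ≤ (p / 32) ^ d := by positivity
  have h1 : 0 ≤ (p ^ 6) ^ d := by positivity
  nlinarith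

lemma lam_lower {m : ℕ} (hm : (m : ℝ) = p * n) (hp0 : 0 < p) (hp : p ≤ 1 / 2)
    (L : List (Fin n × Fin n)) (hL : (ent L).Nodup) (hm2 : 2 ≤ m) (hd : 2 * L.length ≤ m) :
    p ^ (18 * L.length + 2) ≤ sInner (sPsi L : SlicePoint n p → ℝ) (opR (p / 4) (sPsi L)) ∧
    p ^ (12 * L.length + 2) ≤ sNormSq (sPsi L : SlicePoint n p → ℝ) := by
  have hPi := (Pi_num hp0 hp L.length).trans (Pi_lower hm hp0 hp L hL hm2 hd)
  set q := p / 4 with hq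
  have q0 : 0 ≤ q := by positivity
  have q1 : q ≤ 1 := by rw [hq]; linarith
  set Pi := cubeE q (fun y => opT (sPsi L : SlicePoint n p → ℝ) y * cPsi L y) with hPidef
  set d := L.length
  have hc1 : cubeE q (fun y : Fin n → Bool => cPsi L y ^ 2) ≤ 1 := by
    rw [← cw_sum q (n := n)]
    unfold cubeE
    refine Finset.sum_le_sum fun y _ => ?_
    exact mul_le_of_le_one_right (cw_nonneg q0 q1 y) (cPsi_sq_le L y)
  have hP0 : 0 ≤ p ^ (6 * d + 1) := by positivity
  constructor
  · rw [sInner_opR]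
    have cs := cubeE_cs q0 q1 (opS q (sPsi L : SlicePoint n p → ℝ)) (cPsi L)
    have e : cubeE q (fun y => opS q (sPsi L : SlicePoint n p → ℝ) y * cPsi L y) = q ^ d * Pi := by
      unfold opS
      rw [← nz_selfadj]
      simp only [nz_cPsi q q L hL]
      rw [hPidef]
      unfold cubeE
      rw [Finset.mul_sum]
      exact Finset.sum_congr rfl fun y _ => by ring
    rw [e] at cs
    simp only [← sq]
    have h0 : 0 ≤ cubeE q (fun y => opS q (sPsi L : SlicePoint n p → ℝ) y ^ 2) :=
      cubeE_nonneg q0 q1 fun y => sq_nonneg _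
    have h1 := cs.trans (mul_le_of_le_one_right h0 hc1)
    refine le_trans ?_ h1
    have h3 : p ^ (3 * d) ≤ q ^ d := by
      rw [pow_mul]
      refine pow_le_pow_left₀ (by positivity) ?_ d
      have : p ^ 2 ≤ (1 / 2) ^ 2 := pow_le_pow_left₀ hp0.le hp 2
      rw [hq]; nlinarith
    calc p ^ (18 * d + 2) = (p ^ (3 * d) * p ^ (6 * d + 1)) ^ 2 := by
          rw [← pow_add, ← pow_mul]; congr 1; ring
      _ ≤ _ := by
        refine pow_le_pow_left₀ (by positivity) ?_ 2
        exact mul_le_mul h3 hPi hP0 (by positivity)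
  · have e : sInner (sPsi L : SlicePoint n p → ℝ) (opTs q (cPsi L)) = Pi := sInner_opTs q _ _
    have cs := sInner_cs (sPsi L : SlicePoint n p → ℝ) (opTs q (cPsi L))
    rw [e] at cs
    have h2 : sNormSq (opTs q (cPsi L) : SlicePoint n p → ℝ) ≤ 1 := by
      refine le_trans ?_ hc1
      refine le_trans ?_ (sExp_opTs_le (p := p) q0 q1 _ fun y => sq_nonneg _)
      refine sExp_mono fun x => ?_
      have := opTs_sq q0 q1 (cPsi L) x
      nlinarith
    have h1 := cs.trans (mul_le_of_le_one_right (sNormSq_nonneg _) h2)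
    refine le_trans ?_ h1
    calc p ^ (12 * d + 2) = (p ^ (6 * d + 1)) ^ 2 := by rw [← pow_mul]; congr 1; ring
      _ ≤ _ := pow_le_pow_left₀ hP0 hPi 2

lemma exists_OKl {ι : Type*} (d : ℕ) (A : Finset ι) (h : 2 * d ≤ A.card) : ∃ L, OKl A d L := by
  induction d generalizing A with
  | zero => exact ⟨[], by simp [OKl]⟩
  | succ d ih =>
    obtain ⟨a, ha, b, hb, hab⟩ := Finset.one_lt_card.1 (by omega : 1 < A.card)
    have hb' : b ∈ A.erase a := by simp [hb, hab.symm]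
    obtain ⟨L, h1, h2, h3⟩ := ih ((A.erase a).erase b) (by
      rw [Finset.card_erase_of_mem hb', Finset.card_erase_of_mem ha]; omega)
    refine ⟨(a, b) :: L, ?_, ?_, by simp [h3]⟩
    · simp only [ent_cons, List.nodup_cons, List.mem_cons, not_or]
      refine ⟨⟨hab, fun h => ?_⟩, fun h => ?_, h1⟩
      · have := h2 _ h; simp at this
      · have := h2 _ h; simp at this
    · intro i hi
      simp only [ent_cons, List.mem_cons] at hi
      rcases hi with rfl | rfl | hi
      · exact ha
      · exact hb
      · have := h2 _ hi
        simp at this; exact this.2.2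

lemma spectral {m k : ℕ} (hm : (m : ℝ) = p * n) (hp0 : 0 < p) (hp : p ≤ 1 / 2) (hk : 1 ≤ k)
    (hkm : 2 * k ≤ m) (d : ℕ) (hd : d ≤ k + 1) : ∀ f ∈ degLT n p d,
    p ^ (20 * k) * sNormSq f ≤ sInner f (opR (p / 4) f) := by
  have hmn : 2 * m ≤ n := by
    have : (2 * m : ℝ) ≤ n := by
      rw [hm]
      have : (0 : ℝ) ≤ n := Nat.cast_nonneg _
      nlinarith
    exact_mod_cast this
  induction d with
  | zero =>
    intro f hf
    rw [degLT_zero, Submodule.mem_bot] at hf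
    subst hf
    simp [sNormSq_zero]
  | succ d ih =>
    intro f hf
    rw [degLT_succ] at hf
    obtain ⟨w, hw, ho⟩ := exists_proj (degLT n p d) f
    set v := f - w with hv
    have hvd : v ∈ degLE n p d := Submodule.sub_mem _ hf (degLT_le d hw)
    obtain ⟨lam, hlam⟩ := opR_eigen n p (p / 4) d
    have hl : p ^ (20 * k) ≤ lam := by
      obtain ⟨L, h1, h2, h3⟩ := exists_OKl d (univ : Finset (Fin n)) (by simp; omega)
      obtain ⟨b1, b2⟩ := lam_lower hm hp0 hp L h1 (by omega) (by omega)
      have hmem : (sPsi L : SlicePoint n p → ℝ) ∈ degLE n p d := h3 ▸ sPsi_mem L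
      have hh := hlam _ hmem
      rw [← h3] at hh
      have := sPsi_orth h1 hh
      rw [sInner_sub_right, sInner_smul_right, sub_eq_zero] at this
      rw [this] at b1
      have z1 := sPsi_norm_le (p := p) L
      change _ ≤ lam * sNormSq (sPsi L) at b1
      have z0 : 0 < sNormSq (sPsi L : SlicePoint n p → ℝ) := lt_of_lt_of_le (by positivity) b2
      have hpp : p ^ (20 * k) ≤ p ^ (18 * L.length + 2) :=
        pow_le_pow_of_le_one hp0.le (by linarith) (by omega)
      have hpos : 0 < p ^ (18 * L.length + 2) := by positivity
      have hlpos : 0 < lam := by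
        by_contra hneg
        push Not at hneg
        nlinarith
      nlinarith
    have hr := ho _ (hlam v hvd)
    rw [sInner_sub_right, sInner_smul_right, sub_eq_zero] at hr
    have hc := ho _ (opR_degLT (p / 4) hw)
    have hc2 := hc
    rw [opR_selfadj, sInner_comm] at hc2
    have hvw := ho _ hw
    have hfe : f = v + w := by simp [hv]
    have hR : opR (p / 4) f = opR (p / 4) v + opR (p / 4) w := by
      rw [hfe]; exact (RL (p / 4)).map_add v w
    have hlow := ih (by omega) w hw
    rw [hR, hfe, sNormSq_add, hvw, sInner_add_right, sInner_add_left, sInner_add_left, hr, hc, hc2]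
    have := sNormSq_nonneg v
    change _ ≤ lam * sNormSq v + 0 + (0 + _)
    nlinarith

end Low

section Gap
variable {n : ℕ} {p : ℝ}

lemma card_slice {m : ℕ} (hm : (m : ℝ) = p * n) : Fintype.card (SlicePoint n p) = n.choose m := by
  have := slice_count hm ∅ ∅ (by simp) (by simp)
  simpa using this

lemma card_bound {m k : ℕ} (hm : (m : ℝ) = p * n) (hp0 : 0 < p) (hp : p ≤ 1 / 2)
    (hk : m < 2 * k) : p ^ (6 * k) * (Fintype.card (SlicePoint n p) : ℝ) ≤ 1 := by
  rw [card_slice hm]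
  have h1 := Nat.choose_le_pow_div (α := ℝ) m n
  have h2 := Real.pow_div_factorial_le_exp (m : ℝ) (Nat.cast_nonneg m) m
  have h3 : Real.exp m ≤ 4 ^ m := by
    have : Real.exp (m : ℝ) = Real.exp 1 ^ m := by rw [← Real.exp_nat_mul]; simp
    rw [this]
    refine pow_le_pow_left₀ (Real.exp_pos 1).le ?_ m
    have := Real.exp_one_lt_d9
    linarith
  have h4 : p ^ m * (n.choose m : ℝ) ≤ 4 ^ m := by
    refine le_trans (mul_le_mul_of_nonneg_left h1 (by positivity)) (le_trans ?_ (h2.trans h3))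
    rw [← mul_div_assoc, ← mul_pow, ← hm]
  have h5 : p ^ (3 * m) * (n.choose m : ℝ) ≤ 1 := by
    have e : p ^ (3 * m) = (p ^ 2) ^ m * p ^ m := by rw [← pow_mul, ← pow_add]; congr 1; ring
    rw [e, mul_assoc]
    calc (p ^ 2) ^ m * (p ^ m * (n.choose m : ℝ)) ≤ (p ^ 2) ^ m * 4 ^ m :=
          mul_le_mul_of_nonneg_left h4 (by positivity)
      _ = (p ^ 2 * 4) ^ m := by rw [mul_pow]
      _ ≤ 1 := pow_le_one₀ (by positivity) (by nlinarith)
  refine le_trans ?_ h5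
  refine mul_le_mul_of_nonneg_right ?_ (by positivity)
  exact pow_le_pow_of_le_one hp0.le (by linarith) (by omega)

lemma sq_ge_of_int {l : ℕ} {t : ℝ} (h : ∃ z : ℤ, 2 ^ l * t = z) (ht : t ≠ 0) : 1 ≤ 4 ^ l * t ^ 2 := by
  obtain ⟨z, hz⟩ := h
  have hz0 : z ≠ 0 := by
    rintro rfl
    simp at hz
    exact ht hz
  have h1 : (1 : ℤ) ≤ z ^ 2 := by
    have := sq_nonneg z
    have : z ^ 2 ≠ 0 := pow_ne_zero _ hz0
    omega
  have h2 : (1 : ℝ) ≤ (z : ℝ) ^ 2 := by exact_mod_cast h1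
  rw [← hz, mul_pow, ← pow_mul, mul_comm l 2, pow_mul] at h2
  norm_num at h2
  exact h2

lemma holder (q : ℝ) (h0 : 0 ≤ q) (h1 : q ≤ 1 / 2) (l : ℕ) (f : SlicePoint n p → ℝ)
    (hint : ∀ x, ∃ z : ℤ, 2 ^ l * f x = z) :
    (sInner f (opR q f)) ^ 2 ≤ 4 ^ l * sNormSq f ^ 3 := by
  set φ := opR q f with hφ
  set χ : SlicePoint n p → ℝ := fun x => if f x = 0 then 0 else 1 with hχ
  set s' := sInner f φ with hs'
  set s := sNormSq f with hs
  have s0 : 0 ≤ s := sNormSq_nonneg f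
  have e1 : s' = sInner f (fun x => χ x * φ x) := by
    simp only [hs', sInner]
    congr 1
    funext x
    by_cases h : f x = 0 <;> simp [hχ, h]
  have c1 : s' ^ 2 ≤ s * sNormSq (fun x => χ x * φ x) := by
    rw [e1]; exact sInner_cs _ _
  have e2 : sNormSq (fun x => χ x * φ x) = sInner χ (fun x => φ x ^ 2) := by
    simp only [sNormSq, sInner]
    congr 1
    funext x
    by_cases h : f x = 0 <;> simp [hχ, h, sq]
  have c2 := sInner_cs χ (fun x => φ x ^ 2)
  have hχ2 : sNormSq χ ≤ 4 ^ l * s := by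
    rw [hs, sNormSq, sNormSq, sInner, sInner, ← sExp_smul]
    refine sExp_mono fun x => ?_
    by_cases h : f x = 0
    · simp [hχ, h]
    · have := sq_ge_of_int (hint x) h
      simp [hχ, h]
      linarith [sq (f x)]
  have hφ4 : sNormSq (fun x => φ x ^ 2) ≤ s' ^ 2 := by
    refine le_trans (le_of_eq ?_) (opR_four h0 h1 f)
    simp only [sNormSq, sInner]
    congr 1
    funext x
    ring
  have m0 := sNormSq_nonneg χ
  have m1 := sNormSq_nonneg (fun x => φ x ^ 2)
  rw [e2] at c1
  set t := sInner χ (fun x => φ x ^ 2)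
  have h2 : t ^ 2 ≤ 4 ^ l * s * s' ^ 2 := c2.trans (mul_le_mul hχ2 hφ4 m1 (by positivity))
  by_cases hz : s' = 0
  · have : 0 ≤ 4 ^ l * s ^ 3 := by positivity
    rw [hz]; simpa using this
  have hpos : 0 < s' ^ 2 := by positivity
  have h3 : (s' ^ 2) ^ 2 ≤ s ^ 2 * t ^ 2 := by
    rw [← mul_pow]; exact pow_le_pow_left₀ hpos.le c1 2
  have h4 : (s' ^ 2) * s' ^ 2 ≤ (4 ^ l * s ^ 3) * s' ^ 2 := by
    calc (s' ^ 2) * s' ^ 2 = (s' ^ 2) ^ 2 := by ring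
      _ ≤ s ^ 2 * (4 ^ l * s * s' ^ 2) := h3.trans (mul_le_mul_of_nonneg_left h2 (by positivity))
      _ = _ := by ring
  exact le_of_mul_le_mul_right h4 hpos

lemma gap {m k l : ℕ} (hm : (m : ℝ) = p * n) (hp0 : 0 < p) (hp : p ≤ 1 / 2) (hk : 1 ≤ k)
    (hl : l ≤ k) (f f1 : SlicePoint n p → ℝ) (hint : ∀ x, ∃ z : ℤ, 2 ^ l * f x = z)
    (hf1 : f1 ∈ degLE n p k) (horth : ∀ g ∈ degLE n p k, sInner (f - f1) g = 0) (ε' : ℝ)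
    (h2 : sNormSq (f - f1) ≤ ε') (hs : sNormSq f ≤ p ^ (44 * k)) : sNormSq f ≤ 2 * ε' := by
  have h4l : (4 : ℝ) ^ l ≤ 4 ^ k := pow_le_pow_right₀ (by norm_num) hl
  have p2 : p ^ 2 ≤ 1 / 4 := by nlinarith
  rcases Nat.lt_or_ge m (2 * k) with hmk | hmk
  · have hf0 : f = 0 := by
      by_contra hne
      obtain ⟨x, hx⟩ := Function.ne_iff.1 hne
      have hx' := sq_ge_of_int (hint x) hx
      have : Nonempty (SlicePoint n p) := ⟨x⟩
      have hN : (0 : ℝ) < Fintype.card (SlicePoint n p) := by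
        have := Fintype.card_pos (α := SlicePoint n p)
        exact_mod_cast this
      have hle : f x ^ 2 ≤ sNormSq f * Fintype.card (SlicePoint n p) := by
        simp only [sNormSq, sInner, sExp]
        rw [div_mul_cancel₀ _ hN.ne']
        have := Finset.single_le_sum (f := fun x => f x * f x) (fun y _ => mul_self_nonneg _) (Finset.mem_univ x)
        rw [sq]; exact this
      have hb := card_bound hm hp0 hp hmk
      have e : p ^ (44 * k) = p ^ (38 * k) * p ^ (6 * k) := by rw [← pow_add]; congr 1; ring
      have h3 : f x ^ 2 ≤ p ^ (38 * k) := by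
        calc f x ^ 2 ≤ p ^ (44 * k) * Fintype.card (SlicePoint n p) :=
              hle.trans (mul_le_mul_of_nonneg_right hs hN.le)
          _ = p ^ (38 * k) * (p ^ (6 * k) * Fintype.card (SlicePoint n p)) := by rw [e]; ring
          _ ≤ _ := mul_le_of_le_one_right (by positivity) hb
      have h5 : (4 : ℝ) ^ l * f x ^ 2 ≤ 4 ^ k * p ^ (38 * k) :=
        mul_le_mul h4l h3 (sq_nonneg _) (by positivity)
      have h6 : (4 : ℝ) ^ k * p ^ (38 * k) < 1 := by
        rw [pow_mul, ← mul_pow]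
        refine pow_lt_one₀ (by positivity) ?_ (by omega)
        have : p ^ 38 ≤ (1 / 2) ^ 38 := pow_le_pow_left₀ hp0.le hp 38
        norm_num at this ⊢
        linarith
      linarith
    rw [hf0, sNormSq_zero]
    have := sNormSq_nonneg (f - f1)
    linarith
  · set f2 := f - f1 with hf2
    have hsp := spectral hm hp0 hp hk hmk (k + 1) le_rfl f1 (by rw [degLT_succ]; exact hf1)
    have hh := holder (p := p) (p / 4) (by positivity) (by linarith) l f hint
    have hfe : f = f1 + f2 := by simp [hf2]
    have ho : sInner f1 f2 = 0 := by rw [sInner_comm]; exact horth _ hf1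
    have hc1 : sInner f2 (opR (p / 4) f1) = 0 := horth _ (opR_degLE _ hf1)
    have hc2 : sInner f1 (opR (p / 4) f2) = 0 := by rw [opR_selfadj, sInner_comm]; exact hc1
    have hR : opR (p / 4) f = opR (p / 4) f1 + opR (p / 4) f2 := by
      rw [hfe]; exact (RL (p / 4)).map_add f1 f2
    have hn : sNormSq f = sNormSq f1 + sNormSq f2 := by
      rw [hfe, sNormSq_add, ho]; ring
    have hs' : sInner f (opR (p / 4) f) = sInner f1 (opR (p / 4) f1) + sInner f2 (opR (p / 4) f2) := by
      rw [hR, hfe, sInner_add_right, sInner_add_left, sInner_add_left, hc1, hc2]; ring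
    have hpos := opR_nonneg (q := p / 4) (by positivity) (by linarith) f2
    by_contra hcon
    push Not at hcon
    have n1 := sNormSq_nonneg f1
    have n2 := sNormSq_nonneg f2
    set s := sNormSq f
    have hs0 : 0 < s := by linarith
    have hlam : 0 < p ^ (20 * k) := by positivity
    have h3 : p ^ (20 * k) * (s / 2) ≤ sInner f (opR (p / 4) f) := by
      have : p ^ (20 * k) * (s / 2) ≤ p ^ (20 * k) * sNormSq f1 :=
        mul_le_mul_of_nonneg_left (by linarith) hlam.le
      linarith
    have h4 : (p ^ (20 * k) * (s / 2)) ^ 2 ≤ 4 ^ l * s ^ 3 :=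
      (pow_le_pow_left₀ (by positivity) h3 2).trans hh
    have h5 : (p ^ (20 * k)) ^ 2 * s ^ 2 ≤ (4 * 4 ^ k * s) * s ^ 2 := by
      have : (4 : ℝ) ^ l * s ^ 3 ≤ 4 ^ k * s ^ 3 := mul_le_mul_of_nonneg_right h4l (by positivity)
      nlinarith
    have h6 := le_of_mul_le_mul_right h5 (by positivity)
    have h7 : (p ^ (20 * k)) ^ 2 ≤ 4 * 4 ^ k * p ^ (44 * k) :=
      h6.trans (mul_le_mul_of_nonneg_left hs (by positivity))
    have e1 : (p ^ (20 * k)) ^ 2 = p ^ (40 * k) := by rw [← pow_mul]; congr 1; ring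
    have e2 : p ^ (44 * k) = p ^ (40 * k) * p ^ (4 * k) := by rw [← pow_add]; congr 1; ring
    rw [e1, e2] at h7
    have h8 : (4 : ℝ) * 4 ^ k * p ^ (4 * k) ≤ 1 := by
      rw [pow_mul, mul_assoc, ← mul_pow]
      have hb : 4 * p ^ 4 ≤ 1 / 4 := by nlinarith
      have := pow_le_pow_left₀ (by positivity) hb k
      have h9 : (1 / 4 : ℝ) ^ k ≤ (1 / 4) ^ 1 := pow_le_pow_of_le_one (by norm_num) (by norm_num) hk
      linarith
    -- strictness
    have h10 : p ^ (20 * k) * (s / 2) < sInner f (opR (p / 4) f) := by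
      have : p ^ (20 * k) * (s / 2) < p ^ (20 * k) * sNormSq f1 :=
        mul_lt_mul_of_pos_left (by linarith) hlam
      linarith
    have h11 : (p ^ (20 * k) * (s / 2)) ^ 2 < 4 ^ l * s ^ 3 :=
      lt_of_lt_of_le (pow_lt_pow_left₀ h10 (by positivity) (by norm_num)) hh
    have h12 : (p ^ (20 * k)) ^ 2 * s ^ 2 < (4 * 4 ^ k * s) * s ^ 2 := by
      have : (4 : ℝ) ^ l * s ^ 3 ≤ 4 ^ k * s ^ 3 := mul_le_mul_of_nonneg_right h4l (by positivity)
      nlinarith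
    have h13 := lt_of_mul_lt_mul_right h12 (by positivity)
    have h14 : (4 : ℝ) * 4 ^ k * s ≤ 4 * 4 ^ k * (p ^ (40 * k) * p ^ (4 * k)) := by
      rw [← e2]; exact mul_le_mul_of_nonneg_left hs (by positivity)
    have h15 : 0 < p ^ (40 * k) := by positivity
    rw [e1] at h13
    have h16 : 4 * 4 ^ k * (p ^ (40 * k) * p ^ (4 * k)) ≤ p ^ (40 * k) := by
      calc 4 * 4 ^ k * (p ^ (40 * k) * p ^ (4 * k)) = p ^ (40 * k) * (4 * 4 ^ k * p ^ (4 * k)) := by ring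
        _ ≤ p ^ (40 * k) * 1 := mul_le_mul_of_nonneg_left h8 h15.le
        _ = _ := mul_one _
    exact absurd (h13.trans_le (h14.trans h16)) (lt_irrefl _)

end Gap

section DLsec
variable {n : ℕ} {p : ℝ}

lemma Dij_eq (i j : Fin n) (f : SlicePoint n p → ℝ) :
    Dij i j f = (1 / 2 : ℝ) • (f - Up (Equiv.swap i j) f) := by
  funext x
  simp [Dij, Up]; ring

lemma Dij_symm (i j : Fin n) (f : SlicePoint n p → ℝ) : Dij i j f = Dij j i f := by
  rw [Dij_eq, Dij_eq, Equiv.swap_comm]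

lemma Up_Dij (i j : Fin n) (f : SlicePoint n p → ℝ) :
    Up (Equiv.swap i j) (Dij i j f) = - Dij i j f := by
  have : Up (Equiv.swap i j) (Up (Equiv.swap i j) f) = f := by
    rw [Up_Up]; simp
  rw [Dij_eq, Up_smul, Up_sub, this, ← smul_neg, neg_sub]

lemma Dij_comm {a b c d : Fin n} (h1 : a ≠ c) (h2 : a ≠ d) (h3 : b ≠ c) (h4 : b ≠ d)
    (f : SlicePoint n p → ℝ) : Dij a b (Dij c d f) = Dij c d (Dij a b f) := by
  have hc : Equiv.swap a b * Equiv.swap c d = Equiv.swap c d * Equiv.swap a b := by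
    apply Equiv.Perm.Disjoint.commute
    intro i
    by_cases hi : i = a ∨ i = b
    · right
      rcases hi with rfl | rfl
      · exact Equiv.swap_apply_of_ne_of_ne h1 h2
      · exact Equiv.swap_apply_of_ne_of_ne h3 h4
    · left
      push Not at hi
      exact Equiv.swap_apply_of_ne_of_ne hi.1 hi.2
  simp only [Dij_eq, Up_smul, Up_sub, Up_Up, hc]
  funext x
  simp; ring

lemma Dij_selfadj (i j : Fin n) (f g : SlicePoint n p → ℝ) :
    sInner (Dij i j f) g = sInner f (Dij i j g) := by
  simp only [Dij_eq, sInner_smul_left, sInner_smul_right, sInner_sub_left, sInner_sub_right,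
    sInner_Up_left, Equiv.swap_inv]

lemma Dij_norm (i j : Fin n) (f : SlicePoint n p → ℝ) : sNormSq (Dij i j f) ≤ sNormSq f := by
  rw [Dij_eq, sNormSq_smul]
  have := sNormSq_sub_le f (Up (Equiv.swap i j) f)
  rw [sNormSq_Up] at this
  linarith

noncomputable def DL (L : List (Fin n × Fin n)) (f : SlicePoint n p → ℝ) : SlicePoint n p → ℝ :=
  L.foldr (fun q g => Dij q.1 q.2 g) f

@[simp] lemma DL_nil (f : SlicePoint n p → ℝ) : DL [] f = f := rfl
@[simp] lemma DL_cons (q : Fin n × Fin n) (L : List (Fin n × Fin n)) (f : SlicePoint n p → ℝ) :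
    DL (q :: L) f = Dij q.1 q.2 (DL L f) := rfl

lemma DP_eq (P : Finset (Fin n × Fin n)) (f : SlicePoint n p → ℝ) : DP P f = DL P.toList f := rfl

lemma DL_perm {L L' : List (Fin n × Fin n)} (h : L.Perm L') (hL : (ent L).Nodup)
    (f : SlicePoint n p → ℝ) : DL L f = DL L' f := by
  induction h with
  | nil => rfl
  | cons q h ih =>
    simp only [ent_cons, List.nodup_cons] at hL
    simp [ih hL.2.2]
  | swap q r L =>
    simp only [ent_cons, List.nodup_cons, List.mem_cons, not_or] at hL
    simp only [DL_cons]
    apply Dij_comm <;> tauto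
  | trans h1 h2 ih1 ih2 => rw [ih1 hL, ih2 ((ent_perm h1).nodup_iff.1 hL)]

lemma DL_sub (L : List (Fin n × Fin n)) (f g : SlicePoint n p → ℝ) :
    DL L (f - g) = DL L f - DL L g := by
  induction L with
  | nil => rfl
  | cons q L ih =>
    simp only [DL_cons, ih]
    funext x; simp [Dij]; ring

lemma DL_norm (L : List (Fin n × Fin n)) (f : SlicePoint n p → ℝ) : sNormSq (DL L f) ≤ sNormSq f := by
  induction L with
  | nil => rfl
  | cons q L ih => exact (Dij_norm _ _ _).trans ih

lemma DL_int (L : List (Fin n × Fin n)) (f : SlicePoint n p → ℝ) (hf : ∀ x, ∃ z : ℤ, f x = z) :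
    ∀ x, ∃ z : ℤ, 2 ^ L.length * DL L f x = z := by
  induction L with
  | nil => simpa using hf
  | cons q L ih =>
    intro x
    obtain ⟨a, ha⟩ := ih x
    obtain ⟨b, hb⟩ := ih (permPt (Equiv.swap q.1 q.2) x)
    refine ⟨a - b, ?_⟩
    push_cast
    rw [← ha, ← hb]
    simp only [DL_cons, Dij, List.length_cons]; ring

lemma Dij_mem {k : ℕ} (i j : Fin n) {f : SlicePoint n p → ℝ} (hf : f ∈ degLE n p k) :
    Dij i j f ∈ degLE n p k := by
  rw [Dij_eq]
  exact Submodule.smul_mem _ _ (Submodule.sub_mem _ hf (degLE_Up _ hf))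

lemma DL_mem {k : ℕ} (L : List (Fin n × Fin n)) {f : SlicePoint n p → ℝ} (hf : f ∈ degLE n p k) :
    DL L f ∈ degLE n p k := by
  induction L with
  | nil => exact hf
  | cons q L ih => exact Dij_mem _ _ ih

lemma DL_orth {k : ℕ} (L : List (Fin n × Fin n)) {f : SlicePoint n p → ℝ}
    (hf : ∀ g ∈ degLE n p k, sInner f g = 0) : ∀ g ∈ degLE n p k, sInner (DL L f) g = 0 := by
  induction L with
  | nil => exact hf
  | cons q L ih =>
    intro g hg
    rw [DL_cons, Dij_selfadj]
    exact ih _ (Dij_mem _ _ hg)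

lemma DL_inner (L : List (Fin n × Fin n)) (f Ψ : SlicePoint n p → ℝ)
    (h : ∀ q ∈ L, Up (Equiv.swap q.1 q.2) Ψ = - Ψ) : sInner (DL L f) Ψ = sInner f Ψ := by
  induction L with
  | nil => rfl
  | cons q L ih =>
    have e : Dij q.1 q.2 Ψ = Ψ := by
      rw [Dij_eq, h q (by simp)]
      funext x; simp; ring
    rw [DL_cons, Dij_selfadj, e, ih fun r hr => h r (by simp [hr])]

lemma DL_anti {L : List (Fin n × Fin n)} (hL : (ent L).Nodup) (f : SlicePoint n p → ℝ)
    {q : Fin n × Fin n} (hq : q ∈ L) : Up (Equiv.swap q.1 q.2) (DL L f) = - DL L f := by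
  rw [DL_perm (List.perm_cons_erase hq) hL, DL_cons, Up_Dij]

lemma ent_inj {ι : Type*} {L : List (ι × ι)} (hL : (ent L).Nodup) {q r : ι × ι} (hq : q ∈ L) (hr : r ∈ L)
    {i : ι} (h1 : q.1 = i ∨ q.2 = i) (h2 : r.1 = i ∨ r.2 = i) : q = r := by
  induction L with
  | nil => simp at hq
  | cons s L ih =>
    simp only [ent_cons, List.nodup_cons, List.mem_cons, not_or] at hL
    rcases List.mem_cons.1 hq with rfl | hq' <;> rcases List.mem_cons.1 hr with rfl | hr'
    · rfl
    · exfalso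
      have := mem_ent hr'
      rcases h1 with rfl | rfl <;> rcases h2 with h2 | h2 <;> rw [h2] at this <;> tauto
    · exfalso
      have := mem_ent hq'
      rcases h2 with rfl | rfl <;> rcases h1 with h2 | h2 <;> rw [h2] at this <;> tauto
    · exact ih hL.2.2 hq' hr'

lemma ent_ne {ι : Type*} {L : List (ι × ι)} (hL : (ent L).Nodup) {q : ι × ι} (hq : q ∈ L) :
    q.1 ≠ q.2 := by
  have := (ent_perm (List.perm_cons_erase hq)).nodup_iff.1 hL
  simp only [ent_cons, List.nodup_cons, List.mem_cons, not_or] at this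
  exact this.1.1

lemma nodup_of_ent {ι : Type*} {L : List (ι × ι)} (hL : (ent L).Nodup) : L.Nodup := by
  induction L with
  | nil => simp
  | cons s L ih =>
    simp only [ent_cons, List.nodup_cons, List.mem_cons, not_or] at hL
    exact List.nodup_cons.2 ⟨fun h => hL.1.2 (mem_ent h).1, ih hL.2.2⟩

lemma tuple_ent {l : ℕ} {P : Finset (Fin n × Fin n)} (hP : IsTuple l P) :
    OKl univ l P.toList := by
  obtain ⟨h1, h2, h3⟩ := hP
  refine ⟨?_, by simp, by simpa using h1⟩
  rw [ent, List.nodup_flatMap]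
  constructor
  · intro q hq
    have := h2 q (by simpa using hq)
    simp [this.ne]
  · refine (Finset.nodup_toList P).pairwise_of_forall_ne ?_
    intro q hq r hr hne
    have := h3 q (by simpa using hq) r (by simpa using hr) hne
    simp only [Function.onFun, List.disjoint_cons_left, List.mem_cons, List.not_mem_nil, or_false, not_or]
    simp
    tauto

def srt (q : Fin n × Fin n) : Fin n × Fin n := if q.1 < q.2 then q else (q.2, q.1)

lemma ent_srt (L : List (Fin n × Fin n)) : (ent (L.map srt)).Perm (ent L) := by
  induction L with
  | nil => simp
  | cons q L ih =>
    simp only [List.map_cons, ent_cons, srt]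
    split_ifs
    · exact (ih.cons _).cons _
    · exact (List.Perm.swap _ _ _).trans ((ih.cons _).cons _)

lemma DL_srt (L : List (Fin n × Fin n)) (f : SlicePoint n p → ℝ) : DL (L.map srt) f = DL L f := by
  induction L with
  | nil => simp
  | cons q L ih =>
    simp only [List.map_cons, DL_cons, srt, ih]
    split_ifs
    · rfl
    · exact Dij_symm _ _ _

lemma DL_tuple {l : ℕ} {L : List (Fin n × Fin n)} (hL : (ent L).Nodup) (hl : L.length = l)
    (f : SlicePoint n p → ℝ) : ∃ P, IsTuple l P ∧ DP P f = DL L f := by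
  have hS := (ent_srt L).nodup_iff.2 hL
  have hN := nodup_of_ent hS
  refine ⟨(L.map srt).toFinset, ⟨?_, ?_, ?_⟩, ?_⟩
  · rw [List.toFinset_card_of_nodup hN]; simpa using hl
  · intro q hq
    have hq' : q ∈ L.map srt := by simpa using hq
    obtain ⟨r, hr, rfl⟩ := List.mem_map.1 hq'
    have := ent_ne hL hr
    unfold srt
    split_ifs with h
    · exact h
    · exact lt_of_le_of_ne (not_lt.1 h) this.symm
  · intro q hq r hr hne
    have hq' : q ∈ L.map srt := by simpa using hq
    have hr' : r ∈ L.map srt := by simpa using hr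
    refine ⟨fun h => hne (ent_inj hS hq' hr' (Or.inl rfl) (Or.inl h.symm)),
      fun h => hne (ent_inj hS hq' hr' (Or.inl rfl) (Or.inr h.symm)),
      fun h => hne (ent_inj hS hq' hr' (Or.inr rfl) (Or.inl h.symm)),
      fun h => hne (ent_inj hS hq' hr' (Or.inr rfl) (Or.inr h.symm))⟩
  · rw [DP_eq, ← DL_srt L]
    refine (DL_perm (List.Perm.symm ?_) hS f).symm
    exact List.toFinset_toList hN

end DLsec

section Gsec
variable {n : ℕ} {p : ℝ}

noncomputable def GG (A : Finset (Fin n)) (u : Finset (Fin n) → ℤ) (j : ℕ) : SlicePoint n p → ℝ :=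
  fun x => ∑ T ∈ powersetCard j A, (u T : ℝ) * andT T x

lemma GG_zero (A : Finset (Fin n)) (u : Finset (Fin n) → ℤ) (x : SlicePoint n p) :
    GG A u 0 x = u ∅ := by
  simp [GG, andT]

lemma GG_succ {a : Fin n} {A : Finset (Fin n)} (ha : a ∉ A) (u : Finset (Fin n) → ℤ) (j : ℕ)
    (x : SlicePoint n p) :
    GG (insert a A) u (j + 1) x = GG A u (j + 1) x + coordR x a * GG A (fun T => u (insert a T)) j x := by
  have hT : ∀ {i : ℕ} {T : Finset (Fin n)}, T ∈ powersetCard i A → a ∉ T := by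
    intro i T hT h
    exact ha ((mem_powersetCard.1 hT).1 h)
  unfold GG
  rw [powersetCard_succ_insert ha, Finset.sum_union, Finset.sum_image, Finset.mul_sum]
  · congr 1
    refine Finset.sum_congr rfl fun T hT' => ?_
    rw [andT, andT, Finset.prod_insert (hT hT')]; ring
  · intro S hS T hT' h
    have := congrArg (fun U => U.erase a) h
    simpa [Finset.erase_insert (hT hS), Finset.erase_insert (hT hT')] using this
  · rw [Finset.disjoint_left]
    intro S hS hS'
    obtain ⟨T, _, rfl⟩ := Finset.mem_image.1 hS'
    exact hT hS (by simp)

lemma GG_Up {σ : Equiv.Perm (Fin n)} {A : Finset (Fin n)} (h : ∀ i ∈ A, σ.symm i = i)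
    (u : Finset (Fin n) → ℤ) (j : ℕ) (x : SlicePoint n p) : GG A u j (permPt σ x) = GG A u j x := by
  refine Finset.sum_congr rfl fun T hT => ?_
  congr 1
  refine Finset.prod_congr rfl fun i hi => ?_
  rw [coordR_perm, h i ((mem_powersetCard.1 hT).1 hi)]

lemma GG_split {b : Fin n} {B : Finset (Fin n)} (hb : b ∉ B) (u : Finset (Fin n) → ℤ) (j : ℕ) :
    ∃ R : SlicePoint n p → ℝ, (∀ σ : Equiv.Perm (Fin n), (∀ i ∈ B, σ.symm i = i) → ∀ x,
      R (permPt σ x) = R x) ∧ ∀ x, GG (insert b B) u j x = GG B u j x + coordR x b * R x := by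
  cases j with
  | zero => exact ⟨0, by simp, by simp [GG_zero]⟩
  | succ j => exact ⟨_, fun σ hσ x => GG_Up hσ _ _ _, fun x => GG_succ hb u j x⟩

lemma Dij_GG {a b : Fin n} {B : Finset (Fin n)} (hab : a ≠ b) (ha : a ∉ B) (hb : b ∉ B)
    (u : Finset (Fin n) → ℤ) (j : ℕ) (x : SlicePoint n p) :
    Dij a b (GG (insert a (insert b B)) u (j + 1)) x =
      (coordR x a - coordR x b) / 2 * GG B (fun T => u (insert a T) - u (insert b T)) j x := by
  obtain ⟨R, hR, hR'⟩ := GG_split (p := p) hb (fun T => u (insert a T)) j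
  have hs : ∀ i ∈ B, (Equiv.swap a b).symm i = i := by
    intro i hi
    rw [Equiv.symm_swap]
    exact Equiv.swap_apply_of_ne_of_ne (fun h => ha (h ▸ hi)) (fun h => hb (h ▸ hi))
  have e : GG B (fun T => u (insert a T) - u (insert b T)) j x =
      GG B (fun T => u (insert a T)) j x - GG B (fun T => u (insert b T)) j x := by
    simp [GG, sub_mul]
  rw [e]
  simp only [Dij]
  have ha' : a ∉ insert b B := by simp [hab, ha]
  rw [GG_succ ha', GG_succ ha', hR', hR', GG_succ hb, GG_succ hb,
    GG_Up hs, GG_Up hs, GG_Up hs, hR _ hs]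
  simp only [coordR_perm, Equiv.symm_swap, Equiv.swap_apply_left, Equiv.swap_apply_right]
  ring

lemma sPsi_fix {σ : Equiv.Perm (Fin n)} {L : List (Fin n × Fin n)} (h : ∀ i ∈ ent L, σ.symm i = i) :
    Up σ (sPsi L : SlicePoint n p → ℝ) = sPsi L := by
  rw [sPsi_Up, map_fix h]

lemma DL_GG (u : Finset (Fin n) → ℤ) (L : List (Fin n × Fin n)) (hL : (ent L).Nodup) :
    ∀ (j : ℕ) (x : SlicePoint n p), 2 ^ L.length * DL L (GG univ u (j + L.length)) x =
      sPsi L x * GG (univ \ (ent L).toFinset) (sh u L) j x := by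
  induction L with
  | nil => intro j x; simp [sh]
  | cons q L ih =>
    intro j x
    simp only [ent_cons, List.nodup_cons, List.mem_cons, not_or] at hL
    have ih' := ih hL.2.2 (j + 1)
    set B := univ \ (ent (q :: L)).toFinset with hB
    have hA : univ \ (ent L).toFinset = insert q.1 (insert q.2 B) := by
      ext i
      simp only [hB, ent_cons, mem_sdiff, mem_univ, true_and, List.mem_toFinset, mem_insert, List.mem_cons, not_or]
      constructor
      · tauto
      · rintro (rfl | rfl | h) <;> tauto
    rw [hA] at ih'
    have hs : Up (Equiv.swap q.1 q.2) (sPsi L : SlicePoint n p → ℝ) = sPsi L := by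
      apply sPsi_fix
      intro i hi
      rw [Equiv.symm_swap]
      exact Equiv.swap_apply_of_ne_of_ne (fun h => hL.1.2 (h ▸ hi)) (fun h => hL.2.1 (h ▸ hi))
    have hD := Dij_GG (p := p) (a := q.1) (b := q.2) (B := B) hL.1.1 (by simp [hB]) (by simp [hB]) (sh u L) j x
    have e : j + (q :: L).length = j + 1 + L.length := by simp; ring
    rw [e, DL_cons]
    simp only [List.length_cons, Dij] at hD ⊢
    have h1 := ih' x
    have h2 := ih' (permPt (Equiv.swap q.1 q.2) x)
    have h3 := congrFun hs x
    simp only [Up] at h3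
    rw [h3] at h2
    rw [sPsi_cons]
    have : sh u (q :: L) = fun T => sh u L (insert q.1 T) - sh u L (insert q.2 T) := by
      funext T; simp only [sh]; congr!
    rw [this]
    linear_combination h1 - h2 + 2 * sPsi L x * hD

lemma GG_mem (u : Finset (Fin n) → ℤ) (l : ℕ) : (GG univ u l : SlicePoint n p → ℝ) ∈ degLE n p l := by
  have : (GG univ u l : SlicePoint n p → ℝ) = ∑ T ∈ powersetCard l univ, (u T : ℝ) • andT T := by
    funext x; simp [GG]
  rw [this]
  refine Submodule.sum_mem _ fun T hT => Submodule.smul_mem _ _ (andT_mem_degLE ?_)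
  exact (mem_powersetCard.1 hT).2.le

lemma GG_int (u : Finset (Fin n) → ℤ) (l : ℕ) (x : SlicePoint n p) : ∃ z : ℤ, GG univ u l x = z := by
  refine ⟨∑ T ∈ powersetCard l univ, u T * (if ∀ i ∈ T, x.1 i = true then 1 else 0), ?_⟩
  push_cast
  refine Finset.sum_congr rfl fun T _ => ?_
  rw [andT_eq]

end Gsec

section Jsec
variable {n : ℕ} {p : ℝ}

lemma sPsi_cases (L : List (Fin n × Fin n)) (x : SlicePoint n p) :
    (sPsi L x ^ 2 = 1 ∧ ∀ q ∈ L, x.1 q.1 ≠ x.1 q.2) ∨ (sPsi L x = 0 ∧ ∃ q ∈ L, x.1 q.1 = x.1 q.2) := by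
  induction L with
  | nil => left; simp
  | cons q L ih =>
    rw [sPsi_cons]
    by_cases h : x.1 q.1 = x.1 q.2
    · right
      refine ⟨?_, q, by simp, h⟩
      simp [coordR, h]
    rcases ih with ⟨h1, h2⟩ | ⟨h1, r, hr, h2⟩
    · left
      constructor
      · rw [mul_pow, h1]
        unfold coordR
        cases h3 : x.1 q.1 <;> cases h4 : x.1 q.2 <;> simp_all
      · intro r hr
        rcases List.mem_cons.1 hr with rfl | hr
        · exact h
        · exact h2 r hr
    · right
      exact ⟨by rw [h1, mul_zero], r, by simp [hr], h2⟩

lemma ent_count {L : List (Fin n × Fin n)} (hL : (ent L).Nodup) (y : Fin n → Bool)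
    (h : ∀ q ∈ L, y q.1 ≠ y q.2) : ((ent L).filter (fun i => y i)).length = L.length := by
  induction L with
  | nil => simp
  | cons q L ih =>
    simp only [ent_cons, List.nodup_cons] at hL
    have h1 := ih hL.2.2 fun r hr => h r (by simp [hr])
    have h2 := h q (by simp)
    rw [ent_cons, List.filter_cons, List.filter_cons]
    cases h3 : y q.1 <;> cases h4 : y q.2 <;> simp_all

lemma swap_eq_pt {i j : Fin n} {x : SlicePoint n p} (h : x.1 i = x.1 j) :
    permPt (Equiv.swap i j) x = x := by
  apply slice_ext
  intro a
  rw [permPt_val, Equiv.symm_swap]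
  rcases eq_or_ne a i with rfl | h1
  · simp [h]
  rcases eq_or_ne a j with rfl | h2
  · simp [h]
  rw [Equiv.swap_apply_of_ne_of_ne h1 h2]

lemma inv_struct {L : List (Fin n × Fin n)} (hL : (ent L).Nodup) (F : SlicePoint n p → ℝ)
    (h1 : ∀ q ∈ L, Up (Equiv.swap q.1 q.2) F = - F)
    (h2 : ∀ i j, i ∉ ent L → j ∉ ent L → Up (Equiv.swap i j) F = F) :
    ∃ t : ℝ, F = t • sPsi L := by
  have hz : ∀ x, sPsi L x = 0 → F x = 0 := by
    intro x hx
    rcases sPsi_cases L x with ⟨h3, _⟩ | ⟨_, q, hq, h3⟩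
    · rw [hx] at h3; norm_num at h3
    have := congrFun (h1 q hq) x
    simp only [Up, swap_eq_pt h3, Pi.neg_apply] at this
    linarith
  by_cases hE : ∃ x0 : SlicePoint n p, sPsi L x0 ≠ 0
  swap
  · push Not at hE
    exact ⟨0, by funext x; simp [hz x (hE x)]⟩
  obtain ⟨x0, hx0⟩ := hE
  let κ : Fin n → Finset (Fin n × Fin n) := fun i => L.toFinset.filter fun q => q.1 = i ∨ q.2 = i
  have hκ : ∀ q ∈ L, ∀ i, (q.1 = i ∨ q.2 = i) → κ i = {q} := by
    intro q hq i hi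
    ext r
    simp only [κ, mem_filter, List.mem_toFinset, mem_singleton]
    constructor
    · rintro ⟨hr, hr'⟩
      exact ent_inj hL hr hq hr' hi
    · rintro rfl; exact ⟨hq, hi⟩
  have hκ0 : ∀ i, κ i = ∅ ↔ i ∉ ent L := by
    intro i
    constructor
    · intro h hi
      simp only [ent, List.mem_flatMap] at hi
      obtain ⟨q, hq, hi⟩ := hi
      have : κ i = {q} := hκ q hq i (by simp at hi; tauto)
      rw [this] at h; simp at h
    · intro hi
      rw [Finset.eq_empty_iff_forall_notMem]
      intro q hq
      simp only [κ, mem_filter, List.mem_toFinset] at hq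
      have := mem_ent hq.1
      rcases hq.2 with rfl | rfl <;> tauto
  have hκm : ∀ i q, q ∈ κ i → q ∈ L ∧ (q.1 = i ∨ q.2 = i) := by
    intro i q hq
    simpa only [κ, mem_filter, List.mem_toFinset] using hq
  have hF : ∀ i j, κ i = κ j → ∀ x, (fun x => F x * sPsi L x) (permPt (Equiv.swap i j) x) =
      (fun x => F x * sPsi L x) x := by
    intro i j hij x
    have key : ∀ q ∈ L, F (permPt (Equiv.swap q.1 q.2) x) * sPsi L (permPt (Equiv.swap q.1 q.2) x) =
        F x * sPsi L x := by
      intro q hq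
      have e1 := congrFun (h1 q hq) x
      have e2 := congrFun (sPsi_swap (p := p) hL hq) x
      simp only [Up, Pi.neg_apply] at e1 e2
      rw [e1, e2]; ring
    change F _ * sPsi L _ = F x * sPsi L x
    by_cases hi : i ∈ ent L
    · have hne : κ i ≠ ∅ := fun h => (hκ0 i).1 h hi
      obtain ⟨q, hq⟩ := Finset.nonempty_iff_ne_empty.2 hne
      obtain ⟨hqL, hi'⟩ := hκm i q hq
      obtain ⟨_, hj'⟩ := hκm j q (hij ▸ hq)
      have := key q hqL
      rcases hi' with rfl | rfl <;> rcases hj' with rfl | rfl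
      · rw [swap_eq_pt rfl]
      · exact this
      · rw [Equiv.swap_comm]; exact this
      · rw [swap_eq_pt rfl]
    · have hj : j ∉ ent L := (hκ0 j).1 (hij ▸ (hκ0 i).2 hi)
      have e1 := congrFun (h2 i j hi hj) x
      have e2 := congrFun (sPsi_fix (p := p) (σ := Equiv.swap i j) (L := L) (by
        intro a ha
        rw [Equiv.symm_swap]
        exact Equiv.swap_apply_of_ne_of_ne (fun h => hi (h ▸ ha)) (fun h => hj (h ▸ ha)))) x
      simp only [Up] at e1 e2
      rw [e1, e2]
  have hc : ∀ x : SlicePoint n p, (∀ q ∈ L, x.1 q.1 ≠ x.1 q.2) → ∀ c,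
      (univ.filter fun i => κ i = c ∧ x.1 i = true).card =
        if c = ∅ then (univ.filter fun i => x0.1 i = true).card - L.length else
          if ∃ i, κ i = c then 1 else 0 := by
    intro x hx c
    split_ifs with hc0 hc1
    · subst hc0
      have e1 : (univ.filter fun i => x0.1 i = true).card = (univ.filter fun i => x.1 i = true).card := by
        have := x0.2.trans x.2.symm
        exact_mod_cast this
      have e2 : (univ.filter fun i => x.1 i = true ∧ i ∈ ent L).card = L.length := by
        rw [← ent_count hL x.1 hx, ← List.toFinset_card_of_nodup (hL.filter _)]
        congr 1
        ext i
        simp; tauto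
      have e3 := Finset.card_filter_add_card_filter_not (s := univ.filter fun i => x.1 i = true) (fun i => i ∈ ent L)
      rw [Finset.filter_filter, Finset.filter_filter, e2] at e3
      rw [e1, ← e3, Nat.add_sub_cancel_left]
      congr 1
      ext i
      simp only [mem_filter, mem_univ, true_and, hκ0]; tauto
    · obtain ⟨i0, rfl⟩ := hc1
      obtain ⟨q, hq⟩ := Finset.nonempty_iff_ne_empty.2 hc0
      obtain ⟨hqL, hi'⟩ := hκm i0 q hq
      have e0 : κ i0 = {q} := hκ q hqL i0 hi'
      rw [e0]
      have hx' := hx q hqL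
      have e : ∀ i, κ i = {q} ↔ i = q.1 ∨ i = q.2 := by
        intro i
        constructor
        · intro h
          have := (hκm i q (by rw [h]; simp)).2
          tauto
        · intro h; exact hκ q hqL i (by tauto)
      rw [Finset.card_eq_one]
      cases h3 : x.1 q.1
      · have h4 : x.1 q.2 = true := by cases h4 : x.1 q.2 <;> simp_all
        refine ⟨q.2, ?_⟩
        ext i
        simp only [mem_filter, mem_univ, true_and, e, mem_singleton]
        constructor
        · rintro ⟨rfl | rfl, h⟩
          · simp_all
          · rfl
        · rintro rfl; exact ⟨Or.inr rfl, h4⟩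
      · refine ⟨q.1, ?_⟩
        ext i
        simp only [mem_filter, mem_univ, true_and, e, mem_singleton]
        constructor
        · rintro ⟨rfl | rfl, h⟩
          · rfl
          · simp_all
        · rintro rfl; exact ⟨Or.inl rfl, h3⟩
    · rw [Finset.card_eq_zero, Finset.filter_eq_empty_iff]
      intro i _ h
      exact hc1 ⟨i, h.1⟩
  have hx0' : ∀ q ∈ L, x0.1 q.1 ≠ x0.1 q.2 := by
    rcases sPsi_cases L x0 with ⟨_, h⟩ | ⟨h, _⟩
    · exact h
    · exact absurd h hx0
  refine ⟨F x0 * sPsi L x0, ?_⟩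
  funext x
  rcases sPsi_cases L x with ⟨h3, h4⟩ | ⟨h3, _⟩
  · have := color' κ (fun x => F x * sPsi L x) hF x x0 (fun c => by
      have := (hc x h4 c).trans (hc x0 hx0' c).symm
      convert this)
    simp only [Pi.smul_apply, smul_eq_mul]
    rw [← this]
    calc F x = F x * sPsi L x ^ 2 := by rw [h3, mul_one]
      _ = _ := by ring
  · rw [hz x h3]; simp [h3]

noncomputable def avg (L : List (Fin n × Fin n)) (f : SlicePoint n p → ℝ) : SlicePoint n p → ℝ :=
  (1 / (Fintype.card (Equiv.Perm {i // i ∉ ent L}) : ℝ)) •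
    ∑ τ : Equiv.Perm {i // i ∉ ent L}, Up (Equiv.Perm.ofSubtype τ) f

lemma UpL_apply (π : Equiv.Perm (Fin n)) (f : SlicePoint n p → ℝ) : UpL π f = Up π f := rfl

lemma ofS_fix {L : List (Fin n × Fin n)} (τ : Equiv.Perm {i // i ∉ ent L}) {i : Fin n} (hi : i ∈ ent L) :
    Equiv.Perm.ofSubtype τ i = i := Equiv.Perm.ofSubtype_apply_of_not_mem τ (by simpa using hi)

lemma ofS_fix' {L : List (Fin n × Fin n)} (τ : Equiv.Perm {i // i ∉ ent L}) {i : Fin n} (hi : i ∈ ent L) :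
    (Equiv.Perm.ofSubtype τ).symm i = i := by
  rw [Equiv.symm_apply_eq, ofS_fix τ hi]

lemma avg_anti {L : List (Fin n × Fin n)} {f : SlicePoint n p → ℝ} {q : Fin n × Fin n} (hq : q ∈ L)
    (h : Up (Equiv.swap q.1 q.2) f = - f) : Up (Equiv.swap q.1 q.2) (avg L f) = - avg L f := by
  unfold avg
  rw [Up_smul, ← smul_neg]
  congr 1
  rw [← UpL_apply, map_sum, ← Finset.sum_neg_distrib]
  refine Finset.sum_congr rfl fun τ _ => ?_
  have hc : Equiv.Perm.ofSubtype τ * Equiv.swap q.1 q.2 = Equiv.swap q.1 q.2 * Equiv.Perm.ofSubtype τ := by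
    rw [Equiv.mul_swap_eq_swap_mul, ofS_fix τ (mem_ent hq).1, ofS_fix τ (mem_ent hq).2]
  rw [UpL_apply, Up_Up, hc, ← Up_Up, h]
  rfl

lemma avg_inv {L : List (Fin n × Fin n)} (f : SlicePoint n p → ℝ) {i j : Fin n} (hi : i ∉ ent L)
    (hj : j ∉ ent L) : Up (Equiv.swap i j) (avg L f) = avg L f := by
  unfold avg
  rw [Up_smul]
  congr 1
  rw [← UpL_apply, map_sum]
  have e : Equiv.swap i j = Equiv.Perm.ofSubtype (Equiv.swap (⟨i, hi⟩ : {i // i ∉ ent L}) ⟨j, hj⟩) := by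
    rw [Equiv.Perm.ofSubtype_swap_eq]
  rw [e]
  refine Fintype.sum_equiv (Equiv.mulRight (Equiv.swap (⟨i, hi⟩ : {i // i ∉ ent L}) ⟨j, hj⟩)) _ _ fun τ => ?_
  rw [UpL_apply, Up_Up, ← map_mul]
  rfl

lemma avg_norm {L : List (Fin n × Fin n)} (f : SlicePoint n p → ℝ) (C : ℝ)
    (h : ∀ τ : Equiv.Perm {i // i ∉ ent L}, sNormSq (f - Up (Equiv.Perm.ofSubtype τ) f) ≤ C) :
    sNormSq (f - avg L f) ≤ C := by
  set N := (Fintype.card (Equiv.Perm {i // i ∉ ent L}) : ℝ) with hN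
  have hN0 : 0 < N := by
    have := Fintype.card_pos (α := Equiv.Perm {i // i ∉ ent L})
    rw [hN]; exact_mod_cast this
  have e : f - avg L f = (1 / N) • ∑ τ : Equiv.Perm {i // i ∉ ent L}, (f - Up (Equiv.Perm.ofSubtype τ) f) := by
    rw [Finset.sum_sub_distrib, smul_sub, avg]
    congr 1
    rw [Finset.sum_const, Finset.card_univ, ← Nat.cast_smul_eq_nsmul ℝ, smul_smul, ← hN]
    rw [one_div_mul_cancel hN0.ne', one_smul]
  rw [e, sNormSq_smul]
  set G := fun τ : Equiv.Perm {i // i ∉ ent L} => f - Up (Equiv.Perm.ofSubtype τ) f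
  have h1 : sNormSq (∑ τ, G τ) ≤ N * ∑ τ, sNormSq (G τ) := by
    have : N * ∑ τ, sNormSq (G τ) = sExp (fun x => N * ∑ τ, G τ x * G τ x) := by
      rw [sExp_smul]
      congr 1
      simp only [sNormSq, sInner, sExp]
      rw [← Finset.sum_div, Finset.sum_comm]
    rw [this]
    refine sExp_mono fun x => ?_
    have := sq_sum_le_card_mul_sum_sq (s := (univ : Finset (Equiv.Perm {i // i ∉ ent L}))) (f := fun τ => G τ x)
    simp only [Finset.sum_apply]
    rw [Finset.card_univ, ← hN, sq] at this
    refine this.trans (le_of_eq ?_)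
    congr 1
    refine Finset.sum_congr rfl fun τ _ => sq _
  have h2 : ∑ τ, sNormSq (G τ) ≤ N * C := by
    refine (Finset.sum_le_sum fun τ _ => h τ).trans (le_of_eq ?_)
    rw [Finset.sum_const, Finset.card_univ, nsmul_eq_mul, ← hN]
  calc (1 / N) ^ 2 * sNormSq (∑ τ, G τ) ≤ (1 / N) ^ 2 * (N * (N * C)) :=
        mul_le_mul_of_nonneg_left (h1.trans (mul_le_mul_of_nonneg_left h2 hN0.le)) (by positivity)
    _ = C := by field_simp

lemma avg_inner {L : List (Fin n × Fin n)} (f : SlicePoint n p → ℝ) :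
    sInner (avg L f) (sPsi L) = sInner f (sPsi L) := by
  have hN0 : 0 < (Fintype.card (Equiv.Perm {i // i ∉ ent L}) : ℝ) := by
    have := Fintype.card_pos (α := Equiv.Perm {i // i ∉ ent L})
    exact_mod_cast this
  have hs : ∀ s : Finset (Equiv.Perm {i // i ∉ ent L}),
      sInner (∑ τ ∈ s, Up (Equiv.Perm.ofSubtype τ) f) (sPsi L) = s.card * sInner f (sPsi L) := by
    intro s
    induction s using Finset.induction_on with
    | empty => simp
    | insert τ s hτ ih =>
      rw [Finset.sum_insert hτ, sInner_add_left, ih, Finset.card_insert_of_notMem hτ, sInner_Up_left,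
        sPsi_fix]
      · push_cast; ring
      · intro i hi
        exact ofS_fix τ hi
  rw [avg, sInner_smul_left, hs, Finset.card_univ]
  field_simp

end Jsec

section Ksec
variable {n : ℕ} {p : ℝ}

lemma eps_small {k : ℕ} (hp0 : 0 < p) (hp : p ≤ 1 / 2) (hk : 1 ≤ k) {ε : ℝ}
    (hε : ε ≤ p ^ (60 * k)) : 32 * ε ≤ p ^ (44 * k) := by
  have h1 : p ^ (60 * k) = p ^ (44 * k) * p ^ (16 * k) := by rw [← pow_add]; congr 1; ring
  have h2 : p ^ (16 * k) ≤ p ^ 16 := pow_le_pow_of_le_one hp0.le (by linarith) (by omega)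
  have h3 : p ^ 16 ≤ (1 / 2) ^ 16 := pow_le_pow_left₀ hp0.le hp 16
  have h4 : 0 < p ^ (44 * k) := by positivity
  have h5 : p ^ (16 * k) ≤ 1 / 32 := by norm_num at h3; linarith
  have h6 : p ^ (44 * k) * p ^ (16 * k) ≤ p ^ (44 * k) * (1 / 32) := mul_le_mul_of_nonneg_left h5 h4.le
  linarith

lemma perm_close {m k l : ℕ} (hm : (m : ℝ) = p * n) (hp0 : 0 < p) (hp : p ≤ 1 / 2) (hk : 1 ≤ k)
    (hl : l ≤ k) (L : List (Fin n × Fin n)) (f f1 : SlicePoint n p → ℝ)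
    (hint : ∀ x, ∃ z : ℤ, 2 ^ l * f x = z)
    (hf1 : f1 ∈ degLE n p k) (horth : ∀ g ∈ degLE n p k, sInner (f - f1) g = 0) (ε : ℝ)
    (h2 : sNormSq (f - f1) ≤ ε) (hs : 32 * ε ≤ p ^ (44 * k))
    (hsw : ∀ i j, i ∉ ent L → j ∉ ent L → i ≠ j → sNormSq (f - Up (Equiv.swap i j) f) ≤ 8 * ε)
    (τ : Equiv.Perm {i // i ∉ ent L}) :
    sNormSq (f - Up (Equiv.Perm.ofSubtype τ) f) ≤ 8 * ε := by
  have e0 : 0 ≤ ε := (sNormSq_nonneg _).trans h2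
  induction τ using Equiv.Perm.swap_induction_on with
  | one => simp [sNormSq_zero]; exact e0
  | swap_mul τ i j hij ih =>
    set σ := Equiv.Perm.ofSubtype (Equiv.swap i j * τ) with hσ
    have hb : sNormSq (f - Up σ f) ≤ 32 * ε := by
      have e : f - Up σ f = (f - Up (Equiv.Perm.ofSubtype τ) f) +
          Up (Equiv.Perm.ofSubtype τ) (f - Up (Equiv.swap i.1 j.1) f) := by
        rw [Up_sub, Up_Up, hσ, map_mul, Equiv.Perm.ofSubtype_swap_eq]
        abel
      rw [e]
      refine (sNormSq_add_le _ _).trans ?_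
      rw [sNormSq_Up]
      have := hsw i.1 j.1 i.2 j.2 (fun h => hij (Subtype.ext h))
      linarith
    have := gap hm hp0 hp hk hl (f - Up σ f) (f1 - Up σ f1) (by
        intro x
        obtain ⟨a, ha⟩ := hint x
        obtain ⟨b, hb⟩ := hint (permPt σ x)
        refine ⟨a - b, ?_⟩
        push_cast
        rw [← ha, ← hb]
        simp only [Pi.sub_apply, Up]; ring) (Submodule.sub_mem _ hf1 (degLE_Up _ hf1)) (by
        intro g hg
        have e : (f - Up σ f) - (f1 - Up σ f1) = (f - f1) - Up σ (f - f1) := by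
          rw [Up_sub]; abel
        rw [e, sInner_sub_left, sInner_Up_left, horth g hg, horth _ (degLE_Up _ hg), sub_zero])
      (4 * ε) (by
        have e : (f - Up σ f) - (f1 - Up σ f1) = (f - f1) - Up σ (f - f1) := by
          rw [Up_sub]; abel
        rw [e]
        refine (sNormSq_sub_le _ _).trans ?_
        rw [sNormSq_Up]; linarith) (hb.trans hs)
    linarith

lemma z_lower {m k : ℕ} (hm : (m : ℝ) = p * n) (hp0 : 0 < p) (hp : p ≤ 1 / 2) (hk : 1 ≤ k)
    (L : List (Fin n × Fin n)) (hL : (ent L).Nodup) (hl : L.length ≤ k)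
    (hz : sNormSq (sPsi L : SlicePoint n p → ℝ) ≠ 0) :
    p ^ (14 * k) ≤ sNormSq (sPsi L : SlicePoint n p → ℝ) := by
  rcases Nat.lt_or_ge m (2 * k) with hmk | hmk
  · have hx : ∃ x : SlicePoint n p, sPsi L x ≠ 0 := by
      by_contra hcon
      push Not at hcon
      have : (sPsi L : SlicePoint n p → ℝ) = 0 := funext hcon
      rw [this, sNormSq_zero] at hz
      exact hz rfl
    obtain ⟨x, hx⟩ := hx
    have hx1 : sPsi L x ^ 2 = 1 := by
      rcases sPsi_cases L x with h | h
      · exact h.1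
      · exact absurd h.1 hx
    have : Nonempty (SlicePoint n p) := ⟨x⟩
    have hN : (0 : ℝ) < Fintype.card (SlicePoint n p) := by
      have := Fintype.card_pos (α := SlicePoint n p)
      exact_mod_cast this
    have hle : sPsi L x ^ 2 ≤ sNormSq (sPsi L : SlicePoint n p → ℝ) * Fintype.card (SlicePoint n p) := by
      simp only [sNormSq, sInner, sExp]
      rw [div_mul_cancel₀ _ hN.ne']
      have := Finset.single_le_sum (f := fun x : SlicePoint n p => sPsi L x * sPsi L x)
        (fun y _ => mul_self_nonneg _) (Finset.mem_univ x)
      rw [sq]; exact this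
    have hb := card_bound hm hp0 hp hmk
    have h1 : p ^ (6 * k) * Fintype.card (SlicePoint n p) ≤
        sNormSq (sPsi L : SlicePoint n p → ℝ) * Fintype.card (SlicePoint n p) := by
      rw [hx1] at hle; exact hb.trans hle
    have h2 := le_of_mul_le_mul_right h1 hN
    exact (pow_le_pow_of_le_one hp0.le (by linarith) (by omega)).trans h2
  · refine le_trans ?_ (lam_lower hm hp0 hp L hL (by omega) (by omega)).2
    exact pow_le_pow_of_le_one hp0.le (by linarith) (by omega)

noncomputable def tc (l : ℕ) (h : SlicePoint n p → ℝ) (L : List (Fin n × Fin n)) : ℝ :=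
  2 ^ l * sInner h (sPsi L) / sNormSq (sPsi L : SlicePoint n p → ℝ)

lemma near {m k l : ℕ} (hm : (m : ℝ) = p * n) (hp0 : 0 < p) (hp : p ≤ 1 / 2) (hk : 1 ≤ k)
    (hl : l ≤ k) (h h1 : SlicePoint n p → ℝ) (hint : ∀ x, ∃ z : ℤ, h x = z)
    (hf1 : h1 ∈ degLE n p k) (horth : ∀ g ∈ degLE n p k, sInner (h - h1) g = 0) (ε : ℝ)
    (h2 : sNormSq (h - h1) ≤ ε) (hε : ε ≤ p ^ (60 * k))
    (H : ∀ M : List (Fin n × Fin n), (ent M).Nodup → M.length = l + 1 → sNormSq (DL M h) ≤ 2 * ε)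
    (L : List (Fin n × Fin n)) (hL : (ent L).Nodup) (hLl : L.length = l) :
    |tc l h L - round (tc l h L)| < 1 / 4 ∧
      sNormSq (DL L h - ((round (tc l h L) : ℝ) / 2 ^ l) • sPsi L) ≤ 32 * ε := by
  have hs := eps_small hp0 hp hk hε
  have e0 : 0 ≤ ε := (sNormSq_nonneg _).trans h2
  set f := DL L h with hf
  have hfint : ∀ x, ∃ z : ℤ, 2 ^ l * f x = z := by rw [← hLl]; exact DL_int L h hint
  have hcl : sNormSq (f - avg L f) ≤ 8 * ε := by
    apply avg_norm
    intro τ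
    refine perm_close hm hp0 hp hk hl L f (DL L h1) hfint (DL_mem L hf1) ?_ ε ?_ hs ?_ τ
    · rw [hf, ← DL_sub]; exact DL_orth L horth
    · rw [hf, ← DL_sub]; exact (DL_norm _ _).trans h2
    · intro i j hi hj hij
      have := H ((i, j) :: L) (by simp [hi, hj, hij, hL]) (by simp [hLl])
      rw [DL_cons, Dij_eq, sNormSq_smul] at this
      linarith
  obtain ⟨t, ht⟩ := inv_struct hL (avg L f) (fun q hq => avg_anti hq (DL_anti hL h hq))
    (fun i j hi hj => avg_inv f hi hj)
  set Ψ : SlicePoint n p → ℝ := sPsi L with hΨ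
  set z := sNormSq Ψ with hz
  have hz0 : 0 ≤ z := sNormSq_nonneg _
  have htz : t * z = sInner h Ψ := by
    rw [hz, sNormSq, ← sInner_smul_left, ← ht, hΨ, avg_inner, hf]
    exact DL_inner L h _ fun q hq => sPsi_swap hL hq
  rw [ht] at hcl
  by_cases hzz : z = 0
  · have : tc l h L = 0 := by unfold tc; rw [← hΨ, ← hz, hzz]; simp
    rw [this]
    refine ⟨by simp, ?_⟩
    have e : f - ((round (0 : ℝ) : ℝ) / 2 ^ l) • Ψ = (f - t • Ψ) + t • Ψ := by simp
    rw [e]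
    refine (sNormSq_add_le _ _).trans ?_
    rw [sNormSq_smul, ← hz, hzz]; linarith
  have hT : tc l h L = 2 ^ l * t := by
    unfold tc; rw [← hΨ, ← hz, ← htz]; field_simp
  rw [hT]
  set c := round (2 ^ l * t) with hc
  have key : (2 ^ l * t - c) ^ 2 * z ≤ 4 ^ l * sNormSq (f - t • Ψ) := by
    rw [hz, sNormSq, sNormSq, sInner, sInner, ← sExp_smul, ← sExp_smul]
    refine sExp_mono fun x => ?_
    rcases sPsi_cases L x with ⟨h3, _⟩ | ⟨h3, _⟩
    · obtain ⟨a, ha⟩ := hfint x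
      have hpm : ∃ b : ℤ, (b : ℝ) = Ψ x * (2 ^ l * f x) := by
        rw [ha]
        rcases (pow_eq_one_iff_cases.1 h3 |>.resolve_left (by norm_num) |>.imp id And.left) with h4 | h4
        · exact ⟨a, by rw [hΨ, h4]; simp⟩
        · exact ⟨-a, by rw [hΨ, h4]; simp⟩
      obtain ⟨b, hb⟩ := hpm
      have hr := round_le (2 ^ l * t) b
      have hsq := sq_le_sq.2 hr
      have h3' : Ψ x ^ 2 = 1 := h3
      have e1 : (2 ^ l * t - c) ^ 2 * (Ψ x * Ψ x) = (2 ^ l * t - c) ^ 2 := by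
        rw [← sq, h3', mul_one]
      have e4 : (4 : ℝ) ^ l = (2 ^ l) ^ 2 := by rw [← pow_mul, mul_comm l 2, pow_mul]; norm_num
      have e2 : 4 ^ l * ((f - t • Ψ) x * (f - t • Ψ) x) = (2 ^ l * t - b) ^ 2 := by
        simp only [Pi.sub_apply, Pi.smul_apply, smul_eq_mul]
        rw [hb, e4]
        linear_combination (-(2 ^ l) ^ 2 * (f x) ^ 2 + (2 ^ l) ^ 2 * t ^ 2) * h3'
      rw [e1, e2]; exact hsq
    · have : Ψ x = 0 := h3
      rw [this]
      have : 0 ≤ 4 ^ l * ((f - t • (Ψ : SlicePoint n p → ℝ)) x * (f - t • Ψ) x) :=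
        mul_nonneg (by positivity) (mul_self_nonneg _)
      simpa using this
  have key2 : (2 ^ l * t - c) ^ 2 * z ≤ 4 ^ l * (8 * ε) :=
    key.trans (mul_le_mul_of_nonneg_left hcl (by positivity))
  constructor
  · have hzl := z_lower hm hp0 hp hk L hL (by omega) hzz
    rw [← hΨ, ← hz] at hzl
    have h4l : (4 : ℝ) ^ l ≤ 4 ^ k := pow_le_pow_right₀ (by norm_num) hl
    have hp14 : 0 < p ^ (14 * k) := by positivity
    have b1 : (2 ^ l * t - c) ^ 2 * p ^ (14 * k) ≤ (8 * (4 ^ k * p ^ (46 * k))) * p ^ (14 * k) := by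
      calc (2 ^ l * t - c) ^ 2 * p ^ (14 * k) ≤ (2 ^ l * t - c) ^ 2 * z :=
            mul_le_mul_of_nonneg_left hzl (sq_nonneg _)
        _ ≤ 4 ^ l * (8 * ε) := key2
        _ ≤ 4 ^ k * (8 * p ^ (60 * k)) := mul_le_mul h4l (by linarith) (by positivity) (by positivity)
        _ = _ := by
          have : p ^ (60 * k) = p ^ (46 * k) * p ^ (14 * k) := by rw [← pow_add]; congr 1; ring
          rw [this]; ring
    have b2 := le_of_mul_le_mul_right b1 hp14
    have b3 : (4 : ℝ) ^ k * p ^ (46 * k) ≤ 1 / 256 := by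
      rw [pow_mul, ← mul_pow]
      have h3 : p ^ 46 ≤ (1 / 2) ^ 46 := pow_le_pow_left₀ hp0.le hp 46
      have h4 : 4 * p ^ 46 ≤ 1 / 256 := by norm_num at h3 ⊢; linarith
      have h5 : (4 * p ^ 46) ^ k ≤ (4 * p ^ 46) ^ 1 :=
        pow_le_pow_of_le_one (by positivity) (by linarith) hk
      linarith
    have b4 : (2 ^ l * t - c) ^ 2 < (1 / 4) ^ 2 := by norm_num at b3 ⊢; linarith
    exact abs_lt_of_sq_lt_sq b4 (by norm_num)
  · have e : f - ((c : ℝ) / 2 ^ l) • Ψ = (f - t • Ψ) + ((2 ^ l * t - c) / 2 ^ l) • Ψ := by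
      have : (2 ^ l * t - c) / 2 ^ l = t - (c : ℝ) / 2 ^ l := by field_simp
      rw [this, sub_smul]; abel
    rw [e]
    refine (sNormSq_add_le _ _).trans ?_
    rw [sNormSq_smul, ← hz, div_pow]
    have e4 : (4 : ℝ) ^ l = (2 ^ l) ^ 2 := by rw [← pow_mul, mul_comm l 2, pow_mul]; norm_num
    have : (2 ^ l * t - c) ^ 2 / (2 ^ l) ^ 2 * z ≤ 8 * ε := by
      rw [← e4, div_mul_eq_mul_div, div_le_iff₀ (by positivity)]; linarith
    linarith

lemma psi_norm_map (π : Equiv.Perm (Fin n)) (L : List (Fin n × Fin n)) :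
    sNormSq (sPsi (L.map fun q => (π q.1, π q.2)) : SlicePoint n p → ℝ) = sNormSq (sPsi L : SlicePoint n p → ℝ) := by
  have := sPsi_Up (p := p) π⁻¹ L
  have e : (L.map fun q => (π q.1, π q.2)) = L.map fun q => (π⁻¹.symm q.1, π⁻¹.symm q.2) := rfl
  rw [e, ← this, sNormSq_Up]

lemma tail_fix {a b : Fin n} {L : List (Fin n × Fin n)} (ha : a ∉ ent L) (hb : b ∉ ent L) :
    ∀ i ∈ ent L, Equiv.swap a b i = i := fun _ hi =>
  Equiv.swap_apply_of_ne_of_ne (fun h => ha (h ▸ hi)) (fun h => hb (h ▸ hi))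

lemma tc_rel3 (l : ℕ) (h : SlicePoint n p → ℝ) {a b e : Fin n} {L : List (Fin n × Fin n)}
    (hn : (a :: b :: e :: ent L).Nodup) :
    tc l h ((a, e) :: L) = tc l h ((a, b) :: L) + tc l h ((b, e) :: L) := by
  simp only [List.nodup_cons, List.mem_cons, not_or] at hn
  obtain ⟨⟨ab, ae, aL⟩, ⟨be, bL⟩, eL, _⟩ := hn
  have n1 : sNormSq (sPsi ((a, e) :: L) : SlicePoint n p → ℝ) = sNormSq (sPsi ((a, b) :: L) : SlicePoint n p → ℝ) := by
    have := psi_norm_map (p := p) (Equiv.swap b e) ((a, b) :: L)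
    rw [List.map_cons, map_fix (tail_fix bL eL)] at this
    simpa [Equiv.swap_apply_of_ne_of_ne ab ae] using this
  have n2 : sNormSq (sPsi ((b, e) :: L) : SlicePoint n p → ℝ) = sNormSq (sPsi ((a, e) :: L) : SlicePoint n p → ℝ) := by
    have := psi_norm_map (p := p) (Equiv.swap a b) ((a, e) :: L)
    rw [List.map_cons, map_fix (tail_fix aL bL)] at this
    simpa [Equiv.swap_apply_of_ne_of_ne (Ne.symm ae) (Ne.symm be)] using this
  have hs : (sPsi ((a, e) :: L) : SlicePoint n p → ℝ) = sPsi ((a, b) :: L) + sPsi ((b, e) :: L) := by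
    funext x; simp only [Pi.add_apply, sPsi_cons]; ring
  unfold tc
  rw [n2, n1, hs, sInner_add_right]; ring

lemma tc_anti (l : ℕ) (h : SlicePoint n p → ℝ) (a b : Fin n) (L : List (Fin n × Fin n)) :
    tc l h ((b, a) :: L) = - tc l h ((a, b) :: L) := by
  have hs : (sPsi ((b, a) :: L) : SlicePoint n p → ℝ) = - sPsi ((a, b) :: L) := by
    funext x; simp only [Pi.neg_apply, sPsi_cons]; ring
  unfold tc
  rw [hs, sInner_neg_right, sNormSq_neg]; ring

lemma tc_pl (l : ℕ) (h : SlicePoint n p → ℝ) {a b e f : Fin n} {L : List (Fin n × Fin n)}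
    (hn : (a :: b :: e :: f :: ent L).Nodup) :
    tc l h ((a, b) :: (e, f) :: L) + tc l h ((b, e) :: (a, f) :: L) + tc l h ((e, a) :: (b, f) :: L) = 0 := by
  simp only [List.nodup_cons, List.mem_cons, not_or] at hn
  obtain ⟨⟨ab, ae, af, aL⟩, ⟨be, bf, bL⟩, ⟨ef, eL⟩, fL, _⟩ := hn
  have hfix : ∀ i ∈ ent L, (Equiv.swap a b * Equiv.swap b e) i = i := by
    intro i hi
    rw [Equiv.Perm.mul_apply, tail_fix bL eL i hi, tail_fix aL bL i hi]
  have fa : (Equiv.swap a b * Equiv.swap b e) a = b := by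
    rw [Equiv.Perm.mul_apply, Equiv.swap_apply_of_ne_of_ne ab ae, Equiv.swap_apply_left]
  have fb : (Equiv.swap a b * Equiv.swap b e) b = e := by
    rw [Equiv.Perm.mul_apply, Equiv.swap_apply_left,
      Equiv.swap_apply_of_ne_of_ne (Ne.symm ae) (Ne.symm be)]
  have fe : (Equiv.swap a b * Equiv.swap b e) e = a := by
    rw [Equiv.Perm.mul_apply, Equiv.swap_apply_right, Equiv.swap_apply_right]
  have ff : (Equiv.swap a b * Equiv.swap b e) f = f := by
    rw [Equiv.Perm.mul_apply, Equiv.swap_apply_of_ne_of_ne (Ne.symm bf) (Ne.symm ef),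
      Equiv.swap_apply_of_ne_of_ne (Ne.symm af) (Ne.symm bf)]
  have n1 := psi_norm_map (p := p) (Equiv.swap a b * Equiv.swap b e) ((a, b) :: (e, f) :: L)
  have n2 := psi_norm_map (p := p) (Equiv.swap a b * Equiv.swap b e) ((b, e) :: (a, f) :: L)
  rw [List.map_cons, List.map_cons, map_fix hfix] at n1 n2
  simp only [fa, fb, fe, ff] at n1 n2
  have hs : (sPsi ((e, a) :: (b, f) :: L) : SlicePoint n p → ℝ) =
      - sPsi ((a, b) :: (e, f) :: L) - sPsi ((b, e) :: (a, f) :: L) := by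
    funext x; simp only [Pi.sub_apply, Pi.neg_apply, sPsi_cons]; ring
  unfold tc
  rw [n2, n1, hs, sInner_sub_right, sInner_neg_right]; ring

lemma int_zero {z : ℤ} (h : |(z : ℝ)| < 1) : z = 0 := by
  have : |z| < 1 := by exact_mod_cast h
  exact Int.abs_lt_one_iff.1 this

lemma tc_crel (l : ℕ) (h : SlicePoint n p → ℝ)
    (hr : ∀ L : List (Fin n × Fin n), (ent L).Nodup → L.length = l → |tc l h L - round (tc l h L)| < 1 / 4) :
    CRel univ l (fun L => round (tc l h L)) where
  perm L L' hp _ := by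
    have : tc l h L = tc l h L' := by unfold tc; rw [sPsi_perm hp]
    simp only [this]
  anti a b L hok := by
    have h1 := hr _ hok.1 hok.2.2
    have h2 := hr ((b, a) :: L) (by
      have := hok.1
      simp only [ent_cons, List.nodup_cons, List.mem_cons, not_or] at this ⊢
      tauto) (by simpa using hok.2.2)
    have e := tc_anti l h a b L
    have : round (tc l h ((b, a) :: L)) + round (tc l h ((a, b) :: L)) = 0 := by
      apply int_zero
      push_cast
      rw [abs_lt] at h1 h2 ⊢
      constructor <;> linarith
    omega
  three a b e L hn _ hl := by
    have e3 := tc_rel3 l h hn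
    simp only [List.nodup_cons, List.mem_cons, not_or] at hn
    have h1 := hr ((a, e) :: L) (by simp only [ent_cons, List.nodup_cons, List.mem_cons, not_or]; tauto) (by simpa using hl)
    have h2 := hr ((a, b) :: L) (by simp only [ent_cons, List.nodup_cons, List.mem_cons, not_or]; tauto) (by simpa using hl)
    have h3 := hr ((b, e) :: L) (by simp only [ent_cons, List.nodup_cons, List.mem_cons, not_or]; tauto) (by simpa using hl)
    have : round (tc l h ((a, e) :: L)) - round (tc l h ((a, b) :: L)) - round (tc l h ((b, e) :: L)) = 0 := by
      apply int_zero
      push_cast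
      rw [abs_lt] at h1 h2 h3 ⊢
      constructor <;> linarith
    omega
  pl a b e f L hn _ hl := by
    have e3 := tc_pl l h hn
    simp only [List.nodup_cons, List.mem_cons, not_or] at hn
    have d1 : b ≠ a := fun h => hn.1.1 h.symm
    have d2 : e ≠ a := fun h => hn.1.2.1 h.symm
    have d3 : e ≠ b := fun h => hn.2.1.1 h.symm
    have h1 := hr ((a, b) :: (e, f) :: L) (by simp only [ent_cons, List.nodup_cons, List.mem_cons, not_or]; tauto) (by simpa using hl)
    have h2 := hr ((b, e) :: (a, f) :: L) (by simp only [ent_cons, List.nodup_cons, List.mem_cons, not_or]; tauto) (by simpa using hl)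
    have h3 := hr ((e, a) :: (b, f) :: L) (by simp only [ent_cons, List.nodup_cons, List.mem_cons, not_or]; tauto) (by simpa using hl)
    apply int_zero
    push_cast
    rw [abs_lt] at h1 h2 h3 ⊢
    constructor <;> linarith

lemma main_pos {m k l : ℕ} (hm : (m : ℝ) = p * n) (hp0 : 0 < p) (hp : p ≤ 1 / 2) (hk : 1 ≤ k)
    (hl : l ≤ k) (h h1 : SlicePoint n p → ℝ) (hint : ∀ x, ∃ z : ℤ, h x = z)
    (hf1 : h1 ∈ degLE n p k) (horth : ∀ g ∈ degLE n p k, sInner (h - h1) g = 0) (ε : ℝ)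
    (h2 : sNormSq (h - h1) ≤ ε) (hε : ε ≤ p ^ (60 * k))
    (H : ∀ M : List (Fin n × Fin n), (ent M).Nodup → M.length = l + 1 → sNormSq (DL M h) ≤ 2 * ε) :
    ∃ g : SlicePoint n p → ℝ, (∀ x, ∃ m : ℤ, g x = m) ∧ g ∈ degLE n p l ∧
      ∀ L : List (Fin n × Fin n), (ent L).Nodup → L.length = l → sNormSq (DL L (h - g)) ≤ 2 * ε := by
  have hnear := near hm hp0 hp hk hl h h1 hint hf1 horth ε h2 hε H
  obtain ⟨u, hu⟩ := exists_u univ l _ (tc_crel l h fun L a b => (hnear L a b).1)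
  refine ⟨GG univ u l, GG_int u l, GG_mem u l, ?_⟩
  intro L hL hLl
  have hg : DL L (GG univ u l : SlicePoint n p → ℝ) = ((round (tc l h L) : ℝ) / 2 ^ l) • sPsi L := by
    funext x
    have := DL_GG (p := p) u L hL 0 x
    rw [GG_zero, hLl, zero_add, ← hu L ⟨hL, by simp, hLl⟩] at this
    simp only [Pi.smul_apply, smul_eq_mul]
    field_simp
    linarith
  have hgk : (GG univ u l : SlicePoint n p → ℝ) ∈ degLE n p k := degLE_mono hl (GG_mem u l)
  have e : ∀ g : SlicePoint n p → ℝ, h - g - (h1 - g) = h - h1 := fun g => by abel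
  refine gap hm hp0 hp hk hl (DL L (h - GG univ u l)) (DL L (h1 - GG univ u l)) ?_
    (DL_mem L (Submodule.sub_mem _ hf1 hgk)) ?_ ε ?_ ?_
  · rw [← hLl]
    apply DL_int
    intro x
    obtain ⟨a, ha⟩ := hint x
    obtain ⟨b, hb⟩ := GG_int (p := p) u L.length x
    exact ⟨a - b, by push_cast; rw [← ha, ← hb]; rfl⟩
  · rw [← DL_sub, e]; exact DL_orth L horth
  · rw [← DL_sub, e]; exact (DL_norm _ _).trans h2
  · rw [DL_sub, hg]
    exact (hnear L hL hLl).2.trans (eps_small hp0 hp hk hε)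

lemma main_zero (h h1 : SlicePoint n p → ℝ) (hint : ∀ x, ∃ z : ℤ, h x = z)
    (hf1 : h1 ∈ degLE n p 0) (horth : ∀ g ∈ degLE n p 0, sInner (h - h1) g = 0) (ε : ℝ)
    (h2 : sNormSq (h - h1) ≤ ε) :
    ∃ g : SlicePoint n p → ℝ, (∀ x, ∃ m : ℤ, g x = m) ∧ g ∈ degLE n p 0 ∧ sNormSq (h - g) ≤ 2 * ε := by
  have he : {g : SlicePoint n p → ℝ | ∃ T : Finset (Fin n), T.card ≤ 0 ∧ g = andT T} = {andT ∅} := by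
    ext g
    simp
  have h1' := hf1
  rw [degLE, he, Submodule.mem_span_singleton] at h1'
  obtain ⟨t, rfl⟩ := h1'
  have hone : ∀ x : SlicePoint n p, andT ∅ x = 1 := fun x => by simp [andT]
  have hmem : (andT ∅ : SlicePoint n p → ℝ) ∈ degLE n p 0 := andT_mem_degLE (by simp)
  refine ⟨(round t : ℝ) • andT ∅, fun x => ⟨round t, by simp [hone]⟩, Submodule.smul_mem _ _ hmem, ?_⟩
  have e : h - (round t : ℝ) • andT ∅ = (h - t • andT ∅) + (t - round t) • (andT ∅ : SlicePoint n p → ℝ) := by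
    rw [sub_smul]; abel
  rw [e, sNormSq_add, sInner_smul_right, horth _ hmem]
  have : sNormSq ((t - round t) • (andT ∅ : SlicePoint n p → ℝ)) ≤ sNormSq (h - t • andT ∅) := by
    refine sExp_mono fun x => ?_
    obtain ⟨z, hz⟩ := hint x
    have := sq_le_sq.2 (round_le t z)
    simp only [Pi.smul_apply, Pi.sub_apply, smul_eq_mul, hone, hz, mul_one]
    linarith [sq (t - round t), sq (t - z), sq (t - (z : ℝ)), show (z - t) * (z - t) = (t - z) ^ 2 by ring]
  linarith

end Ksec

theorem eating_derivatives :
    ∃ c₁ : ℝ, 0 < c₁ ∧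
      ∀ (n : ℕ) (p : ℝ), 0 < p → p ≤ 1 / 2 → (∃ m : ℤ, (m : ℝ) = p * n) →
        ∀ (k : ℕ) (ε : ℝ) (h : SlicePoint n p → ℝ),
          (∀ x, ∃ m : ℤ, h x = m) →
          (∃ hk, IsLowProj n p k h hk ∧ sNormSq (h - hk) ≤ ε) →
          ε ≤ p ^ (c₁ * k) →
          ∀ l : ℕ, l ≤ k →
            (∀ Q : Finset (Fin n × Fin n), IsTuple (l + 1) Q → sNormSq (DP Q h) ≤ 2 * ε) →
            ∃ g : SlicePoint n p → ℝ,
              (∀ x, ∃ m : ℤ, g x = m) ∧ g ∈ degLE n p l ∧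
              ∀ P : Finset (Fin n × Fin n), IsTuple l P →
                sNormSq (DP P (h - g)) ≤ 2 * ε := by
  refine ⟨60, by norm_num, ?_⟩
  rintro n p hp0 hp ⟨m, hm⟩ k ε h hint ⟨h1, ⟨hf1, horth⟩, h2⟩ hε l hl H
  have hm0 : 0 ≤ m := by
    have : (0 : ℝ) ≤ m := by rw [hm]; positivity
    exact_mod_cast this
  lift m to ℕ using hm0
  have hm' : (m : ℝ) = p * n := by exact_mod_cast hm
  have hε' : ε ≤ p ^ (60 * k) := by
    have e : (60 : ℝ) * k = ((60 * k : ℕ) : ℝ) := by push_cast; ring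
    rwa [e, Real.rpow_natCast] at hε
  rcases Nat.eq_zero_or_pos k with rfl | hk
  · obtain rfl : l = 0 := by omega
    obtain ⟨g, g1, g2, g3⟩ := main_zero h h1 hint hf1 horth ε h2
    refine ⟨g, g1, g2, fun P hP => ?_⟩
    have : P = ∅ := Finset.card_eq_zero.1 hP.1
    subst this
    simpa [DP] using g3
  · obtain ⟨g, g1, g2, g3⟩ := main_pos hm' hp0 hp hk hl h h1 hint hf1 horth ε h2 hε' (by
      intro M hM hMl
      obtain ⟨P, hP, e⟩ := DL_tuple hM hMl h
      rw [← e]; exact H P hP)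
    refine ⟨g, g1, g2, fun P hP => ?_⟩
    have := tuple_ent hP
    exact g3 P.toList this.1 this.2.2
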